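/- The two-component unlink U ⊂ S³ satisfies MN(U) = 2; moreover, the Milnor map u of the rational function G(z,w) = (2z−1)/z at radius 1, which is a Morse map for U with exactly two critical points (one of index 1 and one of index 2), is a minimal Morse map. -/

import Mathlib

/-!  Morse maps for knots and links in `S³` and the Morse–Novikov number:
common framework.

We work in the smooth category.  `S³` is the unit sphere of `ℝ⁴ ≅ ℂ²`.
A link is presented by disjoint smoothly embedded oriented parametrized
circles.  A *simple boundary-regular map* for a link `L` is a smooth map
`f : S³ ∖ L → S¹` which near `L` is the
standard fibration `(x, z) ↦ z/|z|` in a positively oriented tubular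
neighborhood trivialization of `L` (this makes the homotopy class of `f`
the canonical class `ξ_L` dual to a Seifert surface, i.e. `f` is simple).
Such a map is *Morse* if all its critical points are nondegenerate; the
Morse–Novikov number `MN L` is the least number of critical points of a
simple boundary-regular Morse map for `L`. -/

noncomputable section
open scoped Manifold Real
open Metric Set

namespace MorseNovikov

/-- Ambient Euclidean 4-space, identified with `ℂ²` via the complex
coordinates `Z`, `W`. -/
abbrev E := EuclideanSpace ℝ (Fin 4)
abbrev E3 := EuclideanSpace ℝ (Fin 3)
abbrev E2 := EuclideanSpace ℝ (Fin 2)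

instance : Fact (Module.finrank ℝ E = 3 + 1) := ⟨by simp⟩

/-- The 3-sphere `S³`, the unit sphere of `ℝ⁴ ≅ ℂ²`. -/
abbrev Sph : Type := sphere (0 : E) 1

/-- First complex coordinate on `ℝ⁴ = ℂ²`. -/
def Z (p : E) : ℂ := (p 0 : ℂ) + (p 1 : ℂ) * Complex.I
/-- Second complex coordinate on `ℝ⁴ = ℂ²`. -/
def W (p : E) : ℂ := (p 2 : ℂ) + (p 3 : ℂ) * Complex.I

lemma continuous_Z : Continuous Z := by unfold Z; fun_prop
lemma continuous_W : Continuous W := by unfold W; fun_prop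

/-- The point of `ℝ⁴ = ℂ²` with complex coordinates `(z, w)`. -/
def mk4 (z w : ℂ) : E := (EuclideanSpace.equiv (Fin 4) ℝ).symm ![z.re, z.im, w.re, w.im]

/-- `z/|z| ∈ S¹` (with junk value `1` at `z = 0`). -/
def toCircle (z : ℂ) : Circle := Circle.exp (Complex.arg z)

/-- The set underlying the standard (horizontal) unknot `O = {w = 0} ⊂ S³`. -/
def Ocar : Set Sph := {p : Sph | W (p : E) = 0}

/-- The set underlying the standard split 2-component unlink
(the link of indeterminacy at infinity of `(2z-1)/z`). -/
def Ucar : Set Sph := {p : Sph | Z (p : E) = 0 ∨ Z (p : E) = 1/2}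

/-- A link: a nonempty closed oriented 1-dimensional smooth submanifold of
`S³`, presented by disjoint smoothly embedded circles; each component is a
`2π`-periodic injective smooth immersion of `ℝ` (recording its orientation). -/
structure Link where
  n : ℕ
  npos : 0 < n
  emb : Fin n → ℝ → Sph
  smooth : ∀ i, ContMDiff 𝓘(ℝ, ℝ) (𝓡 3) (⊤ : ℕ∞) (emb i)
  periodic : ∀ i t, emb i (t + 2*π) = emb i t
  immersed : ∀ i t, mfderiv 𝓘(ℝ, ℝ) (𝓡 3) (emb i) t ≠ 0
  inj : ∀ i j s t, s ∈ Ico 0 (2*π) → t ∈ Ico 0 (2*π) →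
    emb i s = emb j t → i = j ∧ s = t

/-- The underlying subset of `S³`. -/
def Link.carrier (L : Link) : Set Sph := ⋃ i, L.emb i '' (Icc 0 (2*π))

lemma Link.isClosed_carrier (L : Link) : IsClosed L.carrier := by
  refine isClosed_iUnion_of_finite fun i => ?_
  exact (isCompact_Icc.image (L.smooth i).continuous).isClosed

/-- The complement `S³ ∖ L`, an open submanifold of `S³`. -/
def Link.compl (L : Link) : TopologicalSpace.Opens Sph :=
  ⟨{x | x ∉ L.carrier}, L.isClosed_carrier.isOpen_compl⟩

/-- A knot is a one-component link. -/
def Link.IsKnot (L : Link) : Prop := L.n = 1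

section Generic
variable {M : Type*} [TopologicalSpace M] [ChartedSpace E3 M]

/-- `x` is a critical point of the circle-valued function `f`:
the differential of `f` at `x` fails to be surjective. -/
def IsCrit (f : M → Circle) (x : M) : Prop :=
  ¬ Function.Surjective (mfderiv (𝓡 3) (𝓡 1) f x)

/-- The set of critical points of `f`. -/
def critSet (f : M → Circle) : Set M := {x | IsCrit f x}

/-- A local real lift of `f` near `x`, read in the preferred chart at `x`. -/
def liftChart (f : M → Circle) (x : M) (u : E3) : ℝ :=
  Complex.arg ((f ((extChartAt (𝓡 3) x).symm u) : ℂ) / (f x : ℂ))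

/-- The Hessian bilinear form of `f` at `x` (meaningful at critical points,
where it is independent of the choice of chart and lift). -/
def hessAt (f : M → Circle) (x : M) (v w : E3) : ℝ :=
  fderiv ℝ (fun u => fderiv ℝ (liftChart f x) u v) (extChartAt (𝓡 3) x x) w

/-- Nondegeneracy of a critical point. -/
def Nondeg (f : M → Circle) (x : M) : Prop :=
  ∀ v : E3, v ≠ 0 → ∃ w : E3, hessAt f x v w ≠ 0

/-- `f` is a Morse function: it has no degenerate critical points. -/
def MorseFun (f : M → Circle) : Prop := ∀ x, IsCrit f x → Nondeg f x

/-- `x` is a nondegenerate critical point of `f` of Morse index `i`. -/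
def HasIndex (f : M → Circle) (x : M) (i : ℕ) : Prop :=
  IsCrit f x ∧ i ≤ 3 ∧
  ∃ V W : Submodule ℝ E3, Module.finrank ℝ V = i ∧ Module.finrank ℝ W = 3 - i ∧
    (∀ v ∈ V, v ≠ 0 → hessAt f x v v < 0) ∧ (∀ w ∈ W, w ≠ 0 → 0 < hessAt f x w w)

end Generic

/-- The determinant of four ambient vectors; expresses the standard
orientation of `S³ ⊂ ℝ⁴`. -/
def det4 (a b c d : E) : ℝ :=
  Matrix.det (Matrix.of ![(fun i => a i), (fun i => b i), (fun i => c i), (fun i => d i)])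

/-- The ambient (`ℝ⁴`-valued) differential of a map `g : ℝ × ℂ → S³`. -/
def tangAmb (g : ℝ × ℂ → Sph) (q : ℝ × ℂ) (v : ℝ × ℂ) : E :=
  mfderiv (𝓡 3) 𝓘(ℝ, E) (fun p : Sph => (p : E)) (g q)
    (mfderiv 𝓘(ℝ, ℝ × ℂ) (𝓡 3) g q v)

/-- A **simple boundary-regular smooth map** for the link `L`: a smooth map
`f : S³ ∖ L → S¹` together with an adapted trivialization `τ : L × D² → N(L)`
of a tubular neighborhood of `L`, with `τ(x, 0) = x`, on which `f` is the
standard fibration `(x, z) ↦ z/|z|`.  The trivialization is positively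
oriented with respect to the orientations of `L` and `S³`; consequently the
homotopy class of `f` is the canonical class `ξ_L ∈ H¹(S³ ∖ L; ℤ)` dual to a
Seifert surface, i.e. `f` is simple. -/
structure BRMap (L : Link) where
  f : L.compl → Circle
  smooth : ContMDiff (𝓡 3) (𝓡 1) (⊤ : ℕ∞) f
  tub : Fin L.n → ℝ × ℂ → Sph
  tub_smooth : ∀ i, ContMDiffOn 𝓘(ℝ, ℝ × ℂ) (𝓡 3) (⊤ : ℕ∞) (tub i) (univ ×ˢ ball (0:ℂ) 1)
  tub_per : ∀ i t z, tub i (t + 2*π, z) = tub i (t, z)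
  tub_core : ∀ i t, tub i (t, 0) = L.emb i t
  tub_inj : ∀ i j t s z w, t ∈ Ico 0 (2*π) → s ∈ Ico 0 (2*π) →
    z ∈ ball (0:ℂ) 1 → w ∈ ball (0:ℂ) 1 → tub i (t, z) = tub j (s, w) →
    i = j ∧ t = s ∧ z = w
  tub_nbhd : ∀ x ∈ L.carrier, (⋃ i, tub i '' (univ ×ˢ ball (0:ℂ) 1)) ∈ nhds x
  tub_off : ∀ i t z, z ∈ ball (0:ℂ) 1 → z ≠ 0 → tub i (t, z) ∉ L.carrier
  adapted : ∀ i t z, z ∈ ball (0:ℂ) 1 → z ≠ 0 →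
    ∀ x : L.compl, (x : Sph) = tub i (t, z) → f x = toCircle z
  positive : ∀ i t z, z ∈ ball (0:ℂ) 1 →
    0 < det4 ((tub i (t, z) : E)) (tangAmb (tub i) (t, z) (1, 0))
        (tangAmb (tub i) (t, z) (0, 1)) (tangAmb (tub i) (t, z) (0, Complex.I))

variable {L : Link}

/-- The page `F_θ := L ∪ f⁻¹(θ)` of `f`, as a subset of `S³`. -/
def pageSet (F : BRMap L) (θ : Circle) : Set Sph :=
  L.carrier ∪ {x : Sph | ∃ h : x ∈ L.compl, F.f ⟨x, h⟩ = θ}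

/-- `θ` is a regular value of `F.f` (the corresponding page is smooth). -/
def IsRegularValue (F : BRMap L) (θ : Circle) : Prop :=
  ∀ x : L.compl, F.f x = θ → ¬ IsCrit F.f x

/-- The Morse–Novikov number of `L`: the least number of critical points of
a simple boundary-regular Morse map `S³ ∖ L → S¹`. -/
def MN (L : Link) : ℕ∞ :=
  sInf {k : ℕ∞ | ∃ F : BRMap L, MorseFun F.f ∧ (critSet F.f).encard = k}

/-- `F` is a minimal Morse map for `L`. -/
def Minimal (F : BRMap L) : Prop :=
  MorseFun F.f ∧ ∀ G : BRMap L, MorseFun G.f →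
    (critSet F.f).encard ≤ (critSet G.f).encard

/-- All critical points of `F` have index 1 or 2. -/
def Moderate (F : BRMap L) : Prop :=
  ∀ x ∈ critSet F.f, HasIndex F.f x 1 ∨ HasIndex F.f x 2

/-- `F.f` restricted to its critical set factors as the index followed by an
injection. -/
def SelfIndexed (F : BRMap L) : Prop :=
  ∀ x ∈ critSet F.f, ∀ y ∈ critSet F.f, ∀ i j : ℕ,
    HasIndex F.f x i → HasIndex F.f y j → (F.f x = F.f y ↔ i = j)

/-- An ambient isotopy of `S³`: a smooth family of diffeomorphisms starting
at the identity. -/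
structure Isotopy where
  H : ℝ × Sph → Sph
  smooth : ContMDiff (𝓘(ℝ, ℝ).prod (𝓡 3)) (𝓡 3) (⊤ : ℕ∞) H
  init : ∀ x, H (0, x) = x
  bij : ∀ t, Function.Bijective (fun x => H (t, x))

/-- Two subsets of `S³` are ambient isotopic. -/
def AmbientIsotopic (A B : Set Sph) : Prop :=
  ∃ h : Isotopy, (fun x => h.H (1, x)) '' A = B

/-- Two links are (ambient) isotopic. -/
def LinkIsotopic (L₁ L₂ : Link) : Prop := AmbientIsotopic L₁.carrier L₂.carrier

/-- Isotopy of simple boundary-regular maps: an ambient isotopy carries one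
binding to the other and intertwines the two maps. -/
def BRMapIsotopic (L₁ : Link) (F₁ : BRMap L₁) (L₂ : Link) (F₂ : BRMap L₂) : Prop :=
  ∃ h : Isotopy, (fun x => h.H (1, x)) '' L₁.carrier = L₂.carrier ∧
    ∀ (x : L₁.compl) (y : L₂.compl), (y : Sph) = h.H (1, (x : Sph)) →
      F₂.f y = F₁.f x

/-- A closed (nonempty, compact, boundaryless) smooth surface inside `A ⊆ S³`. -/
structure ClosedSurfaceIn (A : Set Sph) where
  carr : Type
  [ts : TopologicalSpace carr]
  [cs : ChartedSpace E2 carr]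
  [cpt : CompactSpace carr]
  [ne : Nonempty carr]
  emb : carr → Sph
  smooth : ContMDiff (𝓡 2) (𝓡 3) (⊤ : ℕ∞) emb
  inj : Function.Injective emb
  imm : ∀ p, Function.Injective (mfderiv (𝓡 2) (𝓡 3) emb p)
  sub : Set.range emb ⊆ A

/-- `A` contains a nonempty closed surface. -/
def ContainsClosedSurface (A : Set Sph) : Prop := Nonempty (ClosedSurfaceIn A)

/-- `F` is boundary-connected: no page of `F` contains a nonempty closed
surface (equivalently, every page has trivial second homology). -/
def BoundaryConnected (F : BRMap L) : Prop :=
  ∀ θ : Circle, ¬ ContainsClosedSurface (pageSet F θ)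

/-- `F` is connected: every page of `F` is connected. -/
def ConnectedMap (F : BRMap L) : Prop :=
  ∀ θ : Circle, IsConnected (pageSet F θ)

/-- The ambient differential of a map into `S³` defined on a
surface-with-boundary. -/
def tangAmbS {C : Type*} [TopologicalSpace C] [ChartedSpace (EuclideanHalfSpace 2) C]
    (g : C → Sph) (p : C) (v : E2) : E :=
  mfderiv (𝓡 3) 𝓘(ℝ, E) (fun q : Sph => (q : E)) (g p)
    (mfderiv (𝓡∂ 2) (𝓡 3) g p v)

/-- A compact oriented smooth surface-with-boundary embedded in `S³`, with
boundary the link `L` (a *spanning surface* for `L`).  Orientedness is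
encoded by a continuous nonvanishing normal (coorientation) field in `S³`. -/
structure SpanningSurface (L : Link) where
  carr : Type
  [ts : TopologicalSpace carr]
  [cs : ChartedSpace (EuclideanHalfSpace 2) carr]
  [cpt : CompactSpace carr]
  emb : carr → Sph
  smooth : ContMDiff (𝓡∂ 2) (𝓡 3) (⊤ : ℕ∞) emb
  inj : Function.Injective emb
  imm : ∀ p, Function.Injective (mfderiv (𝓡∂ 2) (𝓡 3) emb p)
  bdry : emb '' ((𝓡∂ 2).boundary carr) = L.carrier
  int_off : ∀ p, p ∉ (𝓡∂ 2).boundary carr → emb p ∉ L.carrier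
  coorient : ∃ ν : carr → E, Continuous ν ∧ ∀ p, ν p ≠ 0 ∧
    inner (𝕜 := ℝ) (ν p) ((emb p : Sph) : E) = 0 ∧
    ∀ v : E2, inner (𝕜 := ℝ) (ν p) (tangAmbS emb p v) = 0

/-- A Seifert surface for `L`: a spanning surface with no closed components. -/
structure SeifertSurface (L : Link) extends SpanningSurface L where
  no_closed : ∀ p : carr, (connectedComponent p ∩ (𝓡∂ 2).boundary carr).Nonempty

/-- A compact smooth surface-with-boundary embedded in the region `Amb ⊆ S³`,
with boundary the set `Bd`. -/
structure EmbSurface (Bd Amb : Set Sph) where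
  carr : Type
  [ts : TopologicalSpace carr]
  [cs : ChartedSpace (EuclideanHalfSpace 2) carr]
  [cpt : CompactSpace carr]
  emb : carr → Sph
  smooth : ContMDiff (𝓡∂ 2) (𝓡 3) (⊤ : ℕ∞) emb
  inj : Function.Injective emb
  imm : ∀ p, Function.Injective (mfderiv (𝓡∂ 2) (𝓡 3) emb p)
  bdry : emb '' ((𝓡∂ 2).boundary carr) = Bd
  sub : Set.range emb ⊆ Amb

/-- Angular speed about the origin of a plane curve. -/
def angSpeed (g : ℝ → ℂ) (t : ℝ) : ℝ := ((deriv g t) / g t).im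

/-- Total winding number about `0` of a (`2π`-periodic) plane curve. -/
def windingNumber (g : ℝ → ℂ) : ℝ := (1/(2*π)) * ∫ t in (0:ℝ)..(2*π), angSpeed g t

/-- The rational function `G(z,w) = (2z - 1)/z`, as a function of the ambient
coordinates; its Milnor map at radius `1` is `p ↦ G(p)/|G(p)|`. -/
def Gu (p : E) : ℂ := (2 * Z p - 1) / Z p

section

theorem exists_curve (V : E → E) (K : NNReal) (hV : LipschitzWith K V) (C : NNReal)
    (hC : ∀ x, ‖V x‖ ≤ C) (x : E) :
    ∃ γ : ℝ → E, γ 0 = x ∧ ∀ t, HasDerivAt γ (V (γ t)) t := by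
  have h1 : ∀ n : ℕ, ∃ α : ℝ → E, α 0 = x ∧
      ∀ t ∈ Ioo (-(n+1:ℝ)) (n+1), HasDerivAt α (V (α t)) t := by
    intro n
    have hmem : (0:ℝ) ∈ Icc (-(n+1:ℝ)) (n+1) := by
      constructor <;> [linarith [n.cast_nonneg (α := ℝ)]; linarith [n.cast_nonneg (α := ℝ)]]
    have hp : IsPicardLindelof (fun _ => V) (⟨0, hmem⟩ : Icc (-(n+1:ℝ)) (n+1)) x
        (C * (n+1)) 0 C K := by
      refine IsPicardLindelof.of_time_independent (fun y _ => hC y) hV.lipschitzOnWith ?_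
      simp
    obtain ⟨α, h0, h⟩ := hp.exists_eq_forall_mem_Icc_hasDerivWithinAt₀
    refine ⟨α, h0, fun t ht => (h t (Ioo_subset_Icc_self ht)).hasDerivAt (Icc_mem_nhds ht.1 ht.2)⟩
  choose α h0 hα using h1
  have huniq : ∀ m n : ℕ, m ≤ n → ∀ t ∈ Ioo (-(m+1:ℝ)) (m+1), α m t = α n t := by
    intro m n hmn t ht
    have hmn' : (m:ℝ) ≤ n := by exact_mod_cast hmn
    refine ODE_solution_unique_of_mem_Ioo (v := fun _ => V) (s := fun _ => univ) (K := K)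
      (t₀ := 0) (a := -(m+1:ℝ)) (b := m+1)
      (fun _ _ => hV.lipschitzOnWith) ?_ (fun t ht => ⟨hα m t ht, trivial⟩)
      (fun t ht => ⟨hα n t ⟨by linarith [ht.1], by linarith [ht.2]⟩, trivial⟩) ?_ ht
    · constructor <;> linarith [m.cast_nonneg (α := ℝ)]
    · rw [h0, h0]
  refine ⟨fun t => α ⌈|t|⌉₊ t, by simp [h0], fun t => ?_⟩
  have ht : t ∈ Ioo (-((⌈|t|⌉₊ : ℝ)+1)) (⌈|t|⌉₊+1) := by
    have := Nat.le_ceil |t|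
    constructor <;> linarith [neg_abs_le t, le_abs_self t]
  refine (hα ⌈|t|⌉₊ t ht).congr_of_eventuallyEq ?_
  filter_upwards [isOpen_Ioo.mem_nhds ht] with s hs
  rcases le_total ⌈|s|⌉₊ ⌈|t|⌉₊ with h | h
  · apply huniq _ _ h
    have := Nat.le_ceil |s|
    constructor <;> linarith [neg_abs_le s, le_abs_self s]
  · exact (huniq _ _ h s hs).symm

theorem traj_dist (V : E → E) (K : NNReal) (hV : LipschitzWith K V) {γ δ : ℝ → E}
    (hγ : ∀ t, HasDerivAt γ (V (γ t)) t) (hδ : ∀ t, HasDerivAt δ (V (δ t)) t) {t : ℝ}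
    (ht : 0 ≤ t) : dist (γ t) (δ t) ≤ dist (γ 0) (δ 0) * Real.exp (K * t) := by
  have := dist_le_of_trajectories_ODE (v := fun _ => V) (a := 0) (b := t) (K := K) (f := γ) (g := δ)
    (fun _ => hV) (fun s _ => (hγ s).continuousAt.continuousWithinAt)
    (fun s _ => (hγ s).hasDerivWithinAt) (fun s _ => (hδ s).continuousAt.continuousWithinAt)
    (fun s _ => (hδ s).hasDerivWithinAt) le_rfl t ⟨ht, le_rfl⟩
  simpa using this

/-- flow data for a vector field -/
structure Flow (V : E → E) where
  Φ : ℝ → E → E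
  zero : ∀ x, Φ 0 x = x
  deriv : ∀ x t, HasDerivAt (fun s => Φ s x) (V (Φ t x)) t
  uniq : ∀ γ : ℝ → E, (∀ t, HasDerivAt γ (V (γ t)) t) → ∀ t, γ t = Φ t (γ 0)
  add : ∀ s t x, Φ (s + t) x = Φ s (Φ t x)
  lip : ∀ t, ∃ K : NNReal, LipschitzWith K (Φ t)
  cont : Continuous (fun p : ℝ × E => Φ p.1 p.2)

theorem exists_flow (V : E → E) (K : NNReal) (hV : LipschitzWith K V) (C : NNReal)
    (hC : ∀ x, ‖V x‖ ≤ C) : Nonempty (Flow V) := by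
  choose Φ h0 hd using exists_curve V K hV C hC
  have huniq : ∀ γ : ℝ → E, (∀ t, HasDerivAt γ (V (γ t)) t) → ∀ t, γ t = Φ (γ 0) t := by
    intro γ hγ t
    refine congrFun (ODE_solution_unique_univ (v := fun _ => V) (s := fun _ => univ) (K := K)
      (t₀ := 0) (fun _ => hV.lipschitzOnWith) (fun t => ⟨hγ t, trivial⟩)
      (fun t => ⟨hd _ t, trivial⟩) (h0 _).symm) t
  have hlip : ∀ t, LipschitzWith (Real.toNNReal (Real.exp (K * |t|))) (fun x => Φ x t) := by
    intro t
    refine LipschitzWith.of_dist_le_mul fun x y => ?_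
    rw [Real.coe_toNNReal _ (Real.exp_pos _).le, mul_comm]
    rcases le_total 0 t with ht | ht
    · have := traj_dist V K hV (hd x) (hd y) ht
      rw [h0, h0] at this
      rwa [abs_of_nonneg ht]
    · have hV' : LipschitzWith K (fun x => -V x) := by
        refine LipschitzWith.of_dist_le_mul fun x y => ?_
        rw [dist_neg_neg]; exact hV.dist_le_mul x y
      have hd' : ∀ x t, HasDerivAt (fun s => Φ x (-s)) (-V (Φ x (-t))) t := by
        intro x t
        have := (hd x (-t)).scomp t (hasDerivAt_neg t)
        simpa [Function.comp_def] using this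
      have := traj_dist (fun x => -V x) K hV' (hd' x) (hd' y) (t := -t) (by linarith)
      simpa [h0, abs_of_nonpos ht] using this
  refine ⟨⟨fun t x => Φ x t, h0, hd, huniq, ?_, fun t => ⟨_, hlip t⟩, ?_⟩⟩
  · intro s t x
    have := huniq (fun s => Φ x (s + t)) (fun s => by simpa using (hd x (s + t)).comp_add_const s t) s
    simpa using this
  · refine continuous_prod_of_continuous_lipschitzWith (fun p : ℝ × E => Φ p.2 p.1) C
      (fun t => (hlip t).continuous) (fun x => ?_)
    refine lipschitzWith_of_nnnorm_deriv_le (fun t => (hd x t).differentiableAt) fun t => ?_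
    rw [(hd x t).deriv]
    exact hC _

end

section

/-- complement of the unlink, as a subset of `E` -/
def XX : Set E := {x | ‖x‖ = 1 ∧ Z x ≠ 0 ∧ Z x ≠ 1/2}
/-- the unlink as a subset of `E` -/
def UU : Set E := {x | ‖x‖ = 1 ∧ (Z x = 0 ∨ Z x = 1/2)}

lemma XX_or_UU {x : E} (h : ‖x‖ = 1) (h' : x ∉ UU) : x ∈ XX := by
  simp only [UU, XX, mem_ofPred_eq] at *
  tauto

lemma XX_not_UU {x : E} (h : x ∈ XX) : x ∉ UU := by
  simp only [UU, XX, mem_ofPred_eq] at *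
  tauto

/-- ambient circle-valued function -/
structure Amb (g : E → ℂ) : Prop where
  norm : ∀ x ∈ XX, ∀ᶠ y in nhds x, ‖g y‖ = 1
  smooth : ∀ x ∈ XX, ContDiffAt ℝ (⊤ : ℕ∞) g x

/-- angular derivative -/
def ang (g : E → ℂ) (x v : E) : ℝ := (fderiv ℝ g x v / g x).im

variable {g : E → ℂ}

lemma Amb.norm_eq (hg : Amb g) {x : E} (hx : x ∈ XX) : ‖g x‖ = 1 := (hg.norm x hx).self_of_nhds

lemma Amb.ne_zero (hg : Amb g) {x : E} (hx : x ∈ XX) : g x ≠ 0 := by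
  intro h; have := hg.norm_eq hx; simp [h] at this

lemma Amb.diff (hg : Amb g) {x : E} (hx : x ∈ XX) : DifferentiableAt ℝ g x :=
  (hg.smooth x hx).differentiableAt (by simp)

lemma Amb.fderiv_eq (hg : Amb g) {x : E} (hx : x ∈ XX) (v : E) :
    fderiv ℝ g x v = Complex.I * ang g x v * g x := by
  have hd := (hg.diff hx).hasFDerivAt
  have h1 : HasFDerivAt (fun y => ‖g y‖ ^ 2) (2 • (innerSL ℝ (g x)).comp (fderiv ℝ g x)) x :=
    hd.norm_sq
  have h2 : HasFDerivAt (fun y => ‖g y‖ ^ 2) (0 : E →L[ℝ] ℝ) x := by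
    refine (hasFDerivAt_const (1:ℝ) x).congr_of_eventuallyEq ?_
    filter_upwards [hg.norm x hx] with y hy
    simp [hy]
  have h3 := congrArg (fun T => T v) (h1.unique h2)
  have hne := hg.ne_zero hx
  have h4 : (fderiv ℝ g x v / g x).re = 0 := by
    have : ((fderiv ℝ g x v) * (starRingEnd ℂ) (g x)).re = 0 := by
      have h3' := h3
      simp [Complex.inner] at h3' ⊢
      linarith
    rw [Complex.div_re]
    simp only [Complex.mul_re, Complex.conj_re, Complex.conj_im] at this
    rw [← add_div, show (fderiv ℝ g x v).re * (g x).re + (fderiv ℝ g x v).im * (g x).im = 0 by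
      linarith, zero_div]
  have h5 : fderiv ℝ g x v / g x = Complex.I * ang g x v := by
    apply Complex.ext <;> simp [ang, h4]
  rw [← h5]; field_simp

lemma Amb.ang_continuousAt (hg : Amb g) {V : E → E} (hV : Continuous V) {x : E} (hx : x ∈ XX) :
    ContinuousAt (fun y => ang g y (V y)) x := by
  unfold ang
  have h1 : ContinuousAt (fderiv ℝ g) x :=
    ((hg.smooth x hx).fderiv_right (m := 0) (by simp)).continuousAt
  have h2 : ContinuousAt g x := (hg.smooth x hx).continuousAt
  exact Complex.continuous_im.continuousAt.comp
    ((h1.clm_apply hV.continuousAt).div h2 (hg.ne_zero hx))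

lemma ang_smul (g : E → ℂ) (x v : E) (c : ℝ) : ang g x (c • v) = c * ang g x v := by
  unfold ang
  rw [map_smul, Complex.real_smul, mul_div_assoc, Complex.im_ofReal_mul]

lemma ang_add (g : E → ℂ) (x v w : E) : ang g x (v + w) = ang g x v + ang g x w := by
  unfold ang
  rw [map_add, add_div, Complex.add_im]

section flow
variable {V : E → E} (F : Flow V) (hT : ∀ x, inner ℝ (V x) x = 0) (hU : ∀ x ∈ UU, V x = 0)

include hT in
lemma Flow.norm_eq (x : E) (t : ℝ) : ‖F.Φ t x‖ = ‖x‖ := by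
  have h1 : ∀ t, HasDerivAt (fun s => ‖F.Φ s x‖ ^ 2) 0 t := by
    intro t
    have := (F.deriv x t).norm_sq
    rw [real_inner_comm, hT] at this
    simpa using this
  have h2 := is_const_of_deriv_eq_zero (fun t => (h1 t).differentiableAt) (fun t => (h1 t).deriv) t 0
  simp only [F.zero] at h2
  exact (sq_eq_sq₀ (norm_nonneg _) (norm_nonneg _)).1 h2

include hU in
lemma Flow.fix {x : E} (hx : x ∈ UU) (t : ℝ) : F.Φ t x = x := by
  have := F.uniq (fun _ => x) (fun t => by rw [hU x hx]; exact hasDerivAt_const t x) t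
  exact this.symm

lemma Flow.neg (x : E) (t : ℝ) : F.Φ (-t) (F.Φ t x) = x := by
  rw [← F.add]; simp [F.zero]

include hT hU in
lemma Flow.mem {x : E} (hx : x ∈ XX) (t : ℝ) : F.Φ t x ∈ XX := by
  refine XX_or_UU (by rw [F.norm_eq hT, hx.1]) fun h => ?_
  have h1 := F.fix hU h (-t)
  rw [F.neg] at h1
  rw [← h1] at h
  exact XX_not_UU hx h

/-- accumulated angle along the flow -/
def Flow.S (g : E → ℂ) (x : E) (T : ℝ) : ℝ := ∫ t in (0:ℝ)..T, ang g (F.Φ t x) (V (F.Φ t x))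

variable (hVc : Continuous V) (hg : Amb g)

include hT hU hVc hg in
lemma Flow.cont_ang : Continuous (fun p : XX × ℝ => ang g (F.Φ p.2 p.1) (V (F.Φ p.2 p.1))) := by
  rw [continuous_iff_continuousAt]
  intro p
  have h1 : Continuous (fun p : XX × ℝ => F.Φ p.2 p.1) :=
    F.cont.comp (continuous_snd.prodMk (continuous_subtype_val.comp continuous_fst))
  exact ContinuousAt.comp (f := fun p : XX × ℝ => F.Φ p.2 p.1)
    (hg.ang_continuousAt hVc (F.mem hT hU p.1.2 p.2)) h1.continuousAt

include hT hU hVc hg in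
lemma Flow.S_cont : Continuous (fun p : XX × ℝ => F.S g p.1 p.2) := by
  have h := F.cont_ang hT hU hVc hg
  refine intervalIntegral.continuous_parametric_intervalIntegral_of_continuous
    (f := fun (p : XX × ℝ) t => ang g (F.Φ t p.1) (V (F.Φ t p.1))) ?_ continuous_snd
  exact h.comp ((continuous_fst.comp continuous_fst).prodMk continuous_snd)

include hT hU hVc hg in
lemma Flow.S_deriv {x : E} (hx : x ∈ XX) (T : ℝ) :
    HasDerivAt (F.S g x) (ang g (F.Φ T x) (V (F.Φ T x))) T := by
  have h := (F.cont_ang hT hU hVc hg).comp (Continuous.prodMk_right (⟨x, hx⟩ : XX))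
  exact intervalIntegral.integral_hasDerivAt_right (h.intervalIntegrable _ _)
    (h.stronglyMeasurableAtFilter _ _) h.continuousAt

include hT hU hVc hg in
lemma Flow.S_eq {x : E} (hx : x ∈ XX) (T : ℝ) :
    g (F.Φ T x) = g x * Complex.exp (F.S g x T * Complex.I) := by
  have h1 : ∀ T, HasDerivAt (fun T => g (F.Φ T x) * Complex.exp (-(F.S g x T * Complex.I))) 0 T := by
    intro T
    have hm := F.mem hT hU hx T
    have a1 : HasDerivAt (fun T => g (F.Φ T x)) _ T :=
      ((hg.diff hm).hasFDerivAt).comp_hasDerivAt T (F.deriv x T)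
    have a2 := (F.S_deriv hT hU hVc hg hx T).ofReal_comp
    have a3 := a1.mul ((a2.mul_const Complex.I).neg.cexp)
    rw [hg.fderiv_eq hm] at a3
    have e : ∀ c : ℂ, c = 0 → HasDerivAt
      (fun T => g (F.Φ T x) * Complex.exp (-(F.S g x T * Complex.I))) c T →
      HasDerivAt (fun T => g (F.Φ T x) * Complex.exp (-(F.S g x T * Complex.I))) 0 T := by
      rintro c rfl h; exact h
    exact e _ (by ring) a3
  have h2 := is_const_of_deriv_eq_zero (fun t => (h1 t).differentiableAt) (fun t => (h1 t).deriv) T 0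
  have h3 : F.S g x 0 = 0 := by simp [Flow.S]
  simp only [F.zero, h3] at h2
  rw [Complex.exp_neg, ← div_eq_mul_inv, div_eq_iff (Complex.exp_ne_zero _)] at h2
  simpa using h2

end flow

end

section

/-- open spherical cap -/
def Cap (x₀ : E) (κ : ℝ) : Set E := {x | ‖x‖ = 1 ∧ κ < inner ℝ x x₀}

/-- thin subsets of `E`: contained in countably many locally Lipschitz curves -/
def Thin (B : Set E) : Prop :=
  ∃ c : ℕ → ℝ → E, (∀ n, LocallyLipschitz (c n)) ∧ B ⊆ ⋃ n, range (c n)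

lemma thin_avoid {c : ℕ → ℝ → E} (hc : ∀ n, LocallyLipschitz (c n)) (a b : E) {O : Set E}
    (hO : IsOpen O) (hne : O.Nonempty) :
    ∃ m ∈ O, (∀ n (t l r : ℝ), m ≠ a + t • (l • c n r - a)) ∧
      (∀ n (t l r : ℝ), m ≠ b + t • (l • c n r - b)) := by
  have key : ∀ (a : E) n, dimH (range (fun p : ℝ × ℝ × ℝ => a + p.1 • (p.2.1 • c n p.2.2 - a))) ≤ 3 := by
    intro a n
    have h1 : LocallyLipschitz (fun q : ℝ × ℝ × E => a + q.1 • (q.2.1 • q.2.2 - a)) := by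
      apply ContDiff.locallyLipschitz (𝕂 := ℝ)
      fun_prop
    have h2 : LocallyLipschitz (fun p : ℝ × ℝ × ℝ => (p.1, p.2.1, c n p.2.2)) := by
      refine LocallyLipschitz.prodMk LipschitzWith.prod_fst.locallyLipschitz
        (LocallyLipschitz.prodMk ?_ ?_)
      · exact (LipschitzWith.prod_fst.comp LipschitzWith.prod_snd).locallyLipschitz
      · exact (hc n).comp (LipschitzWith.prod_snd.comp LipschitzWith.prod_snd).locallyLipschitz
    have h3 := h1.comp h2
    have h4 : dimH (range ((fun q : ℝ × ℝ × E => a + q.1 • (q.2.1 • q.2.2 - a)) ∘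
        (fun p : ℝ × ℝ × ℝ => (p.1, p.2.1, c n p.2.2)))) ≤ dimH (univ : Set (ℝ × ℝ × ℝ)) := by
      apply dimH_range_le_of_locally_lipschitzOn
      intro x
      obtain ⟨K, t, ht, hK⟩ := h3 x
      exact ⟨K, t, by simpa using ht, hK⟩
    rw [Real.dimH_univ_eq_finrank] at h4
    have h5 : Module.finrank ℝ (ℝ × ℝ × ℝ) = 3 := by simp
    rw [h5] at h4
    exact_mod_cast h4
  set s : Set E := (⋃ n, range (fun p : ℝ × ℝ × ℝ => a + p.1 • (p.2.1 • c n p.2.2 - a))) ∪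
    (⋃ n, range (fun p : ℝ × ℝ × ℝ => b + p.1 • (p.2.1 • c n p.2.2 - b))) with hs
  have h6 : dimH s < Module.finrank ℝ E := by
    have : dimH s ≤ 3 := by
      rw [hs, dimH_union, dimH_iUnion, dimH_iUnion]
      exact max_le (iSup_le (key a)) (iSup_le (key b))
    refine this.trans_lt ?_
    rw [finrank_euclideanSpace_fin]
    exact_mod_cast (by norm_num : (3:ℕ) < 4)
  obtain ⟨m, hm, hms⟩ := (dense_compl_of_dimH_lt_finrank h6).inter_open_nonempty O hO hne
  refine ⟨m, hm, fun n t l r h => hms ?_, fun n t l r h => hms ?_⟩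
  · exact Or.inl (mem_iUnion.2 ⟨n, ⟨(t, l, r), h.symm⟩⟩)
  · exact Or.inr (mem_iUnion.2 ⟨n, ⟨(t, l, r), h.symm⟩⟩)

/-- cone over a cap -/
def CapCone (x₀ : E) (κ : ℝ) : Set E := {v | κ * ‖v‖ < inner ℝ v x₀}

lemma capCone_convex (x₀ : E) {κ : ℝ} (hκ : 0 ≤ κ) : Convex ℝ (CapCone x₀ κ) := by
  intro v hv w hw a b ha hb hab
  simp only [CapCone, mem_ofPred_eq] at *
  rw [inner_add_left, real_inner_smul_left, real_inner_smul_left]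
  have h1 : ‖a • v + b • w‖ ≤ a * ‖v‖ + b * ‖w‖ := by
    refine (norm_add_le _ _).trans ?_
    rw [norm_smul, norm_smul, Real.norm_of_nonneg ha, Real.norm_of_nonneg hb]
  have h2 : κ * ‖a • v + b • w‖ ≤ κ * (a * ‖v‖ + b * ‖w‖) := mul_le_mul_of_nonneg_left h1 hκ
  rcases ha.eq_or_lt with h | h
  · have hb1 : b = 1 := by linarith
    subst h; subst hb1; simp at h2 ⊢; linarith
  · nlinarith [mul_le_mul_of_nonneg_left hw.le hb, mul_lt_mul_of_pos_left hv h]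

lemma capCone_open (x₀ : E) (κ : ℝ) : IsOpen (CapCone x₀ κ) := by
  apply isOpen_lt <;> fun_prop

lemma capCone_ne {x₀ : E} {κ : ℝ} {v : E} (hv : v ∈ CapCone x₀ κ) : v ≠ 0 := by
  rintro rfl
  simp [CapCone] at hv

lemma capCone_norm {x₀ : E} {κ : ℝ} {v : E} (hv : v ∈ CapCone x₀ κ) :
    ‖v‖⁻¹ • v ∈ Cap x₀ κ := by
  have h := norm_pos_iff.2 (capCone_ne hv)
  refine ⟨by rw [norm_smul, norm_inv, norm_norm, inv_mul_cancel₀ h.ne'], ?_⟩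
  rw [real_inner_smul_left]
  simp only [CapCone, mem_ofPred_eq] at hv
  rw [inv_mul_eq_div, lt_div_iff₀ h]; exact hv

lemma cap_joined {B : Set E} {c : ℕ → ℝ → E} (hB : B ⊆ ⋃ n, range (c n))
    {x₀ : E} {κ : ℝ} (hκ : 0 ≤ κ) {a m : E} (ha : a ∈ Cap x₀ κ) (haB : a ∉ B)
    (hm : m ∈ CapCone x₀ κ) (h : ∀ n (t l r : ℝ), m ≠ a + t • (l • c n r - a)) :
    JoinedIn (Cap x₀ κ \ B) a (‖m‖⁻¹ • m) := by
  have ha' : a ∈ CapCone x₀ κ := by simpa [CapCone, ha.1] using ha.2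
  have hmem : ∀ t ∈ Icc (0:ℝ) 1, a + t • (m - a) ∈ CapCone x₀ κ := by
    intro t ht
    have := (capCone_convex x₀ hκ) ha' hm (sub_nonneg.2 ht.2) ht.1 (by ring)
    convert this using 1
    module
  refine JoinedIn.ofLine (f := fun t : ℝ => ‖a + t • (m - a)‖⁻¹ • (a + t • (m - a))) ?_ ?_ ?_ ?_
  · have h1 : Continuous (fun t : ℝ => a + t • (m - a)) := by fun_prop
    refine ContinuousOn.smul (ContinuousOn.inv₀ h1.norm.continuousOn ?_) h1.continuousOn
    intro t ht
    exact norm_ne_zero_iff.2 (capCone_ne (hmem t ht))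
  · simp [ha.1]
  · simp
  · rintro _ ⟨t, ht, rfl⟩
    refine ⟨capCone_norm (hmem t ht), fun hb => ?_⟩
    obtain ⟨n, r, hr⟩ := mem_iUnion.1 (hB hb)
    have hne := norm_ne_zero_iff.2 (capCone_ne (hmem t ht))
    have hv : a + t • (m - a) = ‖a + t • (m - a)‖ • c n r := by
      rw [hr, smul_smul, mul_inv_cancel₀ hne, one_smul]
    rcases eq_or_ne t 0 with rfl | h0
    · apply haB
      simpa [ha.1] using hb
    · apply h n t⁻¹ ‖a + t • (m - a)‖ r
      rw [← hv, add_sub_cancel_left, smul_smul, inv_mul_cancel₀ h0, one_smul]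
      abel

lemma cap_path {B : Set E} (hB : Thin B) {x₀ : E} (hx₀ : ‖x₀‖ = 1) {κ : ℝ} (hκ : 0 ≤ κ)
    (hκ1 : κ < 1) : IsPathConnected (Cap x₀ κ \ B) := by
  obtain ⟨c, hc, hB⟩ := hB
  have hne : (CapCone x₀ κ).Nonempty := ⟨x₀, by simp [CapCone, hx₀, hκ1]⟩
  have hop := capCone_open x₀ κ
  rw [isPathConnected_iff]
  constructor
  · obtain ⟨m, hm, h, -⟩ := thin_avoid hc 0 0 hop hne
    refine ⟨‖m‖⁻¹ • m, capCone_norm hm, fun hb => ?_⟩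
    obtain ⟨n, r, hr⟩ := mem_iUnion.1 (hB hb)
    have h0 := norm_ne_zero_iff.2 (capCone_ne hm)
    apply h n 1 ‖m‖ r
    rw [hr, smul_smul, mul_inv_cancel₀ h0]
    simp
  · intro a ha b hb
    obtain ⟨m, hm, h1, h2⟩ := thin_avoid hc a b hop hne
    exact (cap_joined hB hκ ha.1 ha.2 hm h1).trans (cap_joined hB hκ hb.1 hb.2 hm h2).symm

/-- caps are a neighbourhood basis -/
lemma cap_basis {x₀ : E} (hx₀ : ‖x₀‖ = 1) {O : Set E} (hO : O ∈ nhds x₀) :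
    ∃ κ, 0 ≤ κ ∧ κ < 1 ∧ Cap x₀ κ ⊆ O := by
  obtain ⟨ε, hε, h⟩ := Metric.mem_nhds_iff.1 hO
  refine ⟨max 0 (1 - ε ^ 2 / 2), le_max_left _ _, ?_, fun x hx => h ?_⟩
  · apply max_lt one_pos
    have : 0 < ε ^ 2 := by positivity
    linarith
  · rw [mem_ball, dist_eq_norm]
    have h1 := norm_sub_sq_real x x₀
    rw [hx.1, hx₀] at h1
    have h2 := (le_max_right _ _).trans_lt hx.2
    exact lt_of_pow_lt_pow_left₀ 2 hε.le (by linarith)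

lemma cap_nhds {x₀ : E} (hx₀ : ‖x₀‖ = 1) {κ : ℝ} (hκ1 : κ < 1) :
    {x | κ < inner ℝ x x₀} ∈ nhds x₀ := by
  refine IsOpen.mem_nhds (isOpen_lt (by fun_prop) (by fun_prop)) ?_
  simp [hx₀, hκ1]

/-- general position for paths -/
lemma avoid_path {Y : Type*} [TopologicalSpace Y] (Good : Set Y) (hd : Dense Good)
    (hloc : ∀ y, ∃ N ∈ nhds y, ∀ a ∈ N ∩ Good, ∀ b ∈ N ∩ Good, JoinedIn Good a b)
    {a b : Y} (ha : a ∈ Good) (hb : b ∈ Good) (hab : Joined a b) : JoinedIn Good a b := by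
  set T : Set Y := {y | ∀ᶠ z in nhds y, z ∈ Good → JoinedIn Good a z} with hT
  have hopen : IsOpen T := by
    rw [isOpen_iff_mem_nhds]
    intro y hy
    exact eventually_eventually_nhds.2 hy
  have hclosed : IsClosed T := by
    rw [← isOpen_compl_iff, isOpen_iff_mem_nhds]
    intro y hy
    obtain ⟨N, hN, h⟩ := hloc y
    have hno : ∀ z ∈ N ∩ Good, ¬ JoinedIn Good a z := by
      intro z hz hj
      apply hy
      filter_upwards [hN] with w hw hwG
      exact hj.trans (h z hz w ⟨hw, hwG⟩)
    filter_upwards [eventually_eventually_nhds.2 hN] with y' hy' hyT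
    obtain ⟨z, hz⟩ := (hd.inter_nhds_nonempty (Filter.inter_mem hy' hyT))
    exact hno z ⟨hz.2.1, hz.1⟩ (hz.2.2 hz.1)
  have haT : a ∈ T := by
    obtain ⟨N, hN, h⟩ := hloc a
    filter_upwards [hN] with z hz hzG
    exact h a ⟨mem_of_mem_nhds hN, ha⟩ z ⟨hz, hzG⟩
  have hbT : b ∈ T := by
    obtain ⟨p⟩ := hab
    have hc : IsClopen (p ⁻¹' T) := ⟨hclosed.preimage p.continuous, hopen.preimage p.continuous⟩
    have := hc.eq_univ ⟨0, by simpa using haT⟩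
    have h1 : (1 : unitInterval) ∈ p ⁻¹' T := by rw [this]; trivial
    simpa using h1
  exact (Filter.Eventually.self_of_nhds hbT) hb

end

section

lemma lift_exists {A : Type*} [NormedAddCommGroup A] [NormedSpace ℝ A] {f : A → ℂ}
    (hf : Continuous f) (h1 : ∀ a, ‖f a‖ = 1) (a₀ : A) (s₀ : ℝ)
    (h0 : f a₀ = Complex.exp (s₀ * Complex.I)) :
    ∃ F : A → ℝ, Continuous F ∧ F a₀ = s₀ ∧ ∀ a, f a = Complex.exp (F a * Complex.I) := by
  let f' : C(A, Circle) := ⟨fun a => ⟨f a, by simp [Submonoid.unitSphere, h1]⟩, by fun_prop⟩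
  obtain ⟨F, ⟨hF0, hF⟩, -⟩ := Circle.isCoveringMap_exp.existsUnique_continuousMap_lifts f' a₀ s₀
    (by ext; exact h0.symm)
  refine ⟨F, F.continuous, hF0, fun a => ?_⟩
  have := congrArg (fun c : Circle => (c : ℂ)) (congrFun hF a)
  exact this.symm

lemma exp_eq_one {s : ℝ} (h : Complex.exp (s * Complex.I) = 1) : ∃ k : ℤ, s = k * (2 * π) := by
  obtain ⟨k, hk⟩ := Complex.exp_eq_one_iff.1 h
  refine ⟨k, ?_⟩
  have : ((s : ℂ) - k * (2 * π)) * Complex.I = 0 := by rw [sub_mul, hk]; ring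
  rcases mul_eq_zero.1 this with h | h
  · exact_mod_cast sub_eq_zero.1 h
  · exact absurd h Complex.I_ne_zero

lemma exp_eq_one' (k : ℤ) : Complex.exp (((k * (2 * π) : ℝ) : ℂ) * Complex.I) = 1 := by
  rw [Complex.exp_eq_one_iff]
  exact ⟨k, by push_cast; ring⟩

lemma exp_eq_exp {s t : ℝ} (h : Complex.exp (s * Complex.I) = Complex.exp (t * Complex.I)) :
    ∃ k : ℤ, s = t + k * (2 * π) := by
  have : Complex.exp (((s - t : ℝ) : ℂ) * Complex.I) = 1 := by
    push_cast
    rw [sub_mul, Complex.exp_sub, h, div_self (Complex.exp_ne_zero _)]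
  obtain ⟨k, hk⟩ := exp_eq_one this
  exact ⟨k, by linarith⟩

lemma int_const {X : Type*} [TopologicalSpace X] {S : Set X} (hS : IsPreconnected S) {F : X → ℝ}
    (hF : ContinuousOn F S) (h : ∀ x ∈ S, Complex.exp (F x * Complex.I) = 1) {x y : X}
    (hx : x ∈ S) (hy : y ∈ S) : F x = F y := by
  have hc : ContinuousOn (fun x => F x / (2 * π)) S := hF.div_const _
  have hpi := Real.pi_pos
  have := hS.constant_of_mapsTo (f := fun x => F x / (2 * π)) (T := range ((↑) : ℤ → ℝ)) ?_ hc ?_ hx hy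
  · field_simp at this
    exact this
  · exact Int.isClosedEmbedding_coe_real.isEmbedding.isInducing.isDiscrete_range
  · intro x hx
    obtain ⟨k, hk⟩ := exp_eq_one (h x hx)
    exact ⟨k, by simp only [hk]; field_simp⟩

/-- difference of lifts is constant -/
lemma lift_diff {X : Type*} [TopologicalSpace X] {S : Set X} (hS : IsPreconnected S) {F G : X → ℝ}
    (hF : ContinuousOn F S) (hG : ContinuousOn G S)
    (h : ∀ x ∈ S, Complex.exp (F x * Complex.I) = Complex.exp (G x * Complex.I)) {x y : X}
    (hx : x ∈ S) (hy : y ∈ S) : F x - G x = F y - G y := by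
  refine int_const hS (F := fun x => F x - G x) (hF.sub hG) (fun x hx => ?_) hx hy
  push_cast
  rw [sub_mul, Complex.exp_sub, h x hx, div_self (Complex.exp_ne_zero _)]

lemma sq_eq_one_iff_of_side {a : ℝ} (h : 0 ≤ a) : a ^ 2 = 1 ↔ a = 1 := by
  constructor
  · intro h'; nlinarith
  · rintro rfl; norm_num

@[simp] lemma Z_re (x : E) : (Z x).re = x 0 := by simp [Z]
@[simp] lemma Z_im (x : E) : (Z x).im = x 1 := by simp [Z]
@[simp] lemma W_re (x : E) : (W x).re = x 2 := by simp [W]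
@[simp] lemma W_im (x : E) : (W x).im = x 3 := by simp [W]
@[simp] lemma mk4_0 (z w : ℂ) : mk4 z w 0 = z.re := by simp [mk4]
@[simp] lemma mk4_1 (z w : ℂ) : mk4 z w 1 = z.im := by simp [mk4]
@[simp] lemma mk4_2 (z w : ℂ) : mk4 z w 2 = w.re := by simp [mk4]
@[simp] lemma mk4_3 (z w : ℂ) : mk4 z w 3 = w.im := by simp [mk4]
@[simp] lemma Z_mk4 (z w : ℂ) : Z (mk4 z w) = z := by apply Complex.ext <;> simp
@[simp] lemma W_mk4 (z w : ℂ) : W (mk4 z w) = w := by apply Complex.ext <;> simp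

lemma E_ext {x y : E} (hz : Z x = Z y) (hw : W x = W y) : x = y := by
  ext i
  fin_cases i
  · simpa using congrArg Complex.re hz
  · simpa using congrArg Complex.im hz
  · simpa using congrArg Complex.re hw
  · simpa using congrArg Complex.im hw

lemma mk4_ZW (x : E) : mk4 (Z x) (W x) = x := E_ext (by simp) (by simp)

lemma continuous_mk4 : Continuous (fun p : ℂ × ℂ => mk4 p.1 p.2) := by
  unfold mk4
  refine (EuclideanSpace.equiv (Fin 4) ℝ).symm.continuous.comp ?_
  refine continuous_pi fun i => ?_
  fin_cases i <;> simp <;> fun_prop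

lemma norm_sq_E (x : E) : ‖x‖ ^ 2 = ‖Z x‖ ^ 2 + ‖W x‖ ^ 2 := by
  rw [EuclideanSpace.real_norm_sq_eq, Fin.sum_univ_four, Complex.sq_norm, Complex.sq_norm,
    Complex.normSq_apply, Complex.normSq_apply]
  simp; ring

lemma norm_one_iff (x : E) : ‖x‖ = 1 ↔ ‖Z x‖ ^ 2 + ‖W x‖ ^ 2 = 1 := by
  rw [← norm_sq_E, sq_eq_one_iff_of_side (norm_nonneg x)]

lemma norm_one_iff' (x : E) : ‖x‖ = 1 ↔ x 0 ^ 2 + x 1 ^ 2 + x 2 ^ 2 + x 3 ^ 2 = 1 := by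
  rw [← sq_eq_one_iff_of_side (norm_nonneg x), EuclideanSpace.real_norm_sq_eq, Fin.sum_univ_four]

/-- punctured tubular neighbourhood -/
def AA (c R : ℝ) : Set E := {x | ‖x‖ = 1 ∧ Z x ≠ c ∧ ‖Z x - c‖ < R}

lemma AA_path {c R : ℝ} (hc : 0 ≤ c) (hR : 0 < R) (hcR : c + R ≤ 1) : IsPathConnected (AA c R) := by
  let D : Set (ℝ × ℝ × ℝ) := Ioo 0 R ×ˢ (univ ×ˢ univ)
  have hD : IsPathConnected D := by
    apply Convex.isPathConnected
    · exact (convex_Ioo _ _).prod (convex_univ.prod convex_univ)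
    · exact ⟨(R/2, 0, 0), by simp [D, hR]⟩
  let f : ℝ × ℝ × ℝ → E := fun p => mk4 (c + p.1 * Complex.exp (p.2.1 * Complex.I))
    (√(1 - ‖(c + p.1 * Complex.exp (p.2.1 * Complex.I) : ℂ)‖ ^ 2) * Complex.exp (p.2.2 * Complex.I))
  have hf : Continuous f := by
    refine continuous_mk4.comp (Continuous.prodMk ?_ ?_) <;> fun_prop
  have : AA c R = f '' D := by
    ext x
    constructor
    · rintro ⟨h1, h2, h3⟩
      have hs : ‖W x‖ = √(1 - ‖Z x‖ ^ 2) := by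
        rw [norm_one_iff] at h1
        rw [eq_comm, Real.sqrt_eq_iff_mul_self_eq] <;> nlinarith [norm_nonneg (W x)]
      have hz : (c + ‖Z x - c‖ * Complex.exp ((Z x - c).arg * Complex.I) : ℂ) = Z x := by
        rw [Complex.norm_mul_exp_arg_mul_I]; ring
      refine ⟨(‖Z x - c‖, (Z x - c).arg, (W x).arg), ⟨⟨?_, h3⟩, trivial, trivial⟩, ?_⟩
      · exact norm_pos_iff.2 (sub_ne_zero.2 h2)
      · simp only [f]
        rw [hz, ← hs, Complex.norm_mul_exp_arg_mul_I, mk4_ZW]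
    · rintro ⟨⟨r, θ, ψ⟩, ⟨⟨hr, hrR⟩, -, -⟩, rfl⟩
      have hr' : 0 < r := hr
      have hrR' : r < R := hrR
      have hn : ‖(r * Complex.exp (θ * Complex.I) : ℂ)‖ = r := by
        rw [norm_mul, Complex.norm_exp_ofReal_mul_I, mul_one, Complex.norm_real, Real.norm_of_nonneg hr'.le]
      have hle : ‖(c + r * Complex.exp (θ * Complex.I) : ℂ)‖ ≤ 1 := by
        refine (norm_add_le _ _).trans ?_
        rw [hn, Complex.norm_real, Real.norm_of_nonneg hc]; linarith
      refine ⟨?_, ?_, ?_⟩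
      · rw [norm_one_iff]
        simp only [f, Z_mk4, W_mk4]
        rw [norm_mul, Complex.norm_exp_ofReal_mul_I, mul_one, Complex.norm_real,
          Real.norm_of_nonneg (Real.sqrt_nonneg _), Real.sq_sqrt]
        · ring
        · nlinarith [norm_nonneg (c + r * Complex.exp (θ * Complex.I) : ℂ)]
      · simp only [f, Z_mk4]
        simp [hr'.ne', Complex.exp_ne_zero]
      · simp only [f, Z_mk4]
        rw [add_sub_cancel_left, hn]; exact hrR'
  rw [this]
  exact hD.image hf

end

section

/-- open shell around the separating sphere -/
def Slab : Set E := {x | ‖x‖ = 1 ∧ 1/8 < x 0 ∧ x 0 < 7/16}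

/-- clamp -/
def clampS (h : ℝ) : ℝ := max (1/8) (min h (7/16))

lemma clampS_mem (h : ℝ) : 1/8 ≤ clampS h ∧ clampS h ≤ 7/16 := by
  unfold clampS
  exact ⟨le_max_left _ _, max_le (by norm_num) (min_le_right _ _)⟩

lemma clampS_eq {h : ℝ} (h1 : 1/8 < h) (h2 : h < 7/16) : clampS h = h := by
  unfold clampS
  rw [min_eq_left h2.le, max_eq_right h1.le]

lemma clampS_cont : Continuous clampS := by unfold clampS; fun_prop

/-- stereographic parametrization of shell -/
def slabP (ε : ℝ) (p : ℝ × ℂ) : E :=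
  mk4 (⟨clampS p.1, ε * √(1 - clampS p.1 ^ 2) * ((‖p.2‖^2 - 1) / (‖p.2‖^2 + 1))⟩)
    ((2 * √(1 - clampS p.1 ^ 2) / (‖p.2‖^2 + 1) : ℝ) * p.2)

lemma slabP_cont (ε : ℝ) : Continuous (slabP ε) := by
  unfold slabP
  have h1 := clampS_cont
  have h0 : ∀ x : ℝ × ℂ, ‖x.2‖^2 + 1 ≠ 0 := fun x => by positivity
  have hre : Continuous (fun p : ℝ × ℂ =>
    ε * √(1 - clampS p.1 ^ 2) * ((‖p.2‖^2 - 1) / (‖p.2‖^2 + 1))) := by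
    fun_prop (disch := assumption)
  have hw : Continuous (fun p : ℝ × ℂ => (2 * √(1 - clampS p.1 ^ 2) / (‖p.2‖^2 + 1) : ℝ)) := by
    fun_prop (disch := assumption)
  refine continuous_mk4.comp (Continuous.prodMk ?_ ?_)
  · have : (fun p : ℝ × ℂ => (⟨clampS p.1, ε * √(1 - clampS p.1 ^ 2) * ((‖p.2‖^2 - 1) / (‖p.2‖^2 + 1))⟩ : ℂ))
      = fun p => ((clampS p.1 : ℝ) : ℂ) + ((ε * √(1 - clampS p.1 ^ 2) * ((‖p.2‖^2 - 1) / (‖p.2‖^2 + 1)) : ℝ) : ℂ) * Complex.I := by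
      ext p
      exact Complex.mk_eq_add_mul_I _ _
    rw [this]
    exact (Complex.continuous_ofReal.comp (h1.comp continuous_fst)).add
      ((Complex.continuous_ofReal.comp hre).mul continuous_const)
  · exact (Complex.continuous_ofReal.comp hw).mul continuous_snd

lemma slabP_norm {ε : ℝ} (hε : ε ^ 2 = 1) (p : ℝ × ℂ) : ‖slabP ε p‖ = 1 := by
  have h := clampS_mem p.1
  rw [norm_one_iff]
  simp only [slabP, Z_mk4, W_mk4]
  rw [norm_mul, Complex.norm_real, Complex.sq_norm, Complex.normSq_mk, mul_pow, Real.norm_eq_abs, sq_abs]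
  have hs : √(1 - clampS p.1 ^ 2) ^ 2 = 1 - clampS p.1 ^ 2 := Real.sq_sqrt (by nlinarith)
  generalize √(1 - clampS p.1 ^ 2) = r at *
  have hn : (‖p.2‖^2 + 1) ≠ 0 := by positivity
  field_simp
  have h2 : r ^ 2 + clampS p.1 ^ 2 = 1 := by linarith
  rw [hε]
  linear_combination (‖p.2‖^2 + 1)^2 * h2

lemma slabP_XX {ε : ℝ} (hε : ε ^ 2 = 1) (p : ℝ × ℂ) : slabP ε p ∈ XX := by
  have h := clampS_mem p.1
  refine ⟨slabP_norm hε p, fun h0 => ?_, fun h0 => ?_⟩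
  · have := congrArg Complex.re h0
    simp [slabP] at this; linarith [h.1]
  · have := congrArg Complex.re h0
    simp [slabP] at this; linarith [h.2]

/-- stereographic chart of shell -/
def slabC (ε : ℝ) (x : E) : ℝ × ℂ := (x 0, W x / ((√(1 - x 0 ^ 2) - ε * x 1 : ℝ) : ℂ))

lemma slab_r {x : E} (hx : x ∈ Slab) : 0 < √(1 - x 0 ^ 2) ∧
    √(1 - x 0 ^ 2) ^ 2 = x 1 ^ 2 + ‖W x‖ ^ 2 := by
  obtain ⟨h1, h2, h3⟩ := hx
  have : 0 < 1 - x 0 ^ 2 := by nlinarith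
  refine ⟨Real.sqrt_pos.2 this, ?_⟩
  rw [Real.sq_sqrt this.le]
  rw [norm_one_iff, Complex.sq_norm, Complex.normSq_apply] at h1
  simp at h1; linarith

lemma slabP_C {ε : ℝ} (hε : ε ^ 2 = 1) {x : E} (hx : x ∈ Slab) (h : √(1 - x 0 ^ 2) - ε * x 1 ≠ 0) :
    slabP ε (slabC ε x) = x := by
  obtain ⟨hr, hr2⟩ := slab_r hx
  have hc := clampS_eq hx.2.1 hx.2.2
  have hn : ‖(slabC ε x).2‖ ^ 2 * (√(1 - x 0 ^ 2) - ε * x 1) = √(1 - x 0 ^ 2) + ε * x 1 := by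
    simp only [slabC]
    rw [norm_div, Complex.norm_real, div_pow, Real.norm_eq_abs, sq_abs]
    field_simp
    linear_combination (-1 : ℝ) * hr2 + (x 1)^2 * hε
  have hc' : clampS (slabC ε x).1 = x 0 := hc
  have hw : ((√(1 - x 0 ^ 2) - ε * x 1 : ℝ) : ℂ) * (slabC ε x).2 = W x := by
    have : ((√(1 - x 0 ^ 2) - ε * x 1 : ℝ) : ℂ) ≠ 0 := by exact_mod_cast h
    simp only [slabC]
    field_simp
  have hpos : ‖(slabC ε x).2‖ ^ 2 + 1 ≠ 0 := by positivity
  apply E_ext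
  · simp only [slabP, Z_mk4, hc']
    generalize √(1 - x 0 ^ 2) = r at *
    generalize ‖(slabC ε x).2‖ ^ 2 = n at *
    apply Complex.ext
    · simp
    · simp
      rw [mul_div_assoc', div_eq_iff hpos]
      have h' := h
      apply mul_right_cancel₀ h
      linear_combination (ε * r - x 1) * hn + 2 * x 1 * r * hε
  · simp only [slabP, W_mk4, hc']
    rw [← hw]
    congr 2
    rw [div_eq_iff hpos]
    linear_combination -hn

lemma slabC_cont {ε : ℝ} : ContinuousOn (slabC ε) {x | √(1 - x 0 ^ 2) - ε * x 1 ≠ 0} := by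
  unfold slabC
  have h1 := continuous_W
  have h2 : Continuous (fun x : E => √(1 - x 0 ^ 2) - ε * x 1) := by fun_prop
  refine ContinuousOn.prodMk (by fun_prop) ?_
  refine ContinuousOn.div h1.continuousOn (Complex.continuous_ofReal.comp h2).continuousOn ?_
  intro x hx
  exact Complex.ofReal_ne_zero.2 hx

lemma slab_W_conn : IsPreconnected (Slab ∩ {x | W x ≠ 0}) := by
  have : Slab ∩ {x | W x ≠ 0} = slabP 1 '' (Ioo (1/8) (7/16) ×ˢ {0}ᶜ) := by
    ext x
    constructor
    · rintro ⟨hx, hw⟩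
      have hw : W x ≠ 0 := hw
      obtain ⟨hr, hr2⟩ := slab_r hx
      have hne : √(1 - x 0 ^ 2) - 1 * x 1 ≠ 0 := by
        intro h
        have : ‖W x‖ ^ 2 = 0 := by nlinarith
        simp at this; exact hw this
      refine ⟨slabC 1 x, ⟨⟨hx.2.1, hx.2.2⟩, ?_⟩, slabP_C (by norm_num) hx hne⟩
      simp only [slabC, mem_compl_iff, mem_singleton_iff]
      exact div_ne_zero hw (Complex.ofReal_ne_zero.2 hne)
    · rintro ⟨⟨h, u⟩, ⟨⟨h1, h2⟩, hu⟩, rfl⟩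
      simp only at h1 h2
      have hc := clampS_eq h1 h2
      refine ⟨⟨slabP_norm (by norm_num) _, ?_, ?_⟩, ?_⟩
      · simp [slabP, hc]; linarith
      · simp [slabP, hc]; linarith
      · simp only [mem_ofPred_eq, slabP, W_mk4, hc]
        have : 0 < √(1 - h ^ 2) := Real.sqrt_pos.2 (by nlinarith)
        refine mul_ne_zero (Complex.ofReal_ne_zero.2 ?_) hu
        positivity
  rw [this]
  refine IsPreconnected.image ?_ _ (slabP_cont 1).continuousOn
  refine isPreconnected_Ioo.prod ?_
  exact (isConnected_compl_singleton_of_one_lt_rank (by rw [Complex.rank_real_complex]; norm_num) (0:ℂ)).isPreconnected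

lemma slab_XX {x : E} (hx : x ∈ Slab) : x ∈ XX := by
  refine ⟨hx.1, fun h0 => ?_, fun h0 => ?_⟩
  · have := congrArg Complex.re h0
    simp at this; linarith [hx.2.1]
  · have := congrArg Complex.re h0
    simp at this; linarith [hx.2.2]

lemma slab_lift_half {g : E → ℂ} (hg : ContinuousOn g XX) (h1 : ∀ x ∈ XX, ‖g x‖ = 1) {ε : ℝ}
    (hε : ε ^ 2 = 1) : ∃ φ : E → ℝ, ContinuousOn φ (Slab ∩ {x | √(1 - x 0 ^ 2) - ε * x 1 ≠ 0}) ∧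
      ∀ x ∈ Slab ∩ {x | √(1 - x 0 ^ 2) - ε * x 1 ≠ 0}, g x = Complex.exp (φ x * Complex.I) := by
  have hc : Continuous (g ∘ slabP ε) := hg.comp_continuous (slabP_cont ε) (slabP_XX hε)
  have hn : ∀ a, ‖(g ∘ slabP ε) a‖ = 1 := fun a => h1 _ (slabP_XX hε a)
  obtain ⟨F, hF, -, hF2⟩ := lift_exists hc hn (0, 0) ((g ∘ slabP ε) (0,0)).arg (by
    have := Complex.norm_mul_exp_arg_mul_I ((g ∘ slabP ε) (0,0))
    rw [hn, Complex.ofReal_one, one_mul] at this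
    exact this.symm)
  refine ⟨F ∘ slabC ε, hF.comp_continuousOn (slabC_cont.mono inter_subset_right), fun x hx => ?_⟩
  have := hF2 (slabC ε x)
  simp only [Function.comp_apply] at this ⊢
  rw [← this, slabP_C hε hx.1 hx.2]

lemma slab_lift {g : E → ℂ} (hg : ContinuousOn g XX) (h1 : ∀ x ∈ XX, ‖g x‖ = 1) :
    ∃ φ : E → ℝ, ContinuousOn φ Slab ∧ ∀ x ∈ Slab, g x = Complex.exp (φ x * Complex.I) := by
  obtain ⟨φ₁, c₁, e₁⟩ := slab_lift_half hg h1 (ε := 1) (by norm_num)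
  obtain ⟨φ₂, c₂, e₂⟩ := slab_lift_half hg h1 (ε := -1) (by norm_num)
  have hW : ∀ x ∈ Slab ∩ {x | W x ≠ 0}, ∀ ε : ℝ, ε ^ 2 = 1 → √(1 - x 0 ^ 2) - ε * x 1 ≠ 0 := by
    rintro x ⟨hx, hw⟩ ε hε h
    have hw : W x ≠ 0 := hw
    obtain ⟨hr, hr2⟩ := slab_r hx
    have h' : √(1 - x 0 ^ 2) = ε * x 1 := by linarith
    rw [h', mul_pow, hε] at hr2
    have : ‖W x‖ ^ 2 = 0 := by linarith
    simp at this; exact hw this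
  have hq : ∃ q, q ∈ Slab ∩ {x | W x ≠ 0} := by
    refine ⟨mk4 (1/4) (√(15/16) : ℝ), ⟨?_, ?_, ?_⟩, ?_⟩
    · rw [norm_one_iff', mk4_0, mk4_1, mk4_2, mk4_3]
      simp
      rw [div_pow, Real.sq_sqrt (by norm_num), Real.sq_sqrt (by norm_num)]; norm_num
    · simp; norm_num
    · simp; norm_num
    · simp
  obtain ⟨q, hq⟩ := hq
  have hconst : ∀ x ∈ Slab ∩ {x | W x ≠ 0}, φ₁ x = φ₂ x + (φ₁ q - φ₂ q) := by
    intro x hx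
    have := lift_diff slab_W_conn (F := φ₁) (G := φ₂) (c₁.mono fun y hy => ⟨hy.1, hW y hy 1 (by norm_num)⟩)
      (c₂.mono fun y hy => ⟨hy.1, hW y hy (-1) (by norm_num)⟩)
      (fun y hy => by rw [← e₁ y ⟨hy.1, hW y hy 1 (by norm_num)⟩, ← e₂ y ⟨hy.1, hW y hy (-1) (by norm_num)⟩])
      hx hq
    linarith
  classical
  let N : Set E := {x | √(1 - x 0 ^ 2) - 1 * x 1 ≠ 0}
  let N' : Set E := {x | √(1 - x 0 ^ 2) - (-1) * x 1 ≠ 0}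
  have hN : IsOpen N := isOpen_ne_fun (by fun_prop) (by fun_prop)
  have hN' : IsOpen N' := isOpen_ne_fun (by fun_prop) (by fun_prop)
  have hW' : ∀ x ∈ Slab, x ∈ N → x ∈ N' → W x ≠ 0 := by
    intro x hx h1 h2 h0
    obtain ⟨hr, hr2⟩ := slab_r hx
    rw [h0] at hr2
    simp only [norm_zero] at hr2
    have : (√(1 - x 0 ^ 2) - 1 * x 1) * (√(1 - x 0 ^ 2) - (-1) * x 1) = 0 := by linear_combination hr2
    rcases mul_eq_zero.1 this with h | h
    · exact h1 h
    · exact h2 h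
  have hNN : ∀ x ∈ Slab, x ∈ N ∨ x ∈ N' := by
    intro x hx
    by_contra! h
    obtain ⟨hr, hr2⟩ := slab_r hx
    have h1 : √(1 - x 0 ^ 2) - 1 * x 1 = 0 := by simpa [N] using h.1
    have h2 : √(1 - x 0 ^ 2) - (-1) * x 1 = 0 := by simpa [N'] using h.2
    linarith
  let φ : E → ℝ := fun x => if x ∈ N then φ₁ x else φ₂ x + (φ₁ q - φ₂ q)
  have hφ1 : ∀ x ∈ N, φ x = φ₁ x := fun x hx => by simp [φ, hx]
  have hφ2 : ∀ x ∈ Slab, x ∈ N' → φ x = φ₂ x + (φ₁ q - φ₂ q) := fun x hs hx => by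
    by_cases h : x ∈ N
    · rw [hφ1 x h, hconst x ⟨hs, hW' x hs h hx⟩]
    · simp [φ, h]
  refine ⟨φ, fun x hx => ?_, fun x hx => ?_⟩
  · rcases hNN x hx with h | h
    · have : ContinuousWithinAt φ (Slab ∩ N) x := (c₁ x ⟨hx, h⟩).congr (fun y hy => hφ1 y hy.2) (hφ1 x h)
      exact (continuousWithinAt_inter (hN.mem_nhds h)).1 this
    · have : ContinuousWithinAt φ (Slab ∩ N') x :=
        ((c₂ x ⟨hx, h⟩).add continuousWithinAt_const).congr (fun y hy => hφ2 y hy.1 hy.2) (hφ2 x hx h)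
      exact (continuousWithinAt_inter (hN'.mem_nhds h)).1 this
  · by_cases h : x ∈ N
    · rw [hφ1 x h]; exact e₁ x ⟨hx, h⟩
    · have h' := (hNN x hx).resolve_left h
      rw [hφ2 x hx h', e₂ x ⟨hx, h'⟩]
      have := e₁ q ⟨hq.1, hW q hq 1 (by norm_num)⟩
      rw [e₂ q ⟨hq.1, hW q hq (-1) (by norm_num)⟩] at this
      obtain ⟨k, hk⟩ := exp_eq_exp this
      have e : φ₁ q - φ₂ q = ((-k : ℤ) : ℝ) * (2 * π) := by push_cast; linarith
      rw [e, Complex.ofReal_add, add_mul, Complex.exp_add, exp_eq_one', mul_one]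

end

section

/-- ramp function -/
def ramp (h : ℝ) : ℝ := max 0 (min 1 (8 * h - 2))

lemma ramp_cont : Continuous ramp := by unfold ramp; fun_prop

lemma ramp_zero {h : ℝ} (hh : h ≤ 1/4) : ramp h = 0 := by
  unfold ramp
  exact max_eq_left ((min_le_right _ _).trans (by linarith))

lemma ramp_one {h : ℝ} (hh : 3/8 ≤ h) : ramp h = 1 := by
  unfold ramp
  rw [min_eq_left (by linarith), max_eq_right zero_le_one]

/-- infinite cyclic cover of the complement -/
def XT (g : E → ℂ) : Set (E × ℝ) := {p | p.1 ∈ XX ∧ g p.1 = Complex.exp (p.2 * Complex.I)}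

open Classical in
/-- circle valued function dual to a lift of the sphere -/
def cc (φ : E → ℝ) (p : E × ℝ) : ℂ :=
  if p.1 ∈ Slab ∧ |p.2 - φ p.1| < π then Complex.exp ((2 * π * ramp (p.1 0) : ℝ) * Complex.I) else 1

lemma cc_norm (φ : E → ℝ) (p : E × ℝ) : ‖cc φ p‖ = 1 := by
  unfold cc
  split_ifs
  · exact Complex.norm_exp_ofReal_mul_I _
  · simp

lemma cc_one_of {φ : E → ℝ} {p : E × ℝ} (h : p.1 0 ≤ 1/4 ∨ 3/8 ≤ p.1 0) : cc φ p = 1 := by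
  unfold cc
  split_ifs
  · rcases h with h | h
    · rw [ramp_zero h]; simp
    · rw [ramp_one h]
      have := exp_eq_one' 1
      convert this using 3
      push_cast; ring
  · rfl

lemma cc_one_far {φ : E → ℝ} {p : E × ℝ} (h : π ≤ |p.2 - φ p.1|) : cc φ p = 1 := by
  unfold cc
  rw [if_neg]
  rintro ⟨-, h'⟩
  linarith

variable {g : E → ℂ} {φ : E → ℝ} (hg : ContinuousOn g XX) (h1 : ∀ x ∈ XX, ‖g x‖ = 1)
  (hφ : ContinuousOn φ Slab) (hφe : ∀ x ∈ Slab, g x = Complex.exp (φ x * Complex.I))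

include hφ hφe in
lemma cc_cont : ContinuousOn (cc φ) (XT g) := by
  rintro ⟨x, s⟩ ⟨hx, hxs⟩
  simp only at hx hxs
  have hc0 : Continuous (fun p : E × ℝ => p.1 0) := by fun_prop
  by_cases hS : x ∈ Slab
  · have hO : ∀ᶠ p : E × ℝ in nhdsWithin (x, s) (XT g), p.1 ∈ Slab := by
      have h1 : ∀ᶠ p : E × ℝ in nhds (x, s), 1/8 < p.1 0 ∧ p.1 0 < 7/16 :=
        ((isOpen_Ioo (a := (1/8:ℝ)) (b := 7/16)).preimage hc0).mem_nhds hS.2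
      filter_upwards [mem_nhdsWithin_of_mem_nhds h1, self_mem_nhdsWithin] with p hp hp'
      exact ⟨hp'.1.1, hp.1, hp.2⟩
    have hd : ContinuousWithinAt (fun p : E × ℝ => |p.2 - φ p.1|) (XT g) (x, s) := by
      have : ContinuousWithinAt (fun p : E × ℝ => φ p.1) (XT g) (x, s) := by
        have h2 : ContinuousWithinAt (fun p : E × ℝ => φ p.1) (XT g ∩ {p | p.1 ∈ Slab}) (x, s) :=
          ContinuousWithinAt.comp (t := Slab) (f := Prod.fst) (hφ x hS) continuous_fst.continuousWithinAt
            (fun p hp => hp.2)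
        exact h2.mono_of_mem_nhdsWithin (Filter.inter_mem self_mem_nhdsWithin hO)
      exact (continuous_snd.continuousWithinAt.sub this).abs
    rcases lt_or_ge |s - φ x| π with h | h
    · have he : cc φ =ᶠ[nhdsWithin (x, s) (XT g)]
          fun p => Complex.exp ((2 * π * ramp (p.1 0) : ℝ) * Complex.I) := by
        filter_upwards [hO, hd.eventually (gt_mem_nhds h)] with p hp hp'
        unfold cc
        rw [if_pos ⟨hp, hp'⟩]
      refine ContinuousWithinAt.congr_of_eventuallyEq ?_ he ?_
      · have := ramp_cont
        apply Continuous.continuousWithinAt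
        fun_prop
      · unfold cc
        rw [if_pos ⟨hS, h⟩]
    · have h2 : π < |s - φ x| := by
        rw [hφe x hS] at hxs
        obtain ⟨k, hk⟩ := exp_eq_exp hxs
        have hpi := Real.pi_pos
        have hk' : s - φ x = (-k : ℤ) * (2 * π) := by push_cast; linarith
        rw [hk'] at h ⊢
        rw [abs_mul, abs_of_pos (by positivity : 0 < 2 * π)] at h ⊢
        have hk0 : (-k) ≠ 0 := by
          intro h0; rw [h0] at h; simp at h; linarith
        have : (1:ℝ) ≤ |((-k : ℤ) : ℝ)| := by exact_mod_cast Int.one_le_abs hk0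
        nlinarith
      have he : cc φ =ᶠ[nhdsWithin (x, s) (XT g)] fun p => 1 := by
        filter_upwards [hd.eventually (lt_mem_nhds h2)] with p hp'
        exact cc_one_far hp'.le
      exact ContinuousWithinAt.congr_of_eventuallyEq continuousWithinAt_const he (cc_one_far h2.le)
  · have h2 : x 0 < 1/4 ∨ 3/8 < x 0 := by
      by_contra! h
      exact hS ⟨hx.1, by linarith, by linarith⟩
    have h3 : ∀ᶠ p : E × ℝ in nhds (x, s), p.1 0 < 1/4 ∨ 3/8 < p.1 0 := by
      rcases h2 with h | h
      · filter_upwards [(isOpen_Iio.preimage hc0).mem_nhds (show (x, s) ∈ _ from h)] with p hp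
        exact Or.inl hp
      · filter_upwards [(isOpen_Ioi.preimage hc0).mem_nhds (show (x, s) ∈ _ from h)] with p hp
        exact Or.inr hp
    have he : cc φ =ᶠ[nhdsWithin (x, s) (XT g)] fun p => 1 := by
      filter_upwards [mem_nhdsWithin_of_mem_nhds h3] with p hp
      exact cc_one_of (hp.imp le_of_lt le_of_lt)
    exact ContinuousWithinAt.congr_of_eventuallyEq continuousWithinAt_const he
      (cc_one_of (h2.imp le_of_lt le_of_lt))

/-- the covering space -/
def YY (g : E → ℂ) (φ : E → ℝ) : Set (E × ℝ × ℝ) :=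
  {y | (y.1, y.2.1) ∈ XT g ∧ Complex.exp ((2 * π * y.2.2 : ℝ) * Complex.I) = cc φ (y.1, y.2.1)}

lemma YY_int {x : E} {s : ℝ} (h : (x, s) ∈ XT g) (hc : cc φ (x, s) = 1) (k : ℤ) :
    (x, s, (k : ℝ)) ∈ YY g φ := by
  refine ⟨h, ?_⟩
  simp only [hc]
  have := exp_eq_one' k
  convert this using 3
  push_cast; ring

lemma XT_add {x : E} {s : ℝ} (h : (x, s) ∈ XT g) : (x, s + 2 * π) ∈ XT g := by
  refine ⟨h.1, ?_⟩
  rw [h.2]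
  simp only
  push_cast
  rw [add_mul, Complex.exp_add, Complex.exp_two_pi_mul_I, mul_one]

include hg h1 in
lemma arc_annulus {A : Set E} (hA : IsPathConnected A) (hAX : A ⊆ XX)
    (hA1 : ∀ x ∈ A, x 0 ≤ 1/4 ∨ 3/8 ≤ x 0) {η : ℝ → E} (hη : Continuous η) (hηA : ∀ θ, η θ ∈ A)
    (hηg : ∀ θ : ℝ, g (η θ) = g (η 0) * Complex.exp (θ * Complex.I)) (hη2 : η (2 * π) = η 0)
    {q : E} (hq : q ∈ A) {s : ℝ} (hs : g q = Complex.exp (s * Complex.I)) (k : ℤ) :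
    JoinedIn (YY g φ) (q, s, (k:ℝ)) (q, s + 2 * π, (k:ℝ)) := by
  obtain ⟨p, hp⟩ := hA.joinedIn q hq (η 0) (hηA 0)
  have hpe : ∀ t, p.extend t ∈ A := fun t => by
    rw [← mem_preimage]
    have : range p.extend ⊆ A := by rw [Path.extend_range]; rintro _ ⟨t, rfl⟩; exact hp t
    exact this ⟨t, rfl⟩
  have hcont : Continuous (g ∘ p.extend) := hg.comp_continuous p.continuous_extend (fun t => hAX (hpe t))
  obtain ⟨F, hF, hF0, hFe⟩ := lift_exists hcont (fun t => h1 _ (hAX (hpe t))) 0 s (by simpa using hs)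
  have hXT : ∀ t, (p.extend t, F t) ∈ XT g := fun t => ⟨hAX (hpe t), hFe t⟩
  have j1 : JoinedIn (YY g φ) (q, s, (k:ℝ)) (η 0, F 1, (k:ℝ)) := by
    refine JoinedIn.ofLine (f := fun t => (p.extend t, F t, (k:ℝ))) ?_ (by simp [hF0]) (by simp) ?_
    · exact (p.continuous_extend.prodMk (hF.prodMk continuous_const)).continuousOn
    · rintro _ ⟨t, -, rfl⟩
      exact YY_int (hXT t) (cc_one_of (hA1 _ (hpe t))) k
  have j2 : JoinedIn (YY g φ) (q, s + 2 * π, (k:ℝ)) (η 0, F 1 + 2 * π, (k:ℝ)) := by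
    refine JoinedIn.ofLine (f := fun t => (p.extend t, F t + 2 * π, (k:ℝ))) ?_ (by simp [hF0]) (by simp) ?_
    · exact (p.continuous_extend.prodMk ((hF.add continuous_const).prodMk continuous_const)).continuousOn
    · rintro _ ⟨t, -, rfl⟩
      exact YY_int (XT_add (hXT t)) (cc_one_of (hA1 _ (hpe t))) k
  have j3 : JoinedIn (YY g φ) (η 0, F 1, (k:ℝ)) (η 0, F 1 + 2 * π, (k:ℝ)) := by
    refine JoinedIn.ofLine (f := fun t => (η (2 * π * t), F 1 + 2 * π * t, (k:ℝ))) ?_ (by simp) (by simp [hη2]) ?_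
    · apply Continuous.continuousOn
      fun_prop
    · rintro _ ⟨t, -, rfl⟩
      refine YY_int ⟨hAX (hηA _), ?_⟩ (cc_one_of (hA1 _ (hηA _))) k
      simp only
      rw [hηg]
      have := hFe 1
      simp only [Function.comp_apply, Path.extend_one] at this
      rw [this, ← Complex.exp_add]
      push_cast
      ring_nf
  exact (j1.trans j3).trans j2.symm

/-- arc crossing the sphere -/
def qarc (h : ℝ) : E := mk4 h (√(1 - h ^ 2) : ℝ)

lemma qarc_cont : Continuous qarc := by
  unfold qarc
  refine continuous_mk4.comp (Continuous.prodMk Complex.continuous_ofReal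
    (Complex.continuous_ofReal.comp ?_))
  fun_prop

lemma qarc_slab {h : ℝ} (h1 : 1/8 < h) (h2 : h < 7/16) : qarc h ∈ Slab := by
  refine ⟨?_, by simpa [qarc] using h1, by simpa [qarc] using h2⟩
  rw [norm_one_iff', qarc, mk4_0, mk4_1, mk4_2, mk4_3]
  simp only [Complex.ofReal_re, Complex.ofReal_im]
  rw [Real.sq_sqrt (by nlinarith)]; ring

include hg h1 hφ hφe in
lemma big_loop {η₁ η₂ : ℝ → E} (hη₁ : Continuous η₁) (hη₁A : ∀ θ, η₁ θ ∈ AA 0 (1/4))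
    (hη₁g : ∀ θ : ℝ, g (η₁ θ) = g (η₁ 0) * Complex.exp (θ * Complex.I)) (hη₁2 : η₁ (2 * π) = η₁ 0)
    (hη₂ : Continuous η₂) (hη₂A : ∀ θ, η₂ θ ∈ AA (1/2) (1/8))
    (hη₂g : ∀ θ : ℝ, g (η₂ θ) = g (η₂ 0) * Complex.exp (θ * Complex.I)) (hη₂2 : η₂ (2 * π) = η₂ 0) :
    JoinedIn (YY g φ) (qarc (1/5), φ (qarc (1/5)), 0) (qarc (1/5), φ (qarc (1/5)), 1) := by
  have hline : ∀ t ∈ Icc (0:ℝ) 1, qarc (1/5 + t * (1/5)) ∈ Slab := by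
    intro t ht
    exact qarc_slab (by linarith [ht.1]) (by linarith [ht.2])
  have hcl : Continuous (fun t : ℝ => qarc (1/5 + t * (1/5))) := qarc_cont.comp (by fun_prop)
  have hφl : ContinuousOn (fun t : ℝ => φ (qarc (1/5 + t * (1/5)))) (Icc 0 1) :=
    hφ.comp hcl.continuousOn hline
  have hXT : ∀ t ∈ Icc (0:ℝ) 1, (qarc (1/5 + t * (1/5)), φ (qarc (1/5 + t * (1/5)))) ∈ XT g :=
    fun t ht => ⟨slab_XX (hline t ht), hφe _ (hline t ht)⟩
  have e1 : (1/5 + (1:ℝ) * (1/5)) = 2/5 := by norm_num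
  have ha : JoinedIn (YY g φ) (qarc (1/5), φ (qarc (1/5)), 0) (qarc (2/5), φ (qarc (2/5)), ((1:ℤ):ℝ)) := by
    refine JoinedIn.ofLine (f := fun t => (qarc (1/5 + t * (1/5)), φ (qarc (1/5 + t * (1/5))), ramp (1/5 + t * (1/5))))
      ?_ ?_ ?_ ?_
    · refine hcl.continuousOn.prodMk (hφl.prodMk ?_)
      exact (ramp_cont.comp (by fun_prop)).continuousOn
    · simp only [zero_mul, add_zero]
      rw [ramp_zero (by norm_num)]
    · simp only [e1]
      rw [ramp_one (by norm_num)]; simp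
    · rintro _ ⟨t, ht, rfl⟩
      refine ⟨hXT t ht, ?_⟩
      unfold cc
      rw [if_pos ⟨hline t ht, by simp [Real.pi_pos]⟩]
      simp [qarc]
  have hb : JoinedIn (YY g φ) (qarc (1/5), φ (qarc (1/5)) + 2 * π, ((1:ℤ):ℝ))
      (qarc (2/5), φ (qarc (2/5)) + 2 * π, ((1:ℤ):ℝ)) := by
    refine JoinedIn.ofLine (f := fun t => (qarc (1/5 + t * (1/5)), φ (qarc (1/5 + t * (1/5))) + 2 * π, ((1:ℤ):ℝ)))
      ?_ ?_ ?_ ?_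
    · exact hcl.continuousOn.prodMk ((hφl.add continuousOn_const).prodMk continuousOn_const)
    · simp
    · simp only [e1]
    · rintro _ ⟨t, ht, rfl⟩
      refine YY_int (XT_add (hXT t ht)) (cc_one_far ?_) 1
      have := Real.pi_pos
      simp only [add_sub_cancel_left]
      rw [abs_of_pos (by positivity)]; linarith
  have hre : ∀ {c R : ℝ} {x : E}, x ∈ AA c R → |x 0 - c| < R := by
    intro c R x hx
    refine lt_of_le_of_lt ?_ hx.2.2
    have := Complex.abs_re_le_norm (Z x - c)
    simpa using this
  have hA1 : AA 0 (1/4) ⊆ XX := by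
    intro x hx
    refine ⟨hx.1, by simpa using hx.2.1, fun h => ?_⟩
    have := abs_lt.1 (hre hx)
    have h' := congrArg Complex.re h
    simp at h'; linarith [this.2]
  have hA2 : AA (1/2) (1/8) ⊆ XX := by
    intro x hx
    refine ⟨hx.1, fun h => ?_, by simpa using hx.2.1⟩
    have := abs_lt.1 (hre hx)
    have h' := congrArg Complex.re h
    simp at h'; linarith [this.1]
  have hc := arc_annulus (φ := φ) hg h1 (AA_path (c := 1/2) (R := 1/8) (by norm_num) (by norm_num) (by norm_num)) hA2
    (fun x hx => Or.inr (by have := abs_lt.1 (hre hx); linarith [this.1])) hη₂ hη₂A hη₂g hη₂2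
    (q := qarc (2/5)) (s := φ (qarc (2/5))) (by
      have := qarc_slab (h := 2/5) (by norm_num) (by norm_num)
      refine ⟨this.1, ?_, ?_⟩
      · intro h
        have := congrArg Complex.re h
        simp [qarc] at this
        norm_num at this
      · have : Z (qarc (2/5)) - (1/2 : ℝ) = ((-1/10 : ℝ) : ℂ) := by
          simp [qarc]; norm_num
        rw [this, Complex.norm_real, Real.norm_eq_abs, abs_lt]; constructor <;> norm_num)
    (by have := (hXT 1 (by simp)).2; simpa only [e1] using this) 1
  have hd := arc_annulus (φ := φ) hg h1 (AA_path (c := 0) (R := 1/4) (by norm_num) (by norm_num) (by norm_num)) hA1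
    (fun x hx => Or.inl (by have := abs_lt.1 (hre hx); linarith [this.2])) hη₁ hη₁A hη₁g hη₁2
    (q := qarc (1/5)) (s := φ (qarc (1/5))) (by
      have := qarc_slab (h := 1/5) (by norm_num) (by norm_num)
      refine ⟨this.1, ?_, ?_⟩
      · intro h
        have := congrArg Complex.re h
        simp [qarc] at this
      · have : Z (qarc (1/5)) - (0 : ℝ) = ((1/5 : ℝ) : ℂ) := by
          simp [qarc]
        rw [this, Complex.norm_real, Real.norm_eq_abs, abs_lt]; constructor <;> norm_num)
    (by have := (hXT 0 (by simp)).2; simpa only [zero_mul, add_zero] using this) 1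
  have := ((ha.trans hc).trans hb.symm).trans hd.symm
  simpa using this

end

section

variable {g : E → ℂ} {φ : E → ℝ} (hg : ContinuousOn g XX) (h1 : ∀ x ∈ XX, ‖g x‖ = 1)
  (hφ : ContinuousOn φ Slab) (hφe : ∀ x ∈ Slab, g x = Complex.exp (φ x * Complex.I))

lemma exp_arg_div {a b : ℂ} (ha : ‖a‖ = 1) (hb : ‖b‖ = 1) {s : ℝ} (h : b = Complex.exp (s * Complex.I)) :
    Complex.exp (((s + (a / b).arg : ℝ) : ℂ) * Complex.I) = a := by
  have hb0 : b ≠ 0 := by intro h0; rw [h0] at hb; simp at hb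
  have := Complex.norm_mul_exp_arg_mul_I (a / b)
  rw [norm_div, ha, hb, div_one, Complex.ofReal_one, one_mul] at this
  push_cast
  rw [add_mul, Complex.exp_add, ← h, this]
  field_simp

lemma arg_lt_of_re {z : ℂ} (h : 0 < z.re) : |z.arg| < π / 2 := Complex.abs_arg_lt_pi_div_two_iff.2 (Or.inl h)

lemma XX_open {x : E} (hx : x ∈ XX) : ∃ O ∈ nhds x, ∀ y ∈ O, ‖y‖ = 1 → y ∈ XX := by
  refine ⟨{y | Z y ≠ 0 ∧ Z y ≠ 1/2}, IsOpen.mem_nhds ?_ hx.2, fun y hy h => ⟨h, hy⟩⟩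
  exact (isOpen_ne_fun continuous_Z continuous_const).inter (isOpen_ne_fun continuous_Z continuous_const)

lemma cap_anti {x₀ : E} {κ κ' : ℝ} (h : κ ≤ κ') : Cap x₀ κ' ⊆ Cap x₀ κ :=
  fun _ hx => ⟨hx.1, h.trans_lt hx.2⟩

lemma cap_self {x₀ : E} (hx : ‖x₀‖ = 1) {κ : ℝ} (h : κ < 1) : x₀ ∈ Cap x₀ κ :=
  ⟨hx, by simp [hx, h]⟩

/-- a within-sphere neighbourhood contains a cap -/
lemma cap_within {x₀ : E} (hx : ‖x₀‖ = 1) {κ : ℝ} (hκ : 0 ≤ κ) (hκ1 : κ < 1) {P : E → Prop}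
    (h : ∀ᶠ x in nhdsWithin x₀ (Cap x₀ κ), P x) :
    ∃ κ', κ ≤ κ' ∧ κ' < 1 ∧ ∀ x ∈ Cap x₀ κ', P x := by
  obtain ⟨O, hO, hO'⟩ := mem_nhdsWithin_iff_exists_mem_nhds_inter.1 h
  obtain ⟨κ₁, h0, h1, hs⟩ := cap_basis hx hO
  refine ⟨max κ κ₁, le_max_left _ _, max_lt hκ1 h1, fun x hx => hO' ⟨hs ?_, ?_⟩⟩
  · exact cap_anti (le_max_right _ _) hx
  · exact cap_anti (le_max_left _ _) hx

include hg h1 hφ hφe in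
lemma local_section {y : E × ℝ × ℝ} (hy : y ∈ YY g φ) :
    ∃ κ : ℝ, 0 ≤ κ ∧ κ < 1 ∧ ∃ σ : E → E × ℝ × ℝ, ContinuousOn σ (Cap y.1 κ) ∧ σ y.1 = y ∧
      (∀ x ∈ Cap y.1 κ, σ x ∈ YY g φ ∧ (σ x).1 = x) ∧
      ∃ N ∈ nhds y, ∀ z ∈ N ∩ YY g φ, z.1 ∈ Cap y.1 κ ∧ σ z.1 = z := by
  obtain ⟨x₀, s₀, γ₀⟩ := y
  obtain ⟨⟨hx, hs⟩, hγ⟩ := hy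
  simp only at hx hs hγ
  have hn := hx.1
  obtain ⟨O, hO, hOX⟩ := XX_open hx
  obtain ⟨κ₀, hκ₀, hκ₀1, hc₀⟩ := cap_basis hn hO
  have hCX : Cap x₀ κ₀ ⊆ XX := fun x hx' => hOX x (hc₀ hx') hx'.1
  have hgx := h1 x₀ hx
  have hgx0 : g x₀ ≠ 0 := by intro h0; rw [h0] at hgx; simp at hgx
  have hq : ContinuousOn (fun x => g x / g x₀) (Cap x₀ κ₀) := (hg.mono hCX).div_const _
  obtain ⟨κ₁, h01, hκ₁, hre⟩ := cap_within hn hκ₀ hκ₀1 (P := fun x => 0 < (g x / g x₀).re) (by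
    have := (hq x₀ (cap_self hn hκ₀1))
    have h2 := Complex.continuous_re.continuousAt.comp_continuousWithinAt this
    refine h2.eventually (lt_mem_nhds ?_)
    simp [hgx0])
  let s : E → ℝ := fun x => s₀ + (g x / g x₀).arg
  have hsx : s x₀ = s₀ := by simp [s, hgx0]
  have hsc : ContinuousOn s (Cap x₀ κ₁) := by
    refine continuousOn_const.add (fun x hx' => ?_)
    have : ContinuousAt Complex.arg (g x / g x₀) := Complex.continuousAt_arg (Or.inl (hre x hx'))
    exact ContinuousAt.comp_continuousWithinAt (f := fun x => g x / g x₀) this ((hq x (cap_anti h01 hx')).mono (cap_anti h01))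
  have hsXT : ∀ x ∈ Cap x₀ κ₁, (x, s x) ∈ XT g := fun x hx' =>
    ⟨hCX (cap_anti h01 hx'), (exp_arg_div (h1 x (hCX (cap_anti h01 hx'))) hgx hs).symm⟩
  have hcc : ContinuousOn (fun x => cc φ (x, s x) / cc φ (x₀, s₀)) (Cap x₀ κ₁) := by
    refine ContinuousOn.div_const ?_ _
    exact (cc_cont hφ hφe).comp (continuousOn_id.prodMk hsc) hsXT
  have hc0 : cc φ (x₀, s₀) ≠ 0 := by
    intro h0; have := cc_norm φ (x₀, s₀); rw [h0] at this; simp at this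
  obtain ⟨κ₂, h12, hκ₂, hre2⟩ := cap_within hn (hκ₀.trans h01) hκ₁
    (P := fun x => 0 < (cc φ (x, s x) / cc φ (x₀, s₀)).re) (by
    have := (hcc x₀ (cap_self hn hκ₁))
    have h2 := Complex.continuous_re.continuousAt.comp_continuousWithinAt this
    refine h2.eventually (lt_mem_nhds ?_)
    simp [hsx, hc0])
  have hpi := Real.pi_pos
  let γ : E → ℝ := fun x => γ₀ + (cc φ (x, s x) / cc φ (x₀, s₀)).arg / (2 * π)
  have hγx : γ x₀ = γ₀ := by simp [γ, hsx, hc0]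
  have hγc : ContinuousOn γ (Cap x₀ κ₂) := by
    refine continuousOn_const.add (ContinuousOn.div_const (fun x hx' => ?_) _)
    have : ContinuousAt Complex.arg (cc φ (x, s x) / cc φ (x₀, s₀)) :=
      Complex.continuousAt_arg (Or.inl (hre2 x hx'))
    exact ContinuousAt.comp_continuousWithinAt (f := fun x => cc φ (x, s x) / cc φ (x₀, s₀)) this
      ((hcc x (cap_anti h12 hx')).mono (cap_anti h12))
  have hγe : ∀ x, Complex.exp ((2 * π * γ x : ℝ) * Complex.I) = cc φ (x, s x) := by
    intro x
    have := exp_arg_div (cc_norm φ (x, s x)) (cc_norm φ (x₀, s₀)) hγ.symm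
    rw [← this]
    congr 3
    simp only [γ]
    field_simp
  refine ⟨κ₂, (hκ₀.trans h01).trans h12, hκ₂, fun x => (x, s x, γ x),
    continuousOn_id.prodMk ((hsc.mono (cap_anti h12)).prodMk hγc), ?_, ?_, ?_⟩
  · simp [hsx, hγx]
  · intro x hx'
    exact ⟨⟨hsXT x (cap_anti h12 hx'), hγe x⟩, rfl⟩
  · have c1 : Continuous (fun z : E × ℝ × ℝ => inner ℝ z.1 x₀) := by fun_prop
    have c2 : Continuous (fun z : E × ℝ × ℝ => |z.2.1 - s₀|) := by fun_prop
    have c3 : Continuous (fun z : E × ℝ × ℝ => |z.2.2 - γ₀|) := by fun_prop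
    refine ⟨{z | κ₂ < inner ℝ z.1 x₀ ∧ |z.2.1 - s₀| < π / 2 ∧ |z.2.2 - γ₀| < 1 / 4}, ?_, ?_⟩
    · refine IsOpen.mem_nhds ((isOpen_lt continuous_const c1).inter
        ((isOpen_lt c2 continuous_const).inter (isOpen_lt c3 continuous_const))) ?_
      exact ⟨by simp [hn, hκ₂], by simp [hpi], by simp⟩
    · rintro ⟨x, t, δ⟩ ⟨⟨z1, z2, z3⟩, ⟨hzx, hzs⟩, hzγ⟩
      simp only at z1 z2 z3 hzx hzs hzγ
      have hcap : x ∈ Cap x₀ κ₂ := ⟨hzx.1, z1⟩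
      have hst : t = s x := by
        have e := (hsXT x (cap_anti h12 hcap)).2
        rw [hzs] at e
        obtain ⟨k, hk⟩ := exp_eq_exp e
        have a1 := abs_lt.1 (arg_lt_of_re (hre x (cap_anti h12 hcap)))
        have a2 := abs_lt.1 z2
        simp only [s] at hk
        have hk0 : k = 0 := by
          have b1 : (k : ℝ) < 1 := by nlinarith
          have b2 : (-1 : ℝ) < k := by nlinarith
          have b1' : k < 1 := by exact_mod_cast b1
          have b2' : -1 < k := by exact_mod_cast b2
          omega
        rw [hk, hk0]; simp [s]
      subst hst
      refine ⟨hcap, ?_⟩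
      have : δ = γ x := by
        have e := hγe x
        rw [← hzγ] at e
        obtain ⟨k, hk⟩ := exp_eq_exp e
        have hk' : γ x = δ + k := by
          have : 2 * π * (γ x - δ - k) = 0 := by linear_combination hk
          have := (mul_eq_zero.1 this).resolve_left (by positivity)
          linarith
        have a1 := abs_lt.1 (arg_lt_of_re (hre2 x hcap))
        have a2 := abs_lt.1 z3
        have a3 : |γ x - γ₀| < 1/4 := by
          simp only [γ, add_sub_cancel_left]
          rw [abs_div, abs_of_pos (by positivity : 0 < 2 * π), div_lt_iff₀ (by positivity), abs_lt]
          constructor <;> linarith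
        have a3 := abs_lt.1 a3
        have hk0 : k = 0 := by
          have b1 : (k : ℝ) < 1 := by linarith
          have b2 : (-1 : ℝ) < k := by linarith
          have b1' : k < 1 := by exact_mod_cast b1
          have b2' : -1 < k := by exact_mod_cast b2
          omega
        rw [hk', hk0]; simp
      rw [this]

lemma joinedIn_sub {X : Type*} [TopologicalSpace X] {Y G : Set X} {a b : X} (h : JoinedIn G a b)
    (hGY : G ⊆ Y) (ha : a ∈ Y) (hb : b ∈ Y) :
    JoinedIn ({y : Y | (y : X) ∈ G}) (⟨a, ha⟩ : Y) ⟨b, hb⟩ := by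
  obtain ⟨p, hp⟩ := h
  refine ⟨⟨⟨fun t => ⟨p t, hGY (hp t)⟩, by fun_prop⟩, ?_, ?_⟩, ?_⟩
  · simp
  · simp
  · intro t; exact hp t

lemma joinedIn_unsub {X : Type*} [TopologicalSpace X] {Y G : Set X} {a b : Y}
    (h : JoinedIn ({y : Y | (y : X) ∈ G}) a b) : JoinedIn G (a : X) b := by
  obtain ⟨p, hp⟩ := h
  exact ⟨p.map continuous_subtype_val, fun t => hp t⟩

lemma joinedIn_image {X Y : Type*} [TopologicalSpace X] [TopologicalSpace Y] {G : Set X} {a b : X}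
    (h : JoinedIn G a b) {f : X → Y} (hf : ContinuousOn f G) : JoinedIn (f '' G) (f a) (f b) := by
  obtain ⟨p, hp⟩ := h
  refine ⟨⟨⟨fun t => f (p t), hf.comp_continuous p.continuous hp⟩, ?_, ?_⟩, ?_⟩
  · simp
  · simp
  · intro t; exact ⟨_, hp t, rfl⟩

lemma avoid_path_set {X : Type*} [TopologicalSpace X] {Y G : Set X} (hGY : G ⊆ Y)
    (hd : ∀ y ∈ Y, ∀ O ∈ nhds y, (O ∩ G).Nonempty)
    (hl : ∀ y ∈ Y, ∃ N ∈ nhds y, ∀ a ∈ N ∩ G, ∀ b ∈ N ∩ G, JoinedIn G a b) {a b : X}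
    (ha : a ∈ G) (hb : b ∈ G) (hab : JoinedIn Y a b) : JoinedIn G a b := by
  have := avoid_path (Y := Y) ({y : Y | (y : X) ∈ G}) ?_ ?_
    (a := ⟨a, hGY ha⟩) (b := ⟨b, hGY hb⟩) ha hb ?_
  · exact joinedIn_unsub this
  · intro y
    rw [mem_closure_iff_nhds]
    intro t ht
    obtain ⟨O, hO, hOt⟩ := mem_nhds_subtype _ _ _ |>.1 ht
    obtain ⟨z, hz, hz'⟩ := hd y y.2 O hO
    exact ⟨⟨z, hGY hz'⟩, hOt hz, hz'⟩
  · intro y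
    obtain ⟨N, hN, hNj⟩ := hl y y.2
    refine ⟨Subtype.val ⁻¹' N, preimage_coe_mem_nhds_subtype.2 (mem_nhdsWithin_of_mem_nhds hN), ?_⟩
    rintro a ⟨ha, ha'⟩ b ⟨hb, hb'⟩
    exact joinedIn_sub (hNj a ⟨ha, ha'⟩ b ⟨hb, hb'⟩) hGY a.2 b.2
  · exact (joinedIn_sub hab Subset.rfl (hGY ha) (hGY hb)).joined

/-- good part -/
def GG (g : E → ℂ) (φ : E → ℝ) (B : Set E) : Set (E × ℝ × ℝ) := {y ∈ YY g φ | y.1 ∉ B}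

include hg h1 hφ hφe in
lemma YY_loc {B : Set E} (hB : Thin B) {y : E × ℝ × ℝ} (hy : y ∈ YY g φ) :
    ∃ N ∈ nhds y, ∀ a ∈ N ∩ GG g φ B, ∀ b ∈ N ∩ GG g φ B, JoinedIn (GG g φ B) a b := by
  obtain ⟨κ, hκ, hκ1, σ, hσc, hσy, hσ, N, hN, hNσ⟩ := local_section hg h1 hφ hφe hy
  refine ⟨N, hN, fun a ha b hb => ?_⟩
  obtain ⟨a1, a2⟩ := hNσ a ⟨ha.1, ha.2.1⟩
  obtain ⟨b1, b2⟩ := hNσ b ⟨hb.1, hb.2.1⟩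
  have hj := (cap_path hB hy.1.1.1 hκ hκ1).joinedIn a.1 ⟨a1, ha.2.2⟩ b.1 ⟨b1, hb.2.2⟩
  have := joinedIn_image hj (f := σ) (hσc.mono sdiff_subset)
  rw [a2, b2] at this
  refine this.mono ?_
  rintro _ ⟨x, hx, rfl⟩
  exact ⟨(hσ x hx.1).1, by rw [(hσ x hx.1).2]; exact hx.2⟩

include hg h1 hφ hφe in
lemma YY_dense {B : Set E} (hB : Thin B) {y : E × ℝ × ℝ} (hy : y ∈ YY g φ) {O : Set (E × ℝ × ℝ)}
    (hO : O ∈ nhds y) : (O ∩ GG g φ B).Nonempty := by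
  obtain ⟨κ, hκ, hκ1, σ, hσc, hσy, hσ, N, hN, hNσ⟩ := local_section hg h1 hφ hφe hy
  have h := hσc y.1 (cap_self hy.1.1.1 hκ1)
  have h' : ∀ᶠ x in nhdsWithin y.1 (Cap y.1 κ), σ x ∈ O := h (by rw [hσy]; exact hO)
  obtain ⟨κ', h2, h3, h4⟩ := cap_within hy.1.1.1 hκ hκ1 h'
  obtain ⟨x, hx⟩ := (cap_path hB hy.1.1.1 (hκ.trans h2) h3).nonempty
  obtain ⟨h5, h6⟩ := hσ x (cap_anti h2 hx.1)
  exact ⟨σ x, h4 x hx.1, h5, by rw [h6]; exact hx.2⟩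

lemma thin_empty : Thin ∅ :=
  ⟨fun (_ : ℕ) (_ : ℝ) => (0 : E), fun _ => LocallyLipschitz.const (0:E), empty_subset _⟩

lemma GG_empty : GG g φ ∅ = YY g φ := by
  ext y; exact ⟨fun h => h.1, fun h => ⟨h, fun h => h⟩⟩

def shf (y : E × ℝ × ℝ) : E × ℝ × ℝ := (y.1, y.2.1, y.2.2 + 1)

lemma shf_cont : Continuous shf := by unfold shf; fun_prop

lemma YY_shift {y : E × ℝ × ℝ} (hy : y ∈ YY g φ) : shf y ∈ YY g φ := by
  obtain ⟨a, b, c⟩ := y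
  obtain ⟨h, h'⟩ := hy
  refine ⟨h, ?_⟩
  have := exp_eq_one' 1
  have e : ((2 * π * (c + 1) : ℝ) : ℂ) * Complex.I = (2 * π * c : ℝ) * Complex.I + ((1:ℤ) * (2 * π) : ℝ) * Complex.I := by
    push_cast; ring
  change Complex.exp (((2 * π * (c + 1) : ℝ) : ℂ) * Complex.I) = cc φ (a, b)
  change Complex.exp (((2 * π * c : ℝ) : ℂ) * Complex.I) = cc φ (a, b) at h'
  rw [← h', e, Complex.exp_add, this, mul_one]

lemma shift_path {X : Type*} [TopologicalSpace X] {Y G : Set X} (hGY : G ⊆ Y) (τ : X → X)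
    (hτ : Continuous τ) (hτY : ∀ y ∈ Y, τ y ∈ Y) (hτG : ∀ y ∈ G, τ y ∈ G)
    (hd : ∀ y ∈ Y, ∀ O ∈ nhds y, (O ∩ G).Nonempty)
    (hl : ∀ y ∈ Y, ∃ N ∈ nhds y, ∀ a ∈ N ∩ G, ∀ b ∈ N ∩ G, JoinedIn G a b)
    (hl' : ∀ y ∈ Y, ∃ N ∈ nhds y, ∀ a ∈ N ∩ Y, ∀ b ∈ N ∩ Y, JoinedIn Y a b) {y : X}
    (hj : JoinedIn Y y (τ y)) : ∃ a, JoinedIn G a (τ a) := by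
  obtain ⟨N, hN, hNj⟩ := hl' y hj.source_mem
  obtain ⟨a, haN, ha⟩ := hd y hj.source_mem N hN
  have j1 := hNj a ⟨haN, hGY ha⟩ y ⟨mem_of_mem_nhds hN, hj.source_mem⟩
  have j2 : JoinedIn Y (τ a) (τ y) := by
    refine (joinedIn_image j1 (f := τ) hτ.continuousOn).mono ?_
    rintro _ ⟨y, hy, rfl⟩
    exact hτY y hy
  exact ⟨a, avoid_path_set hGY hd hl ha (hτG a ha) ((j1.trans hj).trans j2.symm)⟩

include hg h1 hφ hφe in
lemma good_path {B : Set E} (hB : Thin B) {y : E × ℝ × ℝ}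
    (hj : JoinedIn (YY g φ) y (shf y)) :
    ∃ a, JoinedIn (GG g φ B) a (shf a) := by
  refine shift_path (fun y hy => hy.1) shf shf_cont (fun y hy => YY_shift hy)
    (fun y hy => ⟨YY_shift hy.1, hy.2⟩) (fun y hy O hO => YY_dense hg h1 hφ hφe hB hy hO)
    (fun y hy => YY_loc hg h1 hφ hφe hB hy) (fun y hy => ?_) hj
  have := YY_loc hg h1 hφ hφe thin_empty hy
  rw [GG_empty] at this
  exact this

end

section

/-- the meridian loops -/
structure Loops (g : E → ℂ) (η₁ η₂ : ℝ → E) : Prop where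
  c1 : Continuous η₁
  A1 : ∀ θ, η₁ θ ∈ AA 0 (1/4)
  g1 : ∀ θ : ℝ, g (η₁ θ) = g (η₁ 0) * Complex.exp (θ * Complex.I)
  p1 : η₁ (2 * π) = η₁ 0
  c2 : Continuous η₂
  A2 : ∀ θ, η₂ θ ∈ AA (1/2) (1/8)
  g2 : ∀ θ : ℝ, g (η₂ θ) = g (η₂ 0) * Complex.exp (θ * Complex.I)
  p2 : η₂ (2 * π) = η₂ 0

lemma phi_bound {φ : E → ℝ} (hφ : ContinuousOn φ Slab) :
    ∃ m : ℝ, ∀ x : E, ‖x‖ = 1 → 1/4 < x 0 → x 0 < 3/8 → m ≤ φ x := by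
  let K : Set E := sphere 0 1 ∩ {x | 1/4 ≤ x 0 ∧ x 0 ≤ 3/8}
  have hK : IsCompact K := by
    refine (isCompact_sphere _ _).inter_right ?_
    have hc0 : Continuous (fun p : E => p 0) := by fun_prop
    exact isClosed_Icc.preimage hc0
  have hKS : K ⊆ Slab := by
    rintro x ⟨h1, h2, h3⟩
    refine ⟨by simpa using h1, by linarith, by linarith⟩
  obtain ⟨m, hm⟩ := (hK.image_of_continuousOn (hφ.mono hKS)).bddBelow
  exact ⟨m, fun x h1 h2 h3 => hm ⟨x, ⟨by simpa using h1, h2.le, h3.le⟩, rfl⟩⟩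

lemma Flow.S_anti {V : E → E} (F : Flow V) (hT : ∀ x, inner ℝ (V x) x = 0) (hU : ∀ x ∈ UU, V x = 0)
    (hVc : Continuous V) {g : E → ℂ} (hg : Amb g) (hanti : ∀ x ∈ XX, ang g x (V x) ≤ 0) {x : E}
    (hx : x ∈ XX) : Antitone (F.S g x) := by
  refine antitone_of_deriv_nonpos
    (fun T => (F.S_deriv hT hU hVc hg hx T).differentiableAt) fun T => ?_
  rw [(F.S_deriv hT hU hVc hg hx T).deriv]
  exact hanti _ (F.mem hT hU hx T)

lemma lift_square {c : ℝ × ℝ → ℂ} (hc : Continuous c) (h1 : ∀ a, ‖c a‖ = 1) {γ : ℝ → ℝ}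
    (hγ : Continuous γ) (hγc : ∀ t, Complex.exp ((2 * π * γ t : ℝ) * Complex.I) = c (t, 0))
    (hs : ∀ τ, c (0, τ) = c (1, τ)) {T : ℝ} (hTc : ∀ t ∈ Icc (0:ℝ) 1, c (t, T) = 1) :
    γ 1 = γ 0 := by
  obtain ⟨L, hL, hL0, hLc⟩ := lift_exists hc h1 (0, 0) (2 * π * γ 0) (hγc 0).symm
  have e1 := lift_diff (S := (univ : Set ℝ)) isPreconnected_univ (F := fun t => L (t, 0))
    (G := fun t => 2 * π * γ t) (by fun_prop) (by fun_prop)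
    (fun t _ => by rw [hγc, ← hLc]) (mem_univ 0) (mem_univ 1)
  have e2 := lift_diff (S := (univ : Set ℝ)) isPreconnected_univ (F := fun t => L (0, t))
    (G := fun t => L (1, t)) (by fun_prop) (by fun_prop)
    (fun t _ => by rw [← hLc, ← hLc, hs]) (mem_univ 0) (mem_univ T)
  have e3 := lift_diff (S := Icc (0:ℝ) 1) isPreconnected_Icc (F := fun t => L (t, T))
    (G := fun t => 0) (by fun_prop) (by fun_prop)
    (fun t ht => by rw [← hLc, hTc t ht]; simp) (left_mem_Icc.2 zero_le_one) (right_mem_Icc.2 zero_le_one)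
  have : 2 * π * (γ 1 - γ 0) = 0 := by linarith
  have := (mul_eq_zero.1 this).resolve_left (by positivity)
  linarith

lemma unif_T {R : ℝ → ℝ → ℝ} (hc : ∀ T, Continuous (fun t => R t T)) (ha : ∀ t, Antitone (R t)) {M : ℝ}
    (h : ∀ t, ∃ T, R t T < M) : ∃ T, ∀ t ∈ Icc (0:ℝ) 1, ∀ T' ≥ T, R t T' < M := by
  refine isCompact_Icc.induction_on (p := fun A => ∃ T, ∀ t ∈ A, ∀ T' ≥ T, R t T' < M)
    ⟨0, by simp⟩ ?_ ?_ ?_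
  · rintro A A' hA ⟨T, h⟩
    exact ⟨T, fun t ht => h t (hA ht)⟩
  · rintro A A' ⟨T, h⟩ ⟨T', h'⟩
    refine ⟨max T T', ?_⟩
    rintro t (ht | ht) T'' hT''
    · exact h t ht _ ((le_max_left _ _).trans hT'')
    · exact h' t ht _ ((le_max_right _ _).trans hT'')
  · intro t ht
    obtain ⟨T, hT1⟩ := h t
    have ho : IsOpen {t | R t T < M} := isOpen_lt (hc T) continuous_const
    refine ⟨_, mem_nhdsWithin_of_mem_nhds (ho.mem_nhds hT1), T, ?_⟩
    intro t' ht' T' hT'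
    exact (ha t' hT').trans_lt ht'

lemma good_funs {g : E → ℂ} {φ : E → ℝ} (hgc : ContinuousOn g XX) (h1 : ∀ x ∈ XX, ‖g x‖ = 1)
    (hφ : ContinuousOn φ Slab) (hφe : ∀ x ∈ Slab, g x = Complex.exp (φ x * Complex.I))
    {B : Set E} (hB : Thin B) {y : E × ℝ × ℝ} (hbl' : JoinedIn (YY g φ) y (shf y)) :
    ∃ (x : ℝ → XX) (s γ : ℝ → ℝ), Continuous x ∧ Continuous s ∧ Continuous γ ∧
      (∀ t, g (x t) = Complex.exp (s t * Complex.I)) ∧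
      (∀ t, Complex.exp ((2 * π * γ t : ℝ) * Complex.I) = cc φ (x t, s t)) ∧
      (∀ t, (x t : E) ∉ B) ∧ x 1 = x 0 ∧ s 1 = s 0 ∧ γ 1 = γ 0 + 1 := by
  obtain ⟨a, p, hp⟩ := good_path hgc h1 hφ hφe hB hbl'
  have hPG : ∀ t, p.extend t ∈ GG g φ B := by
    intro t
    have : p.extend t ∈ range p.extend := mem_range_self t
    rw [Path.extend_range] at this
    obtain ⟨t', ht'⟩ := this
    rw [← ht']; exact hp t'
  have e1 : p.extend 1 = shf a := p.extend_one
  have e0 : p.extend 0 = a := p.extend_zero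
  have hPc : Continuous p.extend := p.continuous_extend
  let x : ℝ → XX := fun t => ⟨(p.extend t).1, (hPG t).1.1.1⟩
  have hxc : Continuous x := Continuous.subtype_mk (continuous_fst.comp hPc) _
  let s : ℝ → ℝ := fun t => (p.extend t).2.1
  have hsc : Continuous s := continuous_fst.comp (continuous_snd.comp hPc)
  let γ : ℝ → ℝ := fun t => (p.extend t).2.2
  have hγc : Continuous γ := continuous_snd.comp (continuous_snd.comp hPc)
  refine ⟨x, s, γ, hxc, hsc, hγc, fun t => (hPG t).1.1.2, fun t => (hPG t).1.2, fun t => (hPG t).2, ?_⟩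
  refine ⟨Subtype.ext ?_, ?_, ?_⟩
  · change (p.extend 1).1 = (p.extend 0).1; rw [e1, e0]; rfl
  · change (p.extend 1).2.1 = (p.extend 0).2.1; rw [e1, e0]; rfl
  · change (p.extend 1).2.2 = (p.extend 0).2.2 + 1; rw [e1, e0]; rfl

theorem core {g : E → ℂ} (hg : Amb g) {η₁ η₂ : ℝ → E} (hL : Loops g η₁ η₂) {V : E → E} (F : Flow V)
    (hT : ∀ x, inner ℝ (V x) x = 0) (hU : ∀ x ∈ UU, V x = 0)
    (hVc : Continuous V) (hanti : ∀ x ∈ XX, ang g x (V x) ≤ 0) {B : Set E} (hB : Thin B)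
    (hS : ∀ x ∈ XX, x ∉ B → ∀ M : ℝ, ∃ T : ℝ, F.S g x T < M) : False := by
  have hgc : ContinuousOn g XX := fun x hx => (hg.diff hx).continuousAt.continuousWithinAt
  have h1 : ∀ x ∈ XX, ‖g x‖ = 1 := fun x hx => hg.norm_eq hx
  obtain ⟨φ, hφ, hφe⟩ := slab_lift hgc h1
  have hbl := big_loop hgc h1 hφ hφe hL.c1 hL.A1 hL.g1 hL.p1 hL.c2 hL.A2 hL.g2 hL.p2
  have hbl' : JoinedIn (YY g φ) (qarc (1/5), φ (qarc (1/5)), 0) (shf (qarc (1/5), φ (qarc (1/5)), 0)) := by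
    have e : shf (qarc (1/5), φ (qarc (1/5)), 0) = (qarc (1/5), φ (qarc (1/5)), 1) := by
      simp [shf]
    rw [e]; exact hbl
  obtain ⟨x, s, γ, hxc, hsc, hγc, hxs, hγ, hxB, hx01⟩ := good_funs hgc h1 hφ hφe hB hbl'
  have hSc := F.S_cont hT hU hVc hg
  have hSc' : Continuous (fun q : ℝ × ℝ => F.S g (x q.1) q.2) :=
    hSc.comp ((hxc.comp continuous_fst).prodMk continuous_snd)
  have hΦc : Continuous (fun q : ℝ × ℝ => F.Φ q.2 (x q.1)) :=
    F.cont.comp (continuous_snd.prodMk (continuous_subtype_val.comp (hxc.comp continuous_fst)))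
  have hXT : ∀ q : ℝ × ℝ, (F.Φ q.2 (x q.1), s q.1 + F.S g (x q.1) q.2) ∈ XT g := by
    intro q
    refine ⟨F.mem hT hU (x q.1).2 _, ?_⟩
    simp only
    rw [F.S_eq hT hU hVc hg (x q.1).2, hxs, ← Complex.exp_add]
    congr 1; push_cast; ring
  obtain ⟨m, hm⟩ := phi_bound hφ
  obtain ⟨T, hTT⟩ : ∃ T, ∀ t ∈ Icc (0:ℝ) 1, ∀ T' ≥ T, s t + F.S g (x t) T' < m - π := by
    refine unif_T (R := fun t T => s t + F.S g (x t) T) ?_ ?_ ?_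
    · intro T
      exact hsc.add (hSc'.comp (continuous_id.prodMk continuous_const))
    · intro t T T' h
      exact add_le_add_right (F.S_anti hT hU hVc hg hanti (x t).2 h) _
    · intro t
      obtain ⟨T, hT1⟩ := hS (x t) (x t).2 (hxB t) (m - π - s t)
      exact ⟨T, by linarith⟩
  let c : ℝ × ℝ → ℂ := fun q => cc φ (F.Φ q.2 (x q.1), s q.1 + F.S g (x q.1) q.2)
  have hcc : Continuous c := (cc_cont hφ hφe).comp_continuous
    (hΦc.prodMk ((hsc.comp continuous_fst).add hSc')) hXT
  have := lift_square hcc (fun _ => cc_norm _ _) hγc (fun t => ?_) (fun τ => ?_) (T := T) (fun t ht => ?_)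
  · linarith [hx01.2.2]
  · rw [hγ]
    simp only [c, F.zero, Flow.S, intervalIntegral.integral_same, add_zero]
  · simp only [c]; rw [hx01.1, hx01.2.1]
  · simp only [c]
    have hmem := F.mem hT hU (x t).2 T
    by_cases h : F.Φ T (x t) 0 ≤ 1/4 ∨ 3/8 ≤ F.Φ T (x t) 0
    · exact cc_one_of h
    · push Not at h
      apply cc_one_far
      have a1 := hm _ hmem.1 h.1 h.2
      have a2 := hTT t ht T le_rfl
      simp only
      rw [abs_of_nonpos] <;> linarith [Real.pi_pos]

end

section

structure Good (g : E → ℂ) : Prop extends Amb g where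
  rad : ∀ x ∈ XX, ∀ᶠ y in nhds x, ang g y y = 0
  bind : ∀ x ∈ UU, ∃ O ∈ nhds x, ∃ Y : E → E, ContDiffOn ℝ (⊤ : ℕ∞) Y O ∧
    (∀ y ∈ O, y ∈ UU → Y y = 0) ∧ ∀ y ∈ O, y ∈ XX → ang g y (Y y) = 1

lemma ang_zero (g : E → ℂ) (x : E) : ang g x 0 = 0 := by simp [ang]
lemma ang_neg (g : E → ℂ) (x v : E) : ang g x (-v) = - ang g x v := by
  have := ang_smul g x v (-1)
  simpa using this
lemma ang_sub (g : E → ℂ) (x v w : E) : ang g x (v - w) = ang g x v - ang g x w := by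
  rw [sub_eq_add_neg, ang_add, ang_neg]; ring

lemma UU_closed : IsClosed UU := by
  have : UU = {x : E | ‖x‖ = 1} ∩ ({x | Z x = 0} ∪ {x | Z x = 1/2}) := rfl
  rw [this]
  exact (isClosed_eq continuous_norm continuous_const).inter
    ((isClosed_eq continuous_Z continuous_const).union (isClosed_eq continuous_Z continuous_const))

/-- normalize a smooth field to a compactly supported tangent one -/
lemma normalize {V : E → E} (hV : ContDiff ℝ (⊤ : ℕ∞) V) :
    ∃ V' : E → E, ∃ Kl C : NNReal, LipschitzWith Kl V' ∧ (∀ x, ‖V' x‖ ≤ C) ∧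
      (∀ x, inner ℝ (V' x) x = 0) ∧ ∀ x : E, ‖x‖ = 1 → V' x = V x - (inner ℝ (V x) x : ℝ) • x := by
  let b : ContDiffBump (0 : E) := ⟨2, 3, by norm_num, by norm_num⟩
  let V' : E → E := fun x => b x • ((‖x‖^2) • V x - (inner ℝ (V x) x : ℝ) • x)
  have hs : ContDiff ℝ (⊤ : ℕ∞) V' := by
    have hb : ContDiff ℝ (⊤ : ℕ∞) (b : E → ℝ) := b.contDiff
    have h1 : ContDiff ℝ (⊤ : ℕ∞) (fun x : E => ‖x‖^2) := contDiff_norm_sq ℝ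
    have h2 : ContDiff ℝ (⊤ : ℕ∞) (fun x : E => (inner ℝ (V x) x : ℝ)) := hV.inner ℝ contDiff_id
    exact hb.smul ((h1.smul hV).sub (h2.smul contDiff_id))
  have hcs : HasCompactSupport V' := b.hasCompactSupport.smul_right
  obtain ⟨Kl, hKl⟩ := (hs.of_le (m := 1) (by exact_mod_cast le_top)).lipschitzWith_of_hasCompactSupport hcs (by simp)
  obtain ⟨C, hC⟩ := hcs.exists_bound_of_continuous hs.continuous
  refine ⟨V', Kl, C.toNNReal, hKl, fun x => (hC x).trans (Real.le_coe_toNNReal C), fun x => ?_, fun x hx => ?_⟩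
  · simp only [V', inner_smul_left, inner_sub_left, real_inner_self_eq_norm_sq]
    simp; right; ring
  · have : b x = 1 := b.one_of_mem_closedBall (by simp [b, hx])
    simp [V', this, hx]

lemma exists_field {g : E → ℂ} (hg : Good g) {K O : Set E} (hK : IsClosed K) (hO : IsOpen O) (hKO : K ⊆ O)
    {Wf : E → E} (hW : ContDiffOn ℝ (⊤ : ℕ∞) Wf O) (hWT : ∀ y ∈ K, inner ℝ (Wf y) y = 0)
    {c : ℝ} (hc1 : c ≤ 1) (hOX : ∀ y ∈ O, ‖y‖ = 1 → y ∈ XX)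
    (hWc : ∀ y ∈ O, y ∉ K → ‖y‖ = 1 → ang g y (Wf y) ≤ -c)
    (hreg : ∀ x ∈ XX, x ∉ K → ∃ v, ang g x v ≠ 0) :
    ∃ V : E → E, ∃ Kl C : NNReal, LipschitzWith Kl V ∧ (∀ x, ‖V x‖ ≤ C) ∧
      (∀ x, inner ℝ (V x) x = 0) ∧ (∀ x ∈ UU, V x = 0) ∧ (∀ x ∈ K, ‖x‖ = 1 → V x = Wf x) ∧
      ∀ x ∈ XX, x ∉ K → ang g x (V x) ≤ -c := by
  let t : E → Set E := fun x => {v | (x ∈ UU → v = 0) ∧ (x ∈ K → ‖x‖ = 1 → v = Wf x) ∧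
    (x ∈ XX → x ∉ K → ang g x v ≤ -c)}
  have ht : ∀ x, Convex ℝ (t x) := by
    intro x v hv w hw a b ha hb hab
    refine ⟨fun h => ?_, fun h h' => ?_, fun h h' => ?_⟩
    · rw [hv.1 h, hw.1 h]; simp
    · rw [hv.2.1 h h', hw.2.1 h h', ← add_smul, hab, one_smul]
    · rw [ang_add, ang_smul, ang_smul]
      have h1 := hv.2.2 h h'
      have h2 := hw.2.2 h h'
      have : -c = a * (-c) + b * (-c) := by rw [← add_mul, hab, one_mul]
      rw [this]
      exact add_le_add (mul_le_mul_of_nonneg_left h1 ha) (mul_le_mul_of_nonneg_left h2 hb)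
  have Hloc : ∀ x : E, ∃ U ∈ nhds x, ∃ Y : E → E, ContDiffOn ℝ (⊤ : ℕ∞) Y U ∧ ∀ y ∈ U, Y y ∈ t y := by
    intro x
    by_cases hx1 : ‖x‖ = 1
    swap
    · refine ⟨{y | ‖y‖ ≠ 1}, (isOpen_ne_fun continuous_norm continuous_const).mem_nhds hx1, fun _ => 0,
        contDiffOn_const, fun y hy => ⟨fun _ => rfl, fun _ h => (hy h).elim, fun h => (hy h.1).elim⟩⟩
    by_cases hxK : x ∈ K
    · exact ⟨O, hO.mem_nhds (hKO hxK), Wf, hW, fun y hy => ⟨fun h => (XX_not_UU (hOX y hy h.1) h).elim,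
        fun _ _ => rfl, fun h h' => hWc y hy h' h.1⟩⟩
    have hKn : Kᶜ ∈ nhds x := hK.isOpen_compl.mem_nhds hxK
    by_cases hxU : x ∈ UU
    · obtain ⟨O', hO', Y, hY, hY0, hY1⟩ := hg.bind x hxU
      refine ⟨O' ∩ Kᶜ, Filter.inter_mem hO' hKn, fun y => - Y y, (hY.neg).mono inter_subset_left, ?_⟩
      rintro y ⟨hy, hyK⟩
      refine ⟨fun h => by simp [hY0 y hy h], fun h => (hyK h).elim, fun h _ => ?_⟩
      rw [ang_neg, hY1 y hy h]; linarith
    · have hxX := XX_or_UU hx1 hxU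
      obtain ⟨v, hv⟩ := hreg x hxX hxK
      let v' : E := (-2 / ang g x v) • v
      have hv' : ang g x v' = -2 := by
        simp only [v', ang_smul]; field_simp
      have hcont := hg.toAmb.ang_continuousAt (V := fun _ => v') continuous_const hxX
      have h1 : ∀ᶠ y in nhds x, ang g y v' < -1 := by
        have := hcont.eventually (gt_mem_nhds (show ang g x v' < -1 by rw [hv']; norm_num))
        exact this
      refine ⟨{y | ang g y v' < -1} ∩ (Kᶜ ∩ UUᶜ), Filter.inter_mem h1 (Filter.inter_mem hKn
        (UU_closed.isOpen_compl.mem_nhds hxU)), fun _ => v', contDiffOn_const, ?_⟩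
      rintro y ⟨hy, hyK, hyU⟩
      refine ⟨fun h => (hyU h).elim, fun h => (hyK h).elim, fun _ _ => ?_⟩
      have : ang g y v' < -1 := hy
      linarith
  obtain ⟨V, hV⟩ := exists_contMDiffMap_forall_mem_convex_of_local (n := (⊤ : ℕ∞)) 𝓘(ℝ, E) ht (fun x => by
    obtain ⟨U, hU, Y, hY, hYt⟩ := Hloc x
    exact ⟨U, hU, Y, hY.contMDiffOn, hYt⟩)
  obtain ⟨V', Kl, C, h1, h2, h3, h4⟩ := normalize V.contMDiff.contDiff
  refine ⟨V', Kl, C, h1, h2, h3, fun x hx => ?_, fun x hx hx1 => ?_, fun x hx hxK => ?_⟩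
  · rw [h4 x hx.1, (hV x).1 hx]; simp
  · rw [h4 x hx1, (hV x).2.1 hx hx1, hWT x hx]; simp
  · rw [h4 x hx.1, ang_sub, ang_smul, (hg.rad x hx).self_of_nhds, mul_zero, sub_zero]
    exact (hV x).2.2 hx hxK

end

section

lemma Thin.mono {B B' : Set E} (h : Thin B) (h' : B' ⊆ B) : Thin B' := by
  obtain ⟨c, hc, hB⟩ := h
  exact ⟨c, hc, h'.trans hB⟩

lemma Flow.speed {V : E → E} (F : Flow V) {C : NNReal} (hC : ∀ x, ‖V x‖ ≤ C) (x : E) (s t : ℝ) :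
    dist (F.Φ t x) (F.Φ s x) ≤ C * |t - s| := by
  have := Convex.norm_image_sub_le_of_norm_hasDerivWithin_le (f := fun s => F.Φ s x) (s := univ)
    (f' := fun s => V (F.Φ s x)) (C := C) (x := s) (y := t)
    (fun s _ => (F.deriv x s).hasDerivWithinAt) (fun s _ => hC _) convex_univ (mem_univ _) (mem_univ _)
  rwa [← dist_eq_norm, Real.norm_eq_abs] at this

theorem core2 {g : E → ℂ} (hg : Amb g) {η₁ η₂ : ℝ → E} (hL : Loops g η₁ η₂) {V : E → E} (F : Flow V)
    (hT : ∀ x, inner ℝ (V x) x = 0) (hU : ∀ x ∈ UU, V x = 0)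
    (hVc : Continuous V) {C : NNReal} (hC : ∀ x, ‖V x‖ ≤ C)
    (hanti : ∀ x ∈ XX, ang g x (V x) ≤ 0) {K K' : Set E} {c δ : ℝ} (hc : 0 < c) (hδ : 0 < δ)
    (hcK : ∀ x ∈ XX, x ∉ K' → ang g x (V x) ≤ -c) (hKK : ∀ y, y ∉ K → ∀ z, dist z y < δ → z ∉ K')
    (hB : Thin {x | x ∈ XX ∧ ∃ T : ℝ, ∀ t ≥ T, F.Φ t x ∈ K}) : False := by
  refine core hg hL F hT hU hVc hanti hB fun x hx hxB => ?_
  have hxB' : ∀ T : ℝ, ∃ t ≥ T, F.Φ t x ∉ K := by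
    intro T
    by_contra h
    push Not at h
    exact hxB ⟨hx, T, h⟩
  have hSa := F.S_anti hT hU hVc hg hanti hx
  let h : ℝ := δ / (C + 1)
  have hh : 0 < h := by positivity
  have step : ∀ T : ℝ, ∃ T', F.S g x T' ≤ F.S g x T - c * h := by
    intro T
    obtain ⟨t, ht, htK⟩ := hxB' T
    refine ⟨t + h, ?_⟩
    have h1 := Convex.image_sub_le_mul_sub_of_deriv_le (convex_Icc t (t + h)) (f := F.S g x) (C := -c)
      (fun s _ => (F.S_deriv hT hU hVc hg hx s).continuousAt.continuousWithinAt)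
      (fun s _ => (F.S_deriv hT hU hVc hg hx s).differentiableAt.differentiableWithinAt)
      (fun s hs => by
        rw [interior_Icc] at hs
        rw [(F.S_deriv hT hU hVc hg hx s).deriv]
        refine hcK _ (F.mem hT hU hx s) (hKK _ htK _ ?_)
        refine (F.speed hC x t s).trans_lt ?_
        rw [abs_of_nonneg (by linarith [hs.1])]
        calc (C:ℝ) * (s - t) ≤ C * h := mul_le_mul_of_nonneg_left (by linarith [hs.2]) C.2
          _ < δ := by
            simp only [h]
            rw [mul_div_assoc', div_lt_iff₀ (by positivity)]
            nlinarith)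
      t (left_mem_Icc.2 (by linarith)) (t + h) (right_mem_Icc.2 (by linarith)) (by linarith)
    have h2 := hSa ht
    have : -c * (t + h - t) = - (c * h) := by ring
    linarith
  have key : ∀ n : ℕ, ∃ T, F.S g x T ≤ F.S g x 0 - n * (c * h) := by
    intro n
    induction n with
    | zero => exact ⟨0, by simp⟩
    | succ n ih =>
      obtain ⟨T, hT1⟩ := ih
      obtain ⟨T', hT'⟩ := step T
      exact ⟨T', by push_cast; linarith⟩
  intro M
  obtain ⟨n, hn⟩ := exists_nat_gt ((F.S g x 0 - M) / (c * h))
  obtain ⟨T, hT1⟩ := key n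
  refine ⟨T, ?_⟩
  rw [div_lt_iff₀ (by positivity)] at hn
  linarith

theorem no_fibration {g : E → ℂ} (hg : Good g) {η₁ η₂ : ℝ → E} (hL : Loops g η₁ η₂)
    (hreg : ∀ x ∈ XX, ∃ v, ang g x v ≠ 0) : False := by
  obtain ⟨V, Kl, C, h1, h2, h3, h4, -, h6⟩ := exists_field hg (K := ∅) (O := ∅) isClosed_empty isOpen_empty
    subset_rfl (Wf := fun _ => 0) contDiffOn_const (by simp) (c := 1) le_rfl (by simp) (by simp)
    (fun x hx _ => hreg x hx)
  obtain ⟨F⟩ := exists_flow V Kl h1 C h2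
  refine core2 hg.toAmb hL F h3 h4 h1.continuous h2 (fun x hx => ?_) (K := ∅) (K' := ∅) (c := 1) (δ := 1)
    one_pos one_pos (fun x hx _ => h6 x hx (by simp)) (by simp) ?_
  · have := h6 x hx (by simp); linarith
  · refine Thin.mono thin_empty ?_
    rintro x ⟨-, T, h⟩
    exact h T le_rfl

end

section

lemma two_le : (2 : WithTop ℕ∞) ≤ ((⊤:ℕ∞) : WithTop ℕ∞) := by
  change ((2:ℕ∞):WithTop ℕ∞) ≤ _
  exact_mod_cast le_top

lemma arg_hasFDerivAt {A : Type*} [NormedAddCommGroup A] [NormedSpace ℝ A] {G : A → ℂ} {G' : A →L[ℝ] ℂ}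
    {x : A} (h : HasFDerivAt G G' x) (hs : G x ∈ Complex.slitPlane) :
    HasFDerivAt (fun y => (G y).arg) (Complex.imCLM.comp ((G x)⁻¹ • G')) x := by
  have h1 := ((Complex.hasDerivAt_log hs).hasFDerivAt.restrictScalars ℝ).comp x h
  have h2 := Complex.imCLM.hasFDerivAt.comp x h1
  have e : (fun y => (G y).arg) = Complex.imCLM ∘ (Complex.log ∘ G) := by
    ext y; simp [Complex.log_im]
  rw [e]
  refine h2.congr_fderiv ?_
  ext v
  simp [mul_comm]

lemma arg_contDiffAt {A : Type*} [NormedAddCommGroup A] [NormedSpace ℝ A] {G : A → ℂ} {n : WithTop ℕ∞}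
    {x : A} (h : ContDiffAt ℝ n G x) (hs : G x ∈ Complex.slitPlane) :
    ContDiffAt ℝ n (fun y => (G y).arg) x := by
  have e : (fun y => (G y).arg) = Complex.imCLM ∘ (Complex.log ∘ G) := by
    ext y; simp [Complex.log_im]
  rw [e]
  refine Complex.imCLM.contDiff.contDiffAt.comp x ?_
  exact ((Complex.contDiffAt_log hs).restrict_scalars ℝ).comp x h

/-- local real lift -/
def lft (g : E → ℂ) (p : E) (y : E) : ℝ := (g y / g p).arg

variable {g : E → ℂ} {p : E}

lemma lft_contDiffAt (hg : Amb g) (hp : p ∈ XX) : ContDiffAt ℝ (⊤ : ℕ∞) (lft g p) p := by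
  refine arg_contDiffAt ((hg.smooth p hp).div_const _) ?_
  rw [div_self (hg.ne_zero hp)]; exact Complex.one_mem_slitPlane

lemma lft_fderiv (hg : Amb g) (hp : p ∈ XX) :
    ∀ᶠ y in nhds p, ∀ v, fderiv ℝ (lft g p) y v = ang g y v := by
  have hc : ContinuousAt (fun y => g y / g p) p := (hg.diff hp).continuousAt.div_const _
  have h1 : ∀ᶠ y in nhds p, g y / g p ∈ Complex.slitPlane := by
    refine hc.eventually (Complex.isOpen_slitPlane.mem_nhds ?_)
    change g p / g p ∈ _
    rw [div_self (hg.ne_zero hp)]; exact Complex.one_mem_slitPlane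
  have h2 : ∀ᶠ y in nhds p, ContDiffAt ℝ 1 g y :=
    ((hg.smooth p hp).of_le (m := 1) (by exact_mod_cast le_top)).eventually (by simp)
  filter_upwards [h1, h2] with y hy hy2 v
  have hd : HasFDerivAt (fun y => g y / g p) ((g p)⁻¹ • fderiv ℝ g y) y := by
    have := (hy2.differentiableAt (by simp)).hasFDerivAt.const_smul (g p)⁻¹
    have e : (fun y => g y / g p) = (g p)⁻¹ • g := by
      ext z; simp [div_eq_inv_mul]
    rw [e]; exact this
  have := (arg_hasFDerivAt hd hy).fderiv
  change fderiv ℝ (fun y => (g y / g p).arg) y v = _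
  rw [this]
  have hgp := hg.ne_zero hp
  simp only [ang, ContinuousLinearMap.comp_apply, smul_apply, Complex.imCLM_apply, smul_eq_mul]
  congr 1
  by_cases h0 : g y = 0
  · simp [h0]
  · field_simp

/-- Hessian bilinear form -/
def hs (g : E → ℂ) (p : E) : E →L[ℝ] E →L[ℝ] ℝ := fderiv ℝ (fderiv ℝ (lft g p)) p

lemma hs_symm (hg : Amb g) (hp : p ∈ XX) (v w : E) : hs g p v w = hs g p w v := by
  have := (lft_contDiffAt hg hp).isSymmSndFDerivAt (by simpa using two_le)
  exact this v w

lemma hs_hasFDerivAt (hg : Amb g) (hp : p ∈ XX) : HasFDerivAt (fderiv ℝ (lft g p)) (hs g p) p := by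
  have := ((lft_contDiffAt hg hp).fderiv_right (m := 1) (by rw [one_add_one_eq_two]; exact two_le)).differentiableAt (by simp)
  exact this.hasFDerivAt

lemma hs_rad (hg : Good g) (hp : p ∈ XX) (hcr : ∀ v, ang g p v = 0) (v : E) : hs g p v p = 0 := by
  have h0 : fderiv ℝ (lft g p) p = 0 := by
    ext v
    rw [(lft_fderiv hg.toAmb hp).self_of_nhds v, hcr]; simp
  have h1 := (hs_hasFDerivAt hg.toAmb hp).clm_apply (hasFDerivAt_id p)
  have h2 : (fun y => fderiv ℝ (lft g p) y (id y)) =ᶠ[nhds p] fun _ => 0 := by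
    filter_upwards [lft_fderiv hg.toAmb hp, hg.rad p hp] with y h h'
    rw [h]; exact h'
  have h3 := (h1.congr_of_eventuallyEq h2.symm).unique (hasFDerivAt_const 0 p)
  have := congrArg (fun L => L v) h3
  simpa [h0] using this

/-- the model field -/
def mf (A : E →L[ℝ] E) (p y : E) : E := - A y + (inner ℝ (A y) y / inner ℝ p y : ℝ) • p

lemma mf_tangent {A : E →L[ℝ] E} {y : E} (h : inner ℝ p y ≠ (0:ℝ)) : inner ℝ (mf A p y) y = (0:ℝ) := by
  rw [mf, inner_add_left, inner_neg_left, inner_smul_left]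
  simp; field_simp; ring

lemma mf_smooth {A : E →L[ℝ] E} {y : E} (h : inner ℝ p y ≠ (0:ℝ)) : ContDiffAt ℝ (⊤ : ℕ∞) (mf A p) y := by
  unfold mf
  have h1 : ContDiffAt ℝ (⊤ : ℕ∞) (fun y => A y) y := A.contDiff.contDiffAt
  have h2 : ContDiffAt ℝ (⊤ : ℕ∞) (fun y => (inner ℝ (A y) y / inner ℝ p y : ℝ)) y := by
    refine (h1.inner ℝ contDiffAt_id).div (contDiffAt_const.inner ℝ contDiffAt_id) h
  exact h1.neg.add (h2.smul contDiffAt_const)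

lemma inner_sphere {y : E} (hp : ‖p‖ = 1) (hy : ‖y‖ = 1) : (inner ℝ p y : ℝ) = 1 - dist y p ^ 2 / 2 := by
  rw [dist_eq_norm, norm_sub_sq_real, hy, hp, real_inner_comm]; ring

lemma local_model (hg : Good g) (hp : p ∈ XX) (hcr : ∀ v, ang g p v = 0) {A : E →L[ℝ] E}
    (hA : ∀ v w, inner ℝ (A v) w = hs g p v w) (hker : ∀ v, A v = 0 → ∃ c : ℝ, v = c • p) :
    ∃ r > 0, r ≤ 1 ∧ ∃ c > 0, ∀ y, ‖y‖ = 1 → dist y p < r → y ∈ XX ∧ ang g y (mf A p y) ≤ - c * dist y p ^ 2 := by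
  have hAp : A p = 0 := by
    refine ext_inner_right ℝ fun w => ?_
    rw [hA, hs_symm hg.toAmb hp, hs_rad hg hp hcr]; simp
  have hAp' : ∀ v, inner ℝ (A v) p = (0:ℝ) := fun v => by rw [hA, hs_rad hg hp hcr]
  have hpp : inner ℝ p p = (1:ℝ) := by rw [real_inner_self_eq_norm_sq, hp.1]; norm_num
  -- injectivity
  obtain ⟨m, hm, hmA⟩ : ∃ m > (0:ℝ), ∀ v, ‖v‖ ≤ m * ‖A v + (inner ℝ p v : ℝ) • p‖ := by
    let B : E →ₗ[ℝ] E := A.toLinearMap + (((innerSL ℝ p).smulRight p : E →L[ℝ] E) : E →ₗ[ℝ] E)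
    have hB : ∀ v, B v = A v + (inner ℝ p v : ℝ) • p := fun v => by simp [B]
    have hk : LinearMap.ker B = ⊥ := by
      rw [LinearMap.ker_eq_bot']
      intro v hv
      rw [hB] at hv
      have h1 : (inner ℝ p v : ℝ) = 0 := by
        have := congrArg (fun z => (inner ℝ z p : ℝ)) hv
        simp only [inner_add_left, inner_smul_left, hAp', hpp, inner_zero_left] at this
        simpa using this
      rw [h1, zero_smul, add_zero] at hv
      obtain ⟨c, rfl⟩ := hker v hv
      rw [inner_smul_right, hpp, mul_one] at h1
      simp [h1]
    obtain ⟨m, hm, hmB⟩ := B.exists_antilipschitzWith hk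
    refine ⟨m, by exact_mod_cast hm, fun v => ?_⟩
    have := hmB.le_mul_dist v 0
    rw [map_zero, dist_zero_right, dist_zero_right, hB] at this
    exact this
  have h0 : fderiv ℝ (lft g p) p = 0 := by
    ext v
    rw [(lft_fderiv hg.toAmb hp).self_of_nhds v, hcr]; simp
  have hlo := (hs_hasFDerivAt hg.toAmb hp).isLittleO.def (show (0:ℝ) < 1 / (12 * m) by positivity)
  have hXX : ∀ᶠ y in nhds p, y ∉ UU := UU_closed.isOpen_compl.mem_nhds (XX_not_UU hp)
  obtain ⟨r, hr, hr'⟩ := Metric.eventually_nhds_iff.1 ((lft_fderiv hg.toAmb hp).and (hlo.and hXX))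
  refine ⟨min r (min 1 (1/m)), by positivity, (min_le_right _ _).trans (min_le_left _ _), 1 / (8 * m^2), by positivity, ?_⟩
  intro y hy hyr
  have hyr1 : dist y p < r := hyr.trans_le (min_le_left _ _)
  have hyr2 : dist y p < 1 := hyr.trans_le ((min_le_right _ _).trans (min_le_left _ _))
  have hyr3 : dist y p < 1/m := hyr.trans_le ((min_le_right _ _).trans (min_le_right _ _))
  obtain ⟨e1, e2, e3⟩ := hr' hyr1
  refine ⟨XX_or_UU hy e3, ?_⟩
  set d := dist y p with hd
  have hd0 : 0 ≤ d := dist_nonneg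
  have hin := inner_sphere (p := p) hp.1 hy
  rw [← hd] at hin
  have hin2 : (1:ℝ)/2 ≤ inner ℝ p y := by rw [hin]; nlinarith
  -- lower bound on ‖A y‖
  have hAy : d ≤ 2 * m * ‖A y‖ := by
    have h1 := hmA (y - p)
    rw [map_sub, hAp, sub_zero, inner_sub_right, hpp, hin, ← dist_eq_norm, ← hd] at h1
    have h2 : ‖A y + (1 - d ^ 2 / 2 - 1) • p‖ ≤ ‖A y‖ + d^2/2 := by
      refine (norm_add_le _ _).trans ?_
      rw [norm_smul, hp.1, mul_one, Real.norm_eq_abs, abs_of_nonpos (by nlinarith)]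
      linarith
    have h3 : m * d ≤ 1 := by
      rw [lt_div_iff₀ hm] at hyr3; linarith
    have h4 : d ≤ m * (‖A y‖ + d^2/2) := h1.trans (mul_le_mul_of_nonneg_left h2 hm.le)
    have h5 : m * d^2 ≤ d := by nlinarith
    linarith
  have hV : ‖mf A p y‖ ≤ 3 * ‖A y‖ := by
    unfold mf
    refine (norm_add_le _ _).trans ?_
    rw [norm_neg, norm_smul, hp.1, mul_one, Real.norm_eq_abs, abs_div, abs_of_pos (a := (inner ℝ p y : ℝ)) (by linarith)]
    have h1 : |(inner ℝ (A y) y : ℝ)| ≤ ‖A y‖ := by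
      have := abs_real_inner_le_norm (A y) y
      rwa [hy, mul_one] at this
    have h2 : |(inner ℝ (A y) y : ℝ)| / inner ℝ p y ≤ 2 * ‖A y‖ := by
      rw [div_le_iff₀ (by linarith)]
      nlinarith [norm_nonneg (A y)]
    linarith
  rw [← e1]
  have h1 : hs g p (y - p) (mf A p y) = - ‖A y‖^2 := by
    rw [← hA, map_sub, hAp, sub_zero, mf, inner_add_right, inner_neg_right, inner_smul_right, hAp',
      real_inner_self_eq_norm_sq]; ring
  have h2 : fderiv ℝ (lft g p) y (mf A p y) - hs g p (y - p) (mf A p y) ≤ (1 / (12 * m) * d) * (3 * ‖A y‖) := by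
    have : fderiv ℝ (lft g p) y (mf A p y) - hs g p (y - p) (mf A p y)
        = (fderiv ℝ (lft g p) y - fderiv ℝ (lft g p) p - hs g p (y - p)) (mf A p y) := by simp [h0]
    rw [this]
    refine (Real.le_norm_self _).trans ((ContinuousLinearMap.le_opNorm _ _).trans ?_)
    refine mul_le_mul ?_ hV (norm_nonneg _) (by positivity)
    rw [hd, dist_eq_norm]; exact e2
  have h3 : (1 / (12 * m) * d) * (3 * ‖A y‖) ≤ ‖A y‖^2 / 2 := by
    have : (1 / (12 * m) * d) * (3 * ‖A y‖) = d * ‖A y‖ / (4 * m) := by field_simp; ring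
    rw [this, div_le_iff₀ (by positivity)]
    nlinarith [norm_nonneg (A y)]
  have h4 : 1 / (8 * m^2) * d^2 ≤ ‖A y‖^2/2 := by
    have : d^2 ≤ (2 * m * ‖A y‖)^2 := pow_le_pow_left₀ hd0 hAy 2
    rw [div_mul_eq_mul_div, div_le_iff₀ (by positivity)]
    nlinarith
  linarith

end

section

lemma exists_cos_sin {a c : ℝ} (h : c^2 + a^2 = 1) : ∃ θ : ℝ, Real.cos θ = c ∧ Real.sin θ = a := by
  have h1 : ‖(⟨c, a⟩ : ℂ)‖ = 1 := by
    rw [Complex.norm_def, Complex.normSq_mk, show c*c + a*a = 1 by nlinarith, Real.sqrt_one]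
  refine ⟨Complex.arg ⟨c, a⟩, ?_, ?_⟩
  · have := Complex.norm_mul_cos_arg ⟨c, a⟩
    rwa [h1, one_mul] at this
  · have := Complex.norm_mul_sin_arg ⟨c, a⟩
    rwa [h1, one_mul] at this

/-- the great circle -/
def gc (p e : E) (θ : ℝ) : E := Real.cos θ • p + Real.sin θ • e

lemma gc_lip (p e : E) : LocallyLipschitz (gc p e) := by
  have : ContDiff ℝ 1 (gc p e) := by
    unfold gc
    exact (Real.contDiff_cos.smul contDiff_const).add (Real.contDiff_sin.smul contDiff_const)
  exact this.locallyLipschitz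

variable {p : E} {A : E →L[ℝ] E} {b : OrthonormalBasis (Fin 4) ℝ E} {lam : Fin 4 → ℝ}

lemma decay_zero {f : ℝ → ℝ} {l : ℝ} (hl : l < 0) (hf : ∀ t, 0 ≤ t → HasDerivAt f (-l * f t) t)
    (hb : ∀ t, 0 ≤ t → |f t| ≤ 1) : f 0 = 0 := by
  have h1 : ∀ t, 0 ≤ t → f t * Real.exp (l * t) = f 0 := by
    intro t ht
    have hd : ∀ s, 0 ≤ s → HasDerivAt (fun s => f s * Real.exp (l * s)) 0 s := by
      intro s hs
      have h2 : HasDerivAt (fun s => Real.exp (l * s)) (Real.exp (l * s) * l) s := by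
        have := ((hasDerivAt_id s).const_mul l).exp
        simpa using this
      have := (hf s hs).mul h2
      exact this.congr_deriv (by ring)
    have := constant_of_has_deriv_right_zero (a := 0) (b := t) (f := fun s => f s * Real.exp (l * s))
      (fun s hs => (hd s hs.1).continuousAt.continuousWithinAt)
      (fun s hs => (hd s hs.1).hasDerivWithinAt) t ⟨ht, le_rfl⟩
    simpa using this
  by_contra h0
  have hlim : Filter.Tendsto (fun t => Real.exp (l * t)) Filter.atTop (nhds 0) :=
    Real.tendsto_exp_atBot.comp (Filter.tendsto_id.const_mul_atTop_of_neg hl)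
  have := ((hlim.eventually (gt_mem_nhds (abs_pos.2 h0))).and (Filter.eventually_ge_atTop 0)).exists
  obtain ⟨t, ht, ht0⟩ := this
  have e := h1 t ht0
  have : |f 0| ≤ Real.exp (l * t) := by
    rw [← e, abs_mul, abs_of_pos (Real.exp_pos _)]
    exact mul_le_of_le_one_left (Real.exp_pos _).le (hb t ht0)
  linarith

lemma on_circle (hp : ‖p‖ = 1) (hAs : ∀ v w, inner ℝ (A v) w = (inner ℝ v (A w) : ℝ)) (hAp : A p = 0)
    (hker : ∀ v, A v = 0 → ∃ c : ℝ, v = c • p) (hb : ∀ j, A (b j) = lam j • b j) {j0 : Fin 4}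
    (hj : ∀ j, j ≠ j0 → lam j ≤ 0) {y : E} (hy : ‖y‖ = 1) (hy0 : ∀ j, lam j < 0 → inner ℝ y (b j) = (0:ℝ)) :
    y ∈ range (gc p (b j0)) := by
  have hpp : inner ℝ p p = (1:ℝ) := by rw [real_inner_self_eq_norm_sq, hp]; norm_num
  have hyy : inner ℝ y y = (1:ℝ) := by rw [real_inner_self_eq_norm_sq, hy]; norm_num
  have hext : ∀ z, (∀ j, lam j * inner ℝ z (b j) = (0:ℝ)) → A z = 0 := by
    intro z hz
    rw [← b.sum_repr (A z)]
    refine Finset.sum_eq_zero fun j _ => ?_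
    rw [b.repr_apply_apply, real_inner_comm, hAs, hb, inner_smul_right, hz, zero_smul]
  by_cases hl : lam j0 = 0
  · have : A y = 0 := by
      refine hext y fun j => ?_
      by_cases hjj : j = j0
      · rw [hjj, hl, zero_mul]
      rcases (hj j hjj).lt_or_eq with h | h
      · rw [hy0 j h, mul_zero]
      · rw [h, zero_mul]
    obtain ⟨c, rfl⟩ := hker y this
    rw [inner_smul_left, inner_smul_right, hpp] at hyy
    obtain ⟨θ, h1, h2⟩ := exists_cos_sin (c := c) (a := 0) (by simp at hyy; nlinarith)
    exact ⟨θ, by simp [gc, h1, h2]⟩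
  · have hpb : inner ℝ p (b j0) = (0:ℝ) := by
      have := hAs p (b j0)
      rw [hAp, hb, inner_smul_right, inner_zero_left] at this
      exact (mul_eq_zero.1 this.symm).resolve_left hl
    have hbb : inner ℝ (b j0) (b j0) = (1:ℝ) := by rw [real_inner_self_eq_norm_sq, b.norm_eq_one]; norm_num
    set a : ℝ := inner ℝ y (b j0) with ha
    have : A (y - a • b j0) = 0 := by
      refine hext _ fun j => ?_
      rw [inner_sub_left, inner_smul_left]
      by_cases hjj : j = j0
      · subst hjj; rw [hbb, ← ha]; simp
      have h3 : inner ℝ (b j0) (b j) = (0:ℝ) := b.inner_eq_zero (Ne.symm hjj)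
      rw [h3, mul_zero, sub_zero]
      rcases (hj j hjj).lt_or_eq with h | h
      · rw [hy0 j h, mul_zero]
      · rw [h, zero_mul]
    obtain ⟨c, hc⟩ := hker _ this
    have hyc : y = c • p + a • b j0 := by rw [← hc]; abel
    have hn : c^2 + a^2 = 1 := by
      have h4 : inner ℝ (b j0) p = (0:ℝ) := by rw [real_inner_comm]; exact hpb
      rw [hyc] at hyy
      simp only [inner_add_left, inner_add_right, inner_smul_left, inner_smul_right, hpp, hbb, hpb, h4] at hyy
      simp at hyy; nlinarith
    obtain ⟨θ, h1, h2⟩ := exists_cos_sin hn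
    exact ⟨θ, by rw [gc, h1, h2, ← hyc]⟩

lemma stay {V : E → E} (F : Flow V) (hT : ∀ x, inner ℝ (V x) x = 0)
    (hp : ‖p‖ = 1) (hAs : ∀ v w, inner ℝ (A v) w = (inner ℝ v (A w) : ℝ)) (hAp : A p = 0)
    (hker : ∀ v, A v = 0 → ∃ c : ℝ, v = c • p) (hb : ∀ j, A (b j) = lam j • b j) {j0 : Fin 4}
    (hj : ∀ j, j ≠ j0 → lam j ≤ 0) {K : Set E} (hK : ∀ x ∈ K, ‖x‖ = 1 → V x = mf A p x)
    {y : E} (hy : ‖y‖ = 1) (hyK : ∀ t : ℝ, 0 ≤ t → F.Φ t y ∈ K) : y ∈ range (gc p (b j0)) := by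
  refine on_circle hp hAs hAp hker hb hj hy fun j hl => ?_
  have hpb : inner ℝ p (b j) = (0:ℝ) := by
    have := hAs p (b j)
    rw [hAp, hb, inner_smul_right, inner_zero_left] at this
    exact (mul_eq_zero.1 this.symm).resolve_left hl.ne
  have := decay_zero (f := fun t => inner ℝ (F.Φ t y) (b j)) hl (fun t ht => ?_) (fun t ht => ?_)
  · simpa [F.zero] using this
  · have h1 := (F.deriv y t).inner ℝ (hasDerivAt_const t (b j))
    rw [hK _ (hyK t ht) (by rw [F.norm_eq hT, hy])] at h1
    refine h1.congr_deriv ?_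
    unfold mf
    rw [inner_add_left, inner_neg_left, inner_smul_left, hpb, hAs, hb, inner_smul_right]
    simp
  · refine (abs_real_inner_le_norm _ _).trans ?_
    rw [F.norm_eq hT, hy, b.norm_eq_one]; norm_num

theorem one_crit_aux {g : E → ℂ} (hg : Good g) {η₁ η₂ : ℝ → E} (hL : Loops g η₁ η₂) (hp : p ∈ XX)
    (hcr : ∀ v, ang g p v = 0) (honly : ∀ x ∈ XX, x ≠ p → ∃ v, ang g x v ≠ 0)
    (hA : ∀ v w, inner ℝ (A v) w = hs g p v w) (hker : ∀ v, A v = 0 → ∃ c : ℝ, v = c • p)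
    (hb : ∀ j, A (b j) = lam j • b j) {j0 : Fin 4} (hj : ∀ j, j ≠ j0 → lam j ≤ 0) : False := by
  have hAp : A p = 0 := by
    refine ext_inner_right ℝ fun w => ?_
    rw [hA, hs_symm hg.toAmb hp, hs_rad hg hp hcr]; simp
  have hAs : ∀ v w, inner ℝ (A v) w = (inner ℝ v (A w) : ℝ) := fun v w => by
    rw [hA, hs_symm hg.toAmb hp, ← hA, real_inner_comm]
  obtain ⟨r, hr, hr1, c, hc, hloc⟩ := local_model hg hp hcr hA hker
  have hip : ∀ y ∈ ball p r, inner ℝ p y ≠ (0:ℝ) := by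
    intro y hy
    have h1 : inner ℝ p y = 1 + (inner ℝ p (y - p) : ℝ) := by
      rw [inner_sub_right, real_inner_self_eq_norm_sq, hp.1]; ring
    have h2 := abs_real_inner_le_norm p (y - p)
    rw [hp.1, one_mul, ← dist_eq_norm] at h2
    have := (abs_le.1 h2).1
    have h3 : dist y p < r := hy
    rw [h1]; apply ne_of_gt; linarith
  have hKO : closedBall p (r/2) ⊆ ball p r := closedBall_subset_ball (by linarith)
  let c' : ℝ := min 1 (c * (r/4)^2)
  have hc' : 0 < c' := by positivity
  have hlow : ∀ y, ‖y‖ = 1 → dist y p < r → r/4 ≤ dist y p → ang g y (mf A p y) ≤ -c' := by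
    intro y hy h1 h2
    have h3 := (hloc y hy h1).2
    have h4 : (r/4)^2 ≤ dist y p ^2 := pow_le_pow_left₀ (by positivity) h2 2
    have h5 : c * (r/4)^2 ≤ c * dist y p ^2 := mul_le_mul_of_nonneg_left h4 hc.le
    have h6 : c' ≤ c * (r/4)^2 := min_le_right _ _
    linarith
  obtain ⟨V, Kl, C, h1, h2, h3, h4, h5, h6⟩ := exists_field hg (K := closedBall p (r/2)) (O := ball p r)
    isClosed_closedBall isOpen_ball hKO (Wf := mf A p)
    (fun y hy => (mf_smooth (hip y hy)).contDiffWithinAt) (fun y hy => mf_tangent (hip y (hKO hy)))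
    (c := c') (min_le_left _ _) (fun y hy hy1 => (hloc y hy1 hy).1)
    (fun y hy hyK hy1 => hlow y hy1 hy (by
      rw [mem_closedBall, not_le] at hyK; linarith))
    (fun x hx hxK => honly x hx (by rintro rfl; exact hxK (mem_closedBall_self (by positivity))))
  obtain ⟨F⟩ := exists_flow V Kl h1 C h2
  refine core2 hg.toAmb hL F h3 h4 h1.continuous h2 (fun x hx => ?_) (K := closedBall p (r/2))
    (K' := ball p (r/4)) (c := c') (δ := r/4) hc' (by positivity) (fun x hx hxK => ?_) ?_ ?_
  · by_cases hxK : x ∈ closedBall p (r/2)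
    · rw [h5 x hxK hx.1]
      refine (hloc x hx.1 (hKO hxK)).2.trans ?_
      have : 0 ≤ c * dist x p ^ 2 := by positivity
      linarith
    · have := h6 x hx hxK; linarith
  · by_cases hxK' : x ∈ closedBall p (r/2)
    · rw [h5 x hxK' hx.1]
      exact hlow x hx.1 (hKO hxK') (by rwa [mem_ball, not_lt] at hxK)
    · exact h6 x hx hxK'
  · intro y hy z hz hz'
    apply hy
    rw [mem_closedBall]
    have := dist_triangle_left y p z
    rw [mem_ball] at hz'
    linarith
  · refine ⟨fun n t => F.Φ (-(n:ℝ)) (gc p (b j0) t), fun n => ?_, ?_⟩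
    · obtain ⟨K, hK⟩ := F.lip (-(n:ℝ))
      exact hK.locallyLipschitz.comp (gc_lip _ _)
    · rintro x ⟨hx, T, hxT⟩
      obtain ⟨n, hn⟩ := exists_nat_ge T
      obtain ⟨θ, hθ⟩ := stay F h3 hp.1 hAs hAp hker hb hj h5 (y := F.Φ n x) (by rw [F.norm_eq h3, hx.1])
        (fun t ht => by rw [← F.add]; exact hxT _ (by linarith))
      exact mem_iUnion.2 ⟨n, θ, by simp only; rw [hθ, F.neg]⟩

end

section

lemma ang_conj (g : E → ℂ) (x v : E) : ang (fun y => (starRingEnd ℂ) (g y)) x v = - ang g x v := by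
  unfold ang
  have : fderiv ℝ (fun y => (starRingEnd ℂ) (g y)) x v = (starRingEnd ℂ) (fderiv ℝ g x v) := by
    have h := Complex.conjCLE.comp_fderiv (f := g) (x := x)
    have h2 := congrArg (fun T => T v) h
    exact h2
  rw [this, ← map_div₀, Complex.conj_im]

lemma Good.conj {g : E → ℂ} (hg : Good g) : Good (fun y => (starRingEnd ℂ) (g y)) where
  norm := fun x hx => by
    filter_upwards [hg.norm x hx] with y hy
    simpa using hy
  smooth := fun x hx => Complex.conjCLE.contDiff.contDiffAt.comp x (hg.smooth x hx)
  rad := fun x hx => by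
    filter_upwards [hg.rad x hx] with y hy
    rw [ang_conj, hy, neg_zero]
  bind := fun x hx => by
    obtain ⟨O, hO, Y, h1, h2, h3⟩ := hg.bind x hx
    refine ⟨O, hO, fun y => - Y y, h1.neg, fun y hy hu => by simp [h2 y hy hu], fun y hy hX => ?_⟩
    rw [ang_conj, ang_neg, h3 y hy hX, neg_neg]

lemma conj_loop {g : E → ℂ} {η : ℝ → E}
    (g1 : ∀ θ : ℝ, g (η θ) = g (η 0) * Complex.exp (θ * Complex.I)) (p1 : η (2 * π) = η 0) (θ : ℝ) :
    (starRingEnd ℂ) (g (η (2 * π - θ))) = (starRingEnd ℂ) (g (η (2 * π - 0))) * Complex.exp (θ * Complex.I) := by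
  rw [sub_zero, p1, g1 (2 * π - θ), map_mul, ← Complex.exp_conj]
  congr 1
  simp only [map_mul, Complex.conj_ofReal, Complex.conj_I]
  rw [Complex.exp_eq_exp_iff_exists_int]
  exact ⟨-1, by push_cast; ring⟩

lemma Loops.conj {g : E → ℂ} {η₁ η₂ : ℝ → E} (h : Loops g η₁ η₂) :
    Loops (fun y => (starRingEnd ℂ) (g y)) (fun θ => η₁ (2 * π - θ)) (fun θ => η₂ (2 * π - θ)) where
  c1 := h.c1.comp (by fun_prop)
  A1 := fun θ => h.A1 _
  g1 := conj_loop h.g1 h.p1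
  p1 := by simp [h.p1]
  c2 := h.c2.comp (by fun_prop)
  A2 := fun θ => h.A2 _
  g2 := conj_loop h.g2 h.p2
  p2 := by simp [h.p2]

lemma hs_conj {g : E → ℂ} {p : E} (hg : Amb g) (hp : p ∈ XX) :
    hs (fun y => (starRingEnd ℂ) (g y)) p = - hs g p := by
  have hc : ContinuousAt (fun y => g y / g p) p := (hg.diff hp).continuousAt.div_const _
  have h1 : ∀ᶠ y in nhds p, g y / g p ∈ Complex.slitPlane := by
    refine hc.eventually (Complex.isOpen_slitPlane.mem_nhds ?_)
    show g p / g p ∈ _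
    rw [div_self (hg.ne_zero hp)]; exact Complex.one_mem_slitPlane
  have h2 : lft (fun y => (starRingEnd ℂ) (g y)) p =ᶠ[nhds p] fun y => - lft g p y := by
    filter_upwards [h1] with y hy
    unfold lft
    rw [← map_div₀, Complex.arg_conj, if_neg]
    exact (Complex.mem_slitPlane_iff_arg.1 hy).1
  unfold hs
  rw [h2.fderiv.fderiv_eq]
  have : fderiv ℝ (fun y => - lft g p y) = fun y => - fderiv ℝ (lft g p) y := by
    ext y v; rw [fderiv_fun_neg]
  rw [this, fderiv_fun_neg]

lemma comb4 (lam : Fin 4 → ℝ) (k : Fin 4) (hk : lam k = 0) :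
    (∃ j0, ∀ j, j ≠ j0 → lam j ≤ 0) ∨ (∃ j0, ∀ j, j ≠ j0 → 0 ≤ lam j) := by
  by_contra! hcon
  obtain ⟨h1, h2⟩ := hcon
  obtain ⟨a, ha, ha'⟩ := h1 k
  obtain ⟨b, hb, hb'⟩ := h1 a
  obtain ⟨c, hc, hc'⟩ := h2 k
  obtain ⟨d, hd, hd'⟩ := h2 c
  have e1 : a ≠ c := by rintro rfl; linarith
  have e2 : a ≠ d := by rintro rfl; linarith
  have e3 : b ≠ c := by rintro rfl; linarith
  have e4 : b ≠ d := by rintro rfl; linarith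
  have e5 : k ≠ b := by rintro rfl; linarith
  have e6 : k ≠ d := by rintro rfl; linarith
  clear h1 h2 hk ha' hb' hc' hd'
  omega

theorem one_crit {g : E → ℂ} {p : E} (hg : Good g) {η₁ η₂ : ℝ → E} (hL : Loops g η₁ η₂) (hp : p ∈ XX)
    (hcr : ∀ v, ang g p v = 0) (honly : ∀ x ∈ XX, x ≠ p → ∃ v, ang g x v ≠ 0)
    (hnd : ∀ v, inner ℝ v p = (0:ℝ) → v ≠ 0 → ∃ w, hs g p v w ≠ 0) : False := by
  let A : E →L[ℝ] E := LinearMap.toContinuousLinearMap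
    { toFun := fun v => (InnerProductSpace.toDual ℝ E).symm (hs g p v)
      map_add' := fun v w => by rw [map_add, map_add]
      map_smul' := fun c v => by rw [map_smul, map_smulₛₗ]; rfl }
  have hA : ∀ v w, inner ℝ (A v) w = hs g p v w := fun v w => by
    show inner ℝ ((InnerProductSpace.toDual ℝ E).symm (hs g p v)) w = _
    rw [InnerProductSpace.toDual_symm_apply]
  have hAp : A p = 0 := by
    refine ext_inner_right ℝ fun w => ?_
    rw [hA, hs_symm hg.toAmb hp, hs_rad hg hp hcr]; simp
  have hAs : (A : E →ₗ[ℝ] E).IsSymmetric := fun v w => by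
    show inner ℝ (A v) w = (inner ℝ v (A w) : ℝ)
    rw [hA, hs_symm hg.toAmb hp, ← hA, real_inner_comm]
  have hpp : inner ℝ p p = (1:ℝ) := by rw [real_inner_self_eq_norm_sq, hp.1]; norm_num
  have hker : ∀ v, A v = 0 → ∃ c : ℝ, v = c • p := by
    intro v hv
    refine ⟨inner ℝ v p, ?_⟩
    by_contra hne
    have h1 : v - (inner ℝ v p : ℝ) • p ≠ 0 := sub_ne_zero.2 hne
    obtain ⟨w, hw⟩ := hnd _ (by rw [inner_sub_left, inner_smul_left, hpp]; simp) h1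
    rw [← hA, map_sub, map_smul, hv, hAp] at hw
    simp at hw
  have hn : Module.finrank ℝ E = 4 := by simp
  let b := hAs.eigenvectorBasis hn
  let lam := hAs.eigenvalues hn
  have hb : ∀ j, A (b j) = lam j • b j := fun j => hAs.apply_eigenvectorBasis hn j
  have hk : ∃ k, lam k = 0 := by
    by_contra! hk
    have : p = 0 := by
      rw [← b.sum_repr p]
      refine Finset.sum_eq_zero fun j _ => ?_
      have h1 := hAs p (b j)
      change inner ℝ (A p) (b j) = (inner ℝ p (A (b j)) : ℝ) at h1
      rw [hAp, hb, inner_smul_right, inner_zero_left] at h1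
      rw [b.repr_apply_apply, real_inner_comm, (mul_eq_zero.1 h1.symm).resolve_left (hk j), zero_smul]
    rw [this] at hpp; simp at hpp
  obtain ⟨k, hk⟩ := hk
  rcases comb4 lam k hk with ⟨j0, hj⟩ | ⟨j0, hj⟩
  · exact one_crit_aux hg hL hp hcr honly hA hker hb hj
  · refine one_crit_aux (A := -A) (b := b) (lam := fun j => - lam j) hg.conj hL.conj hp (fun v => ?_) (fun x hx hne => ?_)
      (fun v w => ?_) (fun v hv => ?_) (fun j => ?_) (j0 := j0) (fun j hjj => ?_)
    · rw [ang_conj, hcr, neg_zero]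
    · obtain ⟨v, hv⟩ := honly x hx hne
      exact ⟨v, by rw [ang_conj]; exact neg_ne_zero.2 hv⟩
    · rw [hs_conj hg.toAmb hp]; simp [hA]
    · exact hker v (by simpa using hv)
    · simp [hb]
    · simpa using hj j hjj

end

section

/-- linear isometry onto the tangent space -/
def Uo (x : Sph) : (ℝ ∙ ((-x : Sph) : E))ᗮ ≃ₗᵢ[ℝ] E3 :=
  (OrthonormalBasis.fromOrthogonalSpanSingleton 3 (ne_zero_of_mem_unit_sphere (-x))).repr

def io (x : Sph) : E3 →L[ℝ] E := (ℝ ∙ ((-x : Sph) : E))ᗮ.subtypeL.comp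
  ((Uo x).symm.toContinuousLinearEquiv : E3 →L[ℝ] (ℝ ∙ ((-x : Sph) : E))ᗮ)

def psi (x : Sph) (u : E3) : E := stereoInvFunAux ((-x : Sph) : E) (io x u)

def sig (x : Sph) (v : E) : E3 := Uo x (stereoToFun ((-x : Sph) : E) v)

lemma io_norm (x : Sph) (u : E3) : ‖io x u‖ = ‖u‖ := (Uo x).symm.norm_map u

lemma io_mem (x : Sph) (u : E3) : io x u ∈ (ℝ ∙ ((-x : Sph) : E))ᗮ := ((Uo x).symm u).2

lemma io_inner (x : Sph) (u : E3) : inner ℝ (io x u) (x : E) = (0:ℝ) := by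
  have := Submodule.mem_orthogonal_singleton_iff_inner_left.1 (io_mem x u)
  rw [coe_neg_sphere, inner_neg_right] at this
  linarith

lemma io_surj (x : Sph) (v : E) (h : inner ℝ v (x : E) = (0:ℝ)) : ∃ u, io x u = v := by
  have : v ∈ (ℝ ∙ ((-x : Sph) : E))ᗮ := by
    rw [Submodule.mem_orthogonal_singleton_iff_inner_left, coe_neg_sphere, inner_neg_right, h, neg_zero]
  refine ⟨Uo x ⟨v, this⟩, ?_⟩
  show (((Uo x).symm (Uo x ⟨v, this⟩) : (ℝ ∙ ((-x : Sph) : E))ᗮ) : E) = v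
  rw [(Uo x).symm_apply_apply]

lemma psi_chart (x : Sph) (u : E3) : (((chartAt E3 x).symm u : Sph) : E) = psi x u := rfl

lemma sig_chart (x y : Sph) : chartAt E3 x y = sig x (y : E) := rfl

lemma psi_norm (x : Sph) (u : E3) : ‖psi x u‖ = 1 := by
  rw [← psi_chart]; simp

lemma psi_zero (x : Sph) : psi x 0 = x := by
  simp [psi, stereoInvFunAux]

lemma psi_deriv (x : Sph) : HasFDerivAt (psi x) (io x) 0 := by
  have h : HasFDerivAt (stereoInvFunAux ((-x : Sph) : E)) (ContinuousLinearMap.id ℝ E) (io x 0) := by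
    rw [map_zero]; exact hasFDerivAt_stereoInvFunAux _
  exact h.comp 0 (io x).hasFDerivAt

lemma psi_smooth (x : Sph) : ContDiff ℝ (⊤ : ℕ∞) (psi x) :=
  contDiff_stereoInvFunAux.comp (io x).contDiff

lemma sig_smooth (x : Sph) {v : E} (h : inner ℝ (x:E) v ≠ (-1:ℝ)) : ContDiffAt ℝ (⊤ : ℕ∞) (sig x) v := by
  have h1 : ContDiffAt ℝ (⊤ : ℕ∞) (stereoToFun ((-x : Sph) : E)) v := by
    refine contDiffOn_stereoToFun.contDiffAt (IsOpen.mem_nhds ?_ ?_)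
    · exact isOpen_ne_fun (innerSL ℝ _).continuous continuous_const
    · show innerSL ℝ ((-x : Sph) : E) v ≠ 1
      rw [innerSL_apply_apply, coe_neg_sphere, inner_neg_left]
      intro h'; apply h; linarith
  exact (Uo x).contDiff.contDiffAt.comp v h1

lemma psi_sig (x y : Sph) (h : y ≠ -x) : psi x (sig x y) = y := by
  rw [← psi_chart, ← sig_chart, OpenPartialHomeomorph.left_inv]
  show y ∈ (stereographic' 3 (-x)).source
  rw [stereographic'_source]; exact h

lemma sig_self (x : Sph) : sig x x = 0 := by
  have h1 : chartAt E3 x ((chartAt E3 x).symm 0) = (0 : E3) := by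
    rw [OpenPartialHomeomorph.right_inv]
    show (0 : E3) ∈ (stereographic' 3 (-x)).target
    rw [stereographic'_target]; trivial
  rw [sig_chart, psi_chart, psi_zero] at h1
  exact h1

variable {O : TopologicalSpace.Opens Sph}

lemma ext_zero (x : O) : extChartAt (𝓡 3) x x = (0 : E3) := by
  have : extChartAt (𝓡 3) x x = sig (x : Sph) ((x : Sph) : E) := by
    simp [extChartAt, TopologicalSpace.Opens.chartAt_eq]
    rfl
  rw [this, sig_self]

lemma ext_symm (x : O) : ∀ᶠ u in nhds (0 : E3),
    ((((extChartAt (𝓡 3) x).symm u : O) : Sph) : E) = psi (x : Sph) u := by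
  have h1 : (extChartAt (𝓡 3) x).target ∈ nhds (0 : E3) := by
    rw [← ext_zero x]; exact extChartAt_target_mem_nhds x
  filter_upwards [h1] with u hu
  have h2 := (extChartAt (𝓡 3) x).right_inv hu
  have h3 : extChartAt (𝓡 3) x ((extChartAt (𝓡 3) x).symm u) = chartAt E3 (x : Sph) ((extChartAt (𝓡 3) x).symm u : O) := by
    simp [extChartAt, TopologicalSpace.Opens.chartAt_eq]
  have h4 := (extChartAt (𝓡 3) x).map_target hu
  rw [h3] at h2
  have h5 := congrArg (chartAt E3 (x : Sph)).symm h2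
  rw [OpenPartialHomeomorph.left_inv] at h5
  · rw [← psi_chart, ← h5]
  · simpa [extChartAt, TopologicalSpace.Opens.chartAt_eq] using h4

end

section

variable {O : TopologicalSpace.Opens Sph} {f : O → Circle}

open Classical in
/-- homogeneous extension -/
def gg (f : O → Circle) (v : E) : ℂ :=
  if h : ∃ x : O, ((x : Sph) : E) = ‖v‖⁻¹ • v then (f h.choose : ℂ) else 1

lemma gg_eq (x : O) {v : E} (h : ((x : Sph) : E) = ‖v‖⁻¹ • v) : gg f v = f x := by
  unfold gg
  have h' : ∃ x : O, ((x : Sph) : E) = ‖v‖⁻¹ • v := ⟨x, h⟩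
  rw [dif_pos h']
  have := h'.choose_spec.trans h.symm
  rw [Subtype.ext (Subtype.ext this)]

lemma gg_self (x : O) : gg f ((x : Sph) : E) = f x := gg_eq x (by simp)

lemma gg_norm (v : E) : ‖gg f v‖ = 1 := by
  unfold gg
  split_ifs
  · exact Circle.norm_coe _
  · simp

lemma gg_smul {c : ℝ} (hc : 0 < c) (v : E) : gg f (c • v) = gg f v := by
  have : ‖c • v‖⁻¹ • c • v = ‖v‖⁻¹ • v := by
    rw [norm_smul, Real.norm_of_nonneg hc.le, smul_smul, mul_inv, mul_comm c⁻¹, mul_assoc, inv_mul_cancel₀ hc.ne', mul_one]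
  by_cases h : ∃ x : O, ((x : Sph) : E) = ‖v‖⁻¹ • v
  · obtain ⟨x, hx⟩ := h
    rw [gg_eq x hx, gg_eq x (hx.trans this.symm)]
  · have h' : ¬ ∃ x : O, ((x : Sph) : E) = ‖c • v‖⁻¹ • c • v := by rwa [this]
    rw [gg, gg, dif_neg h, dif_neg h']

lemma coe_smooth (hf : ContMDiff (𝓡 3) (𝓡 1) (⊤ : ℕ∞) f) :
    ContMDiff (𝓡 3) 𝓘(ℝ, ℂ) (⊤ : ℕ∞) (fun x => (f x : ℂ)) := by
  have : Fact (Module.finrank ℝ ℂ = 1 + 1) := finrank_real_complex_fact'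
  have h : ContMDiff (𝓡 1) 𝓘(ℝ, ℂ) (⊤ : ℕ∞) (fun z : Circle => (z : ℂ)) := contMDiff_coe_sphere (E := ℂ)
  exact h.comp hf

lemma chart_smooth (hf : ContMDiff (𝓡 3) (𝓡 1) (⊤ : ℕ∞) f) (x : O) :
    ContDiffAt ℝ (⊤ : ℕ∞) (fun u : E3 => (f ((extChartAt (𝓡 3) x).symm u) : ℂ)) 0 := by
  have h := (contMDiffAt_iff.1 (coe_smooth hf x)).2
  rw [ext_zero] at h
  have h4 : range (𝓡 3) = univ := by simp
  rw [h4, contDiffWithinAt_univ] at h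
  exact h

lemma nrm_contDiffAt {x : E} (hx : ‖x‖ = 1) : ContDiffAt ℝ (⊤ : ℕ∞) (fun v : E => ‖v‖⁻¹ • v) x := by
  have h0 : x ≠ 0 := by rintro rfl; simp at hx
  exact ((contDiffAt_norm ℝ h0).inv (by rw [hx]; norm_num)).smul contDiffAt_id

lemma gg_near (f : O → Circle) (x : O) : ∀ᶠ v in nhds ((x : Sph) : E),
    gg f v = f ((extChartAt (𝓡 3) x).symm (sig x (‖v‖⁻¹ • v))) := by
  have hx1 : ‖((x : Sph) : E)‖ = 1 := by simp
  have e1 : ‖((x : Sph) : E)‖⁻¹ • ((x : Sph) : E) = ((x : Sph) : E) := by simp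
  have hc : ContinuousAt (fun v : E => ‖v‖⁻¹ • v) ((x : Sph) : E) := (nrm_contDiffAt hx1).continuousAt
  have hc2 : ContinuousAt (fun v : E => sig x (‖v‖⁻¹ • v)) ((x : Sph) : E) := by
    refine ContinuousAt.comp (g := sig x) ?_ hc
    refine (sig_smooth x ?_).continuousAt
    rw [e1, real_inner_self_eq_norm_sq, hx1]; norm_num
  have t1 : ∀ᶠ v in nhds ((x : Sph) : E), ((((extChartAt (𝓡 3) x).symm (sig x (‖v‖⁻¹ • v)) : O) : Sph) : E)
      = psi (x : Sph) (sig x (‖v‖⁻¹ • v)) := by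
    have : Filter.Tendsto (fun v : E => sig x (‖v‖⁻¹ • v)) (nhds ((x : Sph) : E)) (nhds 0) := by
      have h := hc2.tendsto
      simp only [e1, sig_self] at h
      exact h
    exact this.eventually (ext_symm x)
  have t2 : ∀ᶠ v in nhds ((x : Sph) : E), v ≠ 0 := by
    refine eventually_ne_nhds ?_
    intro h; rw [h] at hx1; simp at hx1
  have t3 : ∀ᶠ v in nhds ((x : Sph) : E), ‖v‖⁻¹ • v ≠ - ((x : Sph) : E) := by
    refine hc.eventually_ne ?_
    rw [e1]
    intro h
    have h2 : (inner ℝ ((x : Sph) : E) ((x : Sph) : E) : ℝ) = inner ℝ (-((x : Sph) : E)) ((x : Sph) : E) := by rw [← h]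
    rw [inner_neg_left, real_inner_self_eq_norm_sq, hx1] at h2
    norm_num at h2
  filter_upwards [t1, t2, t3] with v h1 h2 h3
  refine gg_eq _ ?_
  have hs : ‖v‖⁻¹ • v ∈ sphere (0 : E) 1 := by
    simp [norm_smul, h2]
  have := psi_sig x ⟨‖v‖⁻¹ • v, hs⟩ (by
    intro h; apply h3
    have := congrArg (fun y : Sph => (y : E)) h
    simpa using this)
  rw [h1]; exact this

lemma gg_smooth (hf : ContMDiff (𝓡 3) (𝓡 1) (⊤ : ℕ∞) f) (x : O) : ContDiffAt ℝ (⊤ : ℕ∞) (gg f) ((x : Sph) : E) := by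
  have hx1 : ‖((x : Sph) : E)‖ = 1 := by simp
  have e1 : ‖((x : Sph) : E)‖⁻¹ • ((x : Sph) : E) = ((x : Sph) : E) := by simp
  refine ContDiffAt.congr_of_eventuallyEq ?_ (gg_near f x)
  have h1 : ContDiffAt ℝ (⊤ : ℕ∞) (fun v : E => sig x (‖v‖⁻¹ • v)) ((x : Sph) : E) := by
    refine ContDiffAt.comp (g := sig x) _ ?_ (nrm_contDiffAt hx1)
    refine sig_smooth x ?_
    rw [e1, real_inner_self_eq_norm_sq, hx1]; norm_num
  refine ContDiffAt.comp (g := fun u : E3 => (f ((extChartAt (𝓡 3) x).symm u) : ℂ)) _ ?_ h1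
  rw [e1, sig_self]
  exact chart_smooth hf x

lemma gg_rad (f : O → Circle) {v : E} (hv : DifferentiableAt ℝ (gg f) v) : fderiv ℝ (gg f) v v = 0 := by
  have h1 : HasDerivAt (fun t : ℝ => gg f (t • v)) (fderiv ℝ (gg f) v v) 1 := by
    have h2 : HasDerivAt (fun t : ℝ => t • v) v 1 := by
      simpa using (hasDerivAt_id (1:ℝ)).smul_const v
    have h3 : HasFDerivAt (gg f) (fderiv ℝ (gg f) v) ((1:ℝ) • v) := by rw [one_smul]; exact hv.hasFDerivAt
    exact h3.comp_hasDerivAt 1 h2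
  have h4 : HasDerivAt (fun t : ℝ => gg f (t • v)) 0 1 := by
    refine (hasDerivAt_const (1:ℝ) (gg f v)).congr_of_eventuallyEq ?_
    filter_upwards [lt_mem_nhds (show (0:ℝ) < 1 by norm_num)] with t ht
    exact gg_smul ht v
  exact h1.unique h4

/-- chart expression -/
lemma gg_psi (f : O → Circle) (x : O) : ∀ᶠ u in nhds (0 : E3), (f ((extChartAt (𝓡 3) x).symm u) : ℂ) = gg f (psi x u) := by
  filter_upwards [ext_symm x] with u hu
  refine (gg_eq _ ?_).symm
  rw [psi_norm, inv_one, one_smul, hu]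

lemma mfd_eq (hf : ContMDiff (𝓡 3) (𝓡 1) (⊤ : ℕ∞) f) (x : O) (u : E3) :
    mfderiv (𝓡 3) 𝓘(ℝ, ℂ) (fun x => (f x : ℂ)) x u = fderiv ℝ (gg f) ((x : Sph) : E) (io x u) := by
  have hd : MDifferentiableAt (𝓡 3) 𝓘(ℝ, ℂ) (fun x => (f x : ℂ)) x :=
    (coe_smooth hf x).mdifferentiableAt (by simp)
  rw [hd.mfderiv]
  have h1 : HasFDerivAt (fun u : E3 => gg f (psi x u)) ((fderiv ℝ (gg f) ((x : Sph) : E)).comp (io x)) 0 := by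
    have h2 : HasFDerivAt (gg f) (fderiv ℝ (gg f) ((x : Sph) : E)) (psi x 0) := by
      rw [psi_zero]; exact ((gg_smooth hf x).differentiableAt (by simp)).hasFDerivAt
    exact h2.comp 0 (psi_deriv x)
  have h3 : HasFDerivAt (writtenInExtChartAt (𝓡 3) 𝓘(ℝ, ℂ) x (fun x => (f x : ℂ)))
      ((fderiv ℝ (gg f) ((x : Sph) : E)).comp (io x)) 0 := by
    refine h1.congr_of_eventuallyEq ?_
    filter_upwards [gg_psi f x] with u hu
    rw [← hu]
    rfl
  have h4 : range (𝓡 3) = univ := by simp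
  rw [h4, fderivWithin_univ, ext_zero, h3.fderiv]
  rfl

lemma fderiv_zero_iff (hf : ContMDiff (𝓡 3) (𝓡 1) (⊤ : ℕ∞) f) (x : O) :
    (∀ u : E3, fderiv ℝ (gg f) ((x : Sph) : E) (io x u) = 0) ↔ ∀ v, fderiv ℝ (gg f) ((x : Sph) : E) v = 0 := by
  refine ⟨fun h v => ?_, fun h u => h _⟩
  have hx1 : ‖((x : Sph) : E)‖ = 1 := by simp
  obtain ⟨u, hu⟩ := io_surj x (v - (inner ℝ v ((x : Sph) : E) : ℝ) • ((x : Sph) : E)) (by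
    rw [inner_sub_left, inner_smul_left, real_inner_self_eq_norm_sq, hx1]; simp)
  have h1 := h u
  rw [hu, map_sub, map_smul, gg_rad f ((gg_smooth hf x).differentiableAt (by simp)), smul_zero, sub_zero] at h1
  exact h1

lemma crit_iff' (hf : ContMDiff (𝓡 3) (𝓡 1) (⊤ : ℕ∞) f) (x : O) :
    IsCrit f x ↔ ∀ v, fderiv ℝ (gg f) ((x : Sph) : E) v = 0 := by
  rw [← fderiv_zero_iff hf]
  have : Fact (Module.finrank ℝ ℂ = 1 + 1) := finrank_real_complex_fact'
  have hc : ContMDiff (𝓡 1) 𝓘(ℝ, ℂ) (⊤ : ℕ∞) (fun z : Circle => (z : ℂ)) := contMDiff_coe_sphere (E := ℂ)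
  have hcomp : ∀ u : E3, mfderiv (𝓡 3) 𝓘(ℝ, ℂ) (fun x => (f x : ℂ)) x u =
      mfderiv (𝓡 1) 𝓘(ℝ, ℂ) (fun z : Circle => (z : ℂ)) (f x) (mfderiv (𝓡 3) (𝓡 1) f x u) := by
    intro u
    have := mfderiv_comp x ((hc (f x)).mdifferentiableAt (by simp)) ((hf x).mdifferentiableAt (by simp))
    have h2 := congrArg (fun T => T u) this
    exact h2
  have hinj : Function.Injective (mfderiv (𝓡 1) 𝓘(ℝ, ℂ) (fun z : Circle => (z : ℂ)) (f x)) :=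
    mfderiv_coe_sphere_injective (E := ℂ) (n := 1) (f x)
  unfold IsCrit
  constructor
  · intro h u
    have : IsSimpleModule ℝ (TangentSpace (𝓡 1) (f x)) := by
      rw [isSimpleModule_iff_finrank_eq_one]
      show Module.finrank ℝ (EuclideanSpace ℝ (Fin 1)) = 1
      simp
    have h2 := ((mfderiv (𝓡 3) (𝓡 1) f x).toLinearMap.surjective_or_eq_zero).resolve_left h
    have h3 : mfderiv (𝓡 3) (𝓡 1) f x u = 0 := congrArg (fun T => T u) h2
    have h5 := (mfd_eq hf x u).symm.trans (hcomp u)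
    rw [h3, map_zero] at h5
    exact h5
  · intro h hs
    obtain ⟨u, hu⟩ := hs (show EuclideanSpace ℝ (Fin 1) from EuclideanSpace.single 0 1)
    have h1 := ((hcomp u).symm.trans (mfd_eq hf x u)).trans (h u)
    rw [hu] at h1
    have h2 := hinj (h1.trans (map_zero _).symm)
    have h3 := congrArg (fun w : EuclideanSpace ℝ (Fin 1) => w 0) h2
    simp at h3
    exact one_ne_zero (α := ℝ) h3

end

section

variable {O : TopologicalSpace.Opens Sph} {f : O → Circle}

lemma gg_amb (hO : ∀ y : Sph, y ∈ O ↔ (y : E) ∈ XX) (hf : ContMDiff (𝓡 3) (𝓡 1) (⊤ : ℕ∞) f) : Amb (gg f) where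
  norm := fun x hx => Filter.Eventually.of_forall fun y => gg_norm y
  smooth := fun x hx => by
    have hs : x ∈ sphere (0:E) 1 := by simpa using hx.1
    exact gg_smooth hf (⟨⟨x, hs⟩, (hO _).2 hx⟩ : O)

lemma gg_rad' (hO : ∀ y : Sph, y ∈ O ↔ (y : E) ∈ XX) (hf : ContMDiff (𝓡 3) (𝓡 1) (⊤ : ℕ∞) f)
    (x : E) (hx : x ∈ XX) : ∀ᶠ y in nhds x, ang (gg f) y y = 0 := by
  have h1 := (((gg_amb hO hf).smooth x hx).of_le (m := 1) (by exact_mod_cast le_top)).eventually (by simp)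
  filter_upwards [h1] with y hy
  unfold ang
  rw [gg_rad f (hy.differentiableAt (by simp))]; simp

lemma crit_iff (hO : ∀ y : Sph, y ∈ O ↔ (y : E) ∈ XX) (hf : ContMDiff (𝓡 3) (𝓡 1) (⊤ : ℕ∞) f) (x : O) :
    IsCrit f x ↔ ∀ v, ang (gg f) ((x : Sph) : E) v = 0 := by
  rw [crit_iff' hf]
  have hx := (hO x).1 x.2
  refine forall_congr' fun v => ⟨fun h => by simp [ang, h], fun h => ?_⟩
  rw [(gg_amb hO hf).fderiv_eq hx, h]; simp

lemma hess_eq (hO : ∀ y : Sph, y ∈ O ↔ (y : E) ∈ XX) (hf : ContMDiff (𝓡 3) (𝓡 1) (⊤ : ℕ∞) f) (x : O)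
    (hc : IsCrit f x) (v w : E3) :
    hessAt f x v w = hs (gg f) ((x : Sph) : E) (io x w) (io x v) := by
  have hx := (hO x).1 x.2
  have hA := gg_amb hO hf
  have hcr := (crit_iff hO hf x).1 hc
  set p : E := ((x : Sph) : E) with hp
  unfold hessAt
  rw [ext_zero]
  have h1 : liftChart f x =ᶠ[nhds 0] fun u => lft (gg f) p (psi x u) := by
    filter_upwards [gg_psi f x] with u hu
    unfold liftChart lft
    rw [hu, hp, gg_self]
  have hpt : Filter.Tendsto (psi (x : Sph)) (nhds 0) (nhds p) := by
    have := (psi_smooth x).continuous.continuousAt (x := 0)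
    rw [ContinuousAt, psi_zero] at this; exact this
  have hd : ∀ᶠ u in nhds (0 : E3), DifferentiableAt ℝ (lft (gg f) p) (psi x u) := by
    have h1 := ((lft_contDiffAt hA hx).of_le (m := 1) (by exact_mod_cast le_top)).eventually (by simp)
    refine hpt.eventually ?_
    filter_upwards [h1] with y hy
    exact hy.differentiableAt (by simp)
  have h2 : (fun u => fderiv ℝ (liftChart f x) u v) =ᶠ[nhds 0]
      fun u => fderiv ℝ (lft (gg f) p) (psi x u) (fderiv ℝ (psi x) u v) := by
    filter_upwards [h1.fderiv (𝕜 := ℝ), hd] with u hu hdu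
    rw [hu]
    have := hdu.hasFDerivAt.comp u ((psi_smooth x).differentiable (by simp) u).hasFDerivAt
    have h3 := this.fderiv
    change fderiv ℝ (fun u => lft (gg f) p (psi x u)) u = _ at h3
    rw [h3]; rfl
  rw [h2.fderiv_eq]
  have h4 : HasFDerivAt (fun u => fderiv ℝ (lft (gg f) p) (psi x u)) ((hs (gg f) p).comp (io x)) 0 := by
    have h5 := hs_hasFDerivAt hA hx
    rw [hp, ← psi_zero x] at h5
    have := h5.comp 0 (psi_deriv x)
    rw [psi_zero] at this
    exact this
  have h6 : DifferentiableAt ℝ (fun u => fderiv ℝ (psi (x : Sph)) u v) 0 := by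
    have : ContDiffAt ℝ 1 (fderiv ℝ (psi (x : Sph))) 0 :=
      ((psi_smooth x).contDiffAt).fderiv_right (by rw [one_add_one_eq_two]; exact two_le)
    exact (this.differentiableAt (by simp)).clm_apply (differentiableAt_const v)
  have h7 := h4.clm_apply h6.hasFDerivAt
  rw [h7.fderiv]
  have h8 : ∀ z, fderiv ℝ (lft (gg f) p) p z = 0 := fun z => by
    rw [(lft_fderiv hA hx).self_of_nhds z, hcr]
  simp only [add_apply, ContinuousLinearMap.comp_apply, psi_zero, ContinuousLinearMap.flip_apply, (psi_deriv (x : Sph)).fderiv]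
  rw [h8, zero_add]

lemma nd_of (hO : ∀ y : Sph, y ∈ O ↔ (y : E) ∈ XX) (hf : ContMDiff (𝓡 3) (𝓡 1) (⊤ : ℕ∞) f) (x : O)
    (hc : IsCrit f x) (hn : Nondeg f x) (v : E) (hv : inner ℝ v ((x : Sph) : E) = (0:ℝ)) (hv0 : v ≠ 0) :
    ∃ w, hs (gg f) ((x : Sph) : E) v w ≠ 0 := by
  obtain ⟨u, rfl⟩ := io_surj x v hv
  obtain ⟨w, hw⟩ := hn u (by rintro rfl; simp at hv0)
  rw [hess_eq hO hf x hc, hs_symm (gg_amb hO hf) ((hO x).1 x.2)] at hw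
  exact ⟨_, hw⟩

end

section

variable {U : Link}

lemma carrier_iff (hU : U.carrier = Ucar) (y : Sph) : y ∈ U.carrier ↔ (y : E) ∈ UU := by
  rw [hU]
  simp [Ucar, UU]

lemma compl_iff (hU : U.carrier = Ucar) (y : Sph) : y ∈ U.compl ↔ (y : E) ∈ XX := by
  have h1 : y ∈ U.compl ↔ y ∉ U.carrier := Iff.rfl
  rw [h1, carrier_iff hU]
  refine ⟨fun h => XX_or_UU (by simp) h, XX_not_UU⟩

lemma coe_toCircle {z : ℂ} (hz : z ≠ 0) : (toCircle z : ℂ) = z / ‖z‖ := by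
  have h := Complex.norm_mul_exp_arg_mul_I z
  have hn : (‖z‖ : ℂ) ≠ 0 := by simpa using hz
  rw [toCircle, Circle.coe_exp]
  field_simp
  rw [mul_comm]; exact h

/-- ambient tube -/
def TT (F : BRMap U) (i : Fin U.n) (q : ℝ × ℂ) : E := (F.tub i q : E)

variable (F : BRMap U) (i : Fin U.n)

lemma tset_open : IsOpen ((univ : Set ℝ) ×ˢ ball (0:ℂ) 1) := isOpen_univ.prod isOpen_ball

lemma TT_smooth : ContDiffOn ℝ (⊤ : ℕ∞) (TT F i) (univ ×ˢ ball (0:ℂ) 1) := by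
  rw [← contMDiffOn_iff_contDiffOn]
  exact (contMDiff_coe_sphere (E := E) (n := 3)).comp_contMDiffOn (F.tub_smooth i)

lemma TT_cda {q : ℝ × ℂ} (hq : q.2 ∈ ball (0:ℂ) 1) : ContDiffAt ℝ (⊤ : ℕ∞) (TT F i) q :=
  (TT_smooth F i).contDiffAt (tset_open.mem_nhds ⟨trivial, hq⟩)

lemma TT_fderiv {q : ℝ × ℂ} (hq : q.2 ∈ ball (0:ℂ) 1) (v : ℝ × ℂ) :
    fderiv ℝ (TT F i) q v = tangAmb (F.tub i) q v := by
  have h1 : MDifferentiableAt 𝓘(ℝ, ℝ × ℂ) (𝓡 3) (F.tub i) q :=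
    ((F.tub_smooth i).contMDiffAt (tset_open.mem_nhds ⟨trivial, hq⟩)).mdifferentiableAt (by simp)
  have h2 : MDifferentiableAt (𝓡 3) 𝓘(ℝ, E) (fun p : Sph => (p : E)) (F.tub i q) :=
    ((contMDiff_coe_sphere (E := E) (n := 3) (m := 1)) _).mdifferentiableAt (by simp)
  have h3 := mfderiv_comp q h2 h1
  have h4 := congrArg (fun T => T v) h3
  rw [← mfderiv_eq_fderiv]
  exact h4

/-- radial extension -/
def Th (q : (ℝ × ℂ) × ℝ) : E := (1 + q.2) • TT F i q.1

lemma Th_cda {q : (ℝ × ℂ) × ℝ} (hq : q.1.2 ∈ ball (0:ℂ) 1) : ContDiffAt ℝ (⊤ : ℕ∞) (Th F i) q :=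
  (contDiffAt_const.add contDiffAt_snd).smul ((TT_cda F i hq).comp q contDiffAt_fst)

lemma Th_fderiv {q : (ℝ × ℂ) × ℝ} (hq : q.1.2 ∈ ball (0:ℂ) 1) (v : (ℝ × ℂ) × ℝ) :
    fderiv ℝ (Th F i) q v = (1 + q.2) • fderiv ℝ (TT F i) q.1 v.1 + v.2 • TT F i q.1 := by
  have h1 : HasFDerivAt (fun q : (ℝ × ℂ) × ℝ => 1 + q.2) (ContinuousLinearMap.snd ℝ (ℝ × ℂ) ℝ) q :=
    hasFDerivAt_snd.const_add 1
  have h2 := ((TT_cda F i hq).differentiableAt (by simp)).hasFDerivAt.comp q hasFDerivAt_fst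
  have h3 := (h1.smul h2).fderiv
  change fderiv ℝ (Th F i) q = _ at h3
  rw [h3]; simp

lemma Th_inj {q : (ℝ × ℂ) × ℝ} (hq : q.1.2 ∈ ball (0:ℂ) 1) (hr : -1 < q.2) :
    Function.Injective (fderiv ℝ (Th F i) q) := by
  rw [injective_iff_map_eq_zero]
  rintro ⟨⟨a, w⟩, s⟩ h
  rw [Th_fderiv F i hq] at h
  have hpos := F.positive i q.1.1 q.1.2 hq
  have e : ((a, w) : ℝ × ℂ) = a • ((1, 0) : ℝ × ℂ) + w.re • ((0, 1) : ℝ × ℂ) + w.im • ((0, Complex.I) : ℝ × ℂ) := by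
    refine Prod.ext (by simp) ?_
    apply Complex.ext <;> simp
  have e' : ∀ v, tangAmb (F.tub i) (q.1.1, q.1.2) v = fderiv ℝ (TT F i) q.1 v := fun v => (TT_fderiv F i hq v).symm
  rw [e', e', e'] at hpos
  change 0 < det4 (TT F i q.1) _ _ _ at hpos
  simp only at h
  rw [e, map_add, map_add, map_smul, map_smul, map_smul] at h
  unfold det4 at hpos
  have hk := Matrix.eq_zero_of_vecMul_eq_zero hpos.ne' (v := ![s, (1 + q.2) * a, (1 + q.2) * w.re, (1 + q.2) * w.im]) (by
    ext j
    have hj := congrArg (fun y : E => y j) h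
    simp [Matrix.vecMul, dotProduct, Fin.sum_univ_four] at hj ⊢
    linarith)
  have hr' : 1 + q.2 ≠ 0 := by linarith
  have k0 := congrFun hk 0
  have k1 := congrFun hk 1
  have k2 := congrFun hk 2
  have k3 := congrFun hk 3
  simp [hr'] at k0 k1 k2 k3
  have : w = 0 := Complex.ext k2 k3
  simp [k0, k1, this]

lemma Th_equiv {q : (ℝ × ℂ) × ℝ} (hq : q.1.2 ∈ ball (0:ℂ) 1) (hr : -1 < q.2) :
    ∃ e : ((ℝ × ℂ) × ℝ) ≃L[ℝ] E, HasFDerivAt (Th F i) (e : ((ℝ × ℂ) × ℝ) →L[ℝ] E) q := by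
  have hfr : Module.finrank ℝ ((ℝ × ℂ) × ℝ) = Module.finrank ℝ E := by
    simp [Complex.finrank_real_complex]
  let l := LinearMap.linearEquivOfInjective (fderiv ℝ (Th F i) q).toLinearMap (Th_inj F i hq hr) hfr
  refine ⟨l.toContinuousLinearEquiv, ?_⟩
  have := ((Th_cda F i hq).differentiableAt (by simp)).hasFDerivAt
  refine this.congr_fderiv ?_
  ext v <;> rfl

lemma gg_Th {q : (ℝ × ℂ) × ℝ} (hq : q.1.2 ∈ ball (0:ℂ) 1) (hz : q.1.2 ≠ 0) (hr : -1 < q.2) :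
    gg F.f (Th F i q) = toCircle q.1.2 := by
  rw [Th, gg_smul (by linarith)]
  have hoff := F.tub_off i q.1.1 q.1.2 hq hz
  have := gg_self (f := F.f) ⟨F.tub i q.1, hoff⟩
  rw [F.adapted i q.1.1 q.1.2 hq hz ⟨F.tub i q.1, hoff⟩ rfl] at this
  exact this

lemma Th_norm {q : (ℝ × ℂ) × ℝ} (hr : -1 < q.2) (h : ‖Th F i q‖ = 1) : q.2 = 0 := by
  have h1 : ‖TT F i q.1‖ = 1 := by simp [TT]
  rw [Th, norm_smul, h1, mul_one, Real.norm_eq_abs, abs_of_pos (by linarith)] at h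
  linarith

lemma tub_carrier {t : ℝ} {z : ℂ} (hz : z ∈ ball (0:ℂ) 1) : F.tub i (t, z) ∈ U.carrier ↔ z = 0 := by
  refine ⟨fun h => ?_, ?_⟩
  · by_contra h0
    exact F.tub_off i t z hz h0 h
  · rintro rfl
    rw [F.tub_core]
    have hp : (0:ℝ) < 2 * π := by positivity
    have hper : Function.Periodic (U.emb i) (2 * π) := U.periodic i
    obtain ⟨s, hs, hs'⟩ := hper.exists_mem_Ico₀ hp t
    rw [hs']
    exact mem_iUnion.2 ⟨i, s, Ico_subset_Icc_self hs, rfl⟩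

lemma ang_Th (hU : U.carrier = Ucar) {q : (ℝ × ℂ) × ℝ} (hq : q.1.2 ∈ ball (0:ℂ) 1) (hz : q.1.2 ≠ 0) (hr : -1 < q.2)
    (hX : Th F i q ∈ XX) : ang (gg F.f) (Th F i q) (fderiv ℝ (Th F i) q ((0, Complex.I * q.1.2), 0)) = 1 := by
  have hA := gg_amb (compl_iff hU) F.smooth
  set c : ℝ → (ℝ × ℂ) × ℝ := fun s => ((q.1.1, Complex.exp (s * Complex.I) * q.1.2), q.2) with hc
  have c0 : c 0 = q := by simp [hc]
  have he : HasDerivAt (fun s : ℝ => Complex.exp (s * Complex.I)) Complex.I 0 := by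
    have h1 : HasDerivAt (fun s : ℝ => (s : ℂ) * Complex.I) (1 * Complex.I) 0 :=
      (Complex.ofRealCLM.hasDerivAt (x := (0:ℝ))).mul_const Complex.I
    have := h1.cexp
    simpa using this
  have hcd : HasDerivAt c ((0, Complex.I * q.1.2), 0) 0 :=
    ((hasDerivAt_const 0 q.1.1).prodMk (he.mul_const q.1.2)).prodMk (hasDerivAt_const 0 q.2)
  have hg : HasFDerivAt (gg F.f) (fderiv ℝ (gg F.f) (Th F i q)) (Th F i (c 0)) := by
    rw [c0]; exact (hA.diff hX).hasFDerivAt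
  have hT : HasFDerivAt (Th F i) (fderiv ℝ (Th F i) q) (c 0) := by
    rw [c0]; exact ((Th_cda F i hq).differentiableAt (by simp)).hasFDerivAt
  have h1 := (hg.comp (c 0) hT).comp_hasDerivAt 0 hcd
  have hzn : (‖q.1.2‖ : ℂ) ≠ 0 := by simpa using hz
  have e1 : ∀ s, gg F.f (Th F i (c s)) = Complex.exp (s * Complex.I) * gg F.f (Th F i q) := by
    intro s
    have hn : ‖(c s).1.2‖ = ‖q.1.2‖ := by simp [hc, Complex.norm_exp_ofReal_mul_I]
    rw [gg_Th F i hq hz hr, gg_Th F i (q := c s) (by simpa [hn] using hq) (by simp [hc, hz]) hr, coe_toCircle hz,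
      coe_toCircle (by simp [hc, hz]), hn]
    simp only [hc]; ring
  have h2 : HasDerivAt (fun s => gg F.f (Th F i (c s))) (Complex.I * gg F.f (Th F i q)) 0 := by
    rw [funext e1]
    exact he.mul_const _
  have h3 := h1.unique h2
  unfold ang
  have h4 : fderiv ℝ (gg F.f) (Th F i q) (fderiv ℝ (Th F i) q ((0, Complex.I * q.1.2), 0)) = Complex.I * gg F.f (Th F i q) := h3
  rw [h4, mul_div_assoc, div_self (hA.ne_zero hX)]; simp

end

section

lemma good_gg {U : Link} (hU : U.carrier = Ucar) (F : BRMap U) : Good (gg F.f) := by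
  refine { toAmb := gg_amb (compl_iff hU) F.smooth, rad := gg_rad' (compl_iff hU) F.smooth, bind := ?_ }
  intro x hx
  have hxS : ‖x‖ = 1 := hx.1
  set xs : Sph := ⟨x, by simpa using hxS⟩ with hxs
  have hc : xs ∈ U.carrier := (carrier_iff hU xs).2 hx
  obtain ⟨i, t0, -, ht⟩ : ∃ i, ∃ t0, t0 ∈ Icc 0 (2*π) ∧ U.emb i t0 = xs := by
    simpa [Link.carrier] using hc
  set q0 : (ℝ × ℂ) × ℝ := ((t0, 0), 0) with hq0
  have hTq : Th F i q0 = x := by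
    simp [Th, TT, hq0, F.tub_core, ht, hxs]
  have h0 : q0.1.2 ∈ ball (0:ℂ) 1 := by simp [hq0]
  obtain ⟨e0, he0⟩ := Th_equiv F i h0 (by simp [hq0])
  set PH := ContDiffAt.toOpenPartialHomeomorph (Th F i) (Th_cda F i h0) he0 (by simp) with hPH
  have hPc : (PH : (ℝ × ℂ) × ℝ → E) = Th F i := by
    simp [hPH]
  have hs0 : q0 ∈ PH.source := ContDiffAt.mem_toOpenPartialHomeomorph_source _ _ _
  set D : Set ((ℝ × ℂ) × ℝ) := {q | q.1.2 ∈ ball (0:ℂ) 1 ∧ -1 < q.2} with hD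
  have hDo : IsOpen D := by
    refine IsOpen.inter (isOpen_ball.preimage (by fun_prop)) ?_
    exact isOpen_lt continuous_const continuous_snd
  have hOo : IsOpen (PH.target ∩ PH.symm ⁻¹' D) := PH.symm.isOpen_inter_preimage hDo
  have hxO : x ∈ PH.target ∩ PH.symm ⁻¹' D := by
    have h1 : PH q0 = x := by rw [hPc, hTq]
    refine ⟨h1 ▸ PH.map_source hs0, ?_⟩
    rw [mem_preimage, ← h1, PH.left_inv hs0]
    exact ⟨h0, by simp [hq0]⟩
  have hr : ∀ y ∈ PH.target ∩ PH.symm ⁻¹' D, Th F i (PH.symm y) = y := by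
    intro y hy
    rw [← hPc, PH.right_inv hy.1]
  refine ⟨_, hOo.mem_nhds hxO, fun y => fderiv ℝ (Th F i) (PH.symm y) ((0, Complex.I * (PH.symm y).1.2), 0), ?_, ?_, ?_⟩
  · intro y hy
    apply ContDiffAt.contDiffWithinAt
    obtain ⟨e, he⟩ := Th_equiv F i hy.2.1 hy.2.2
    have hsy : ContDiffAt ℝ (⊤ : ℕ∞) PH.symm y := by
      refine PH.contDiffAt_symm (f₀' := e) hy.1 ?_ ?_
      · rw [hPc]; exact he
      · rw [hPc]; exact Th_cda F i hy.2.1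
    have h1 : ContDiffAt ℝ (⊤ : ℕ∞) (fderiv ℝ (Th F i)) (PH.symm y) :=
      (Th_cda F i hy.2.1).fderiv_right (by simp)
    have h2 : ContDiffAt ℝ (⊤ : ℕ∞) (fun y => fderiv ℝ (Th F i) (PH.symm y)) y := h1.comp y hsy
    refine h2.clm_apply ?_
    have h3 : ContDiffAt ℝ (⊤ : ℕ∞) (fun y => (PH.symm y).1.2) y := hsy.fst.snd
    exact (contDiffAt_const.prodMk (contDiffAt_const.mul h3)).prodMk contDiffAt_const
  · intro y hy hyU
    have h1 := hr y hy
    have hr0 : (PH.symm y).2 = 0 := Th_norm F i hy.2.2 (by rw [h1]; exact hyU.1)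
    have h2 : TT F i (PH.symm y).1 = y := by
      rw [← h1]; conv_rhs => rw [Th, hr0]
      simp [h1]
    have h3 : F.tub i ((PH.symm y).1.1, (PH.symm y).1.2) ∈ U.carrier := by
      rw [carrier_iff hU]
      change TT F i (PH.symm y).1 ∈ UU
      rw [h2]; exact hyU
    have h4 := (tub_carrier F i hy.2.1).1 h3
    simp only [h4, mul_zero]
    exact map_zero (fderiv ℝ (Th F i) (PH.symm y))
  · intro y hy hyX
    have h1 := hr y hy
    have hz : (PH.symm y).1.2 ≠ 0 := by
      intro h0
      have hr0 : (PH.symm y).2 = 0 := Th_norm F i hy.2.2 (by rw [h1]; exact hyX.1)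
      have h2 : TT F i (PH.symm y).1 = y := by
        rw [← h1]; conv_rhs => rw [Th, hr0]
        simp [h1]
      have h3 := (tub_carrier F i (t := (PH.symm y).1.1) hy.2.1).2 h0
      rw [carrier_iff hU] at h3
      change TT F i (PH.symm y).1 ∈ UU at h3
      rw [h2] at h3
      exact XX_not_UU hyX h3
    have := ang_Th F i hU hy.2.1 hz hy.2.2 (by rw [h1]; exact hyX)
    rw [h1] at this
    exact this

lemma loop_one {U : Link} (hU : U.carrier = Ucar) (F : BRMap U) {c : ℝ} {R : ℝ} (hR : 0 < R) {x : E}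
    (hx : x ∈ UU) (hxc : Z x = c) (hc : c = 0 ∨ c = 1/2) : ∃ η : ℝ → E, Continuous η ∧ (∀ θ, η θ ∈ AA c R) ∧
      (∀ θ : ℝ, gg F.f (η θ) = gg F.f (η 0) * Complex.exp (θ * Complex.I)) ∧ η (2*π) = η 0 := by
  have hxS : ‖x‖ = 1 := hx.1
  set xs : Sph := ⟨x, by simpa using hxS⟩ with hxs
  have hca : xs ∈ U.carrier := (carrier_iff hU xs).2 hx
  obtain ⟨i, t0, -, ht⟩ : ∃ i, ∃ t0, t0 ∈ Icc 0 (2*π) ∧ U.emb i t0 = xs := by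
    simpa [Link.carrier] using hca
  have hT0 : TT F i (t0, 0) = x := by simp [TT, F.tub_core, ht, hxs]
  have hcont : ContinuousAt (fun z : ℂ => Z (TT F i (t0, z))) 0 := by
    have h1 : ContinuousAt (TT F i) (t0, 0) := (TT_cda F i (by simp)).continuousAt
    have h2 : ContinuousAt (fun z : ℂ => (t0, z)) 0 := by fun_prop
    exact continuous_Z.continuousAt.comp (ContinuousAt.comp (f := fun z : ℂ => (t0, z)) h1 h2)
  obtain ⟨δ, hδ, hb⟩ := Metric.continuousAt_iff.1 hcont R hR
  obtain ⟨ε, hε, hε1, hεδ⟩ : ∃ ε : ℝ, 0 < ε ∧ ε < 1 ∧ ε < δ :=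
    ⟨min 1 δ / 2, by positivity, by linarith [min_le_left 1 δ], by linarith [min_le_right 1 δ, show 0 < min 1 δ by positivity]⟩
  have hn : ∀ θ : ℝ, ‖(ε : ℂ) * Complex.exp (θ * Complex.I)‖ = ε := by
    intro θ; simp [Complex.norm_exp_ofReal_mul_I, abs_of_pos hε]
  have hne : ∀ θ : ℝ, (ε : ℂ) * Complex.exp (θ * Complex.I) ≠ 0 := by
    intro θ; rw [← norm_pos_iff, hn]; exact hε
  have hball : ∀ θ : ℝ, (ε : ℂ) * Complex.exp (θ * Complex.I) ∈ ball (0:ℂ) 1 := by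
    intro θ; rw [mem_ball_zero_iff, hn]; exact hε1
  have hgg : ∀ θ : ℝ, gg F.f (TT F i (t0, ε * Complex.exp (θ * Complex.I))) = Complex.exp (θ * Complex.I) := by
    intro θ
    have := gg_Th F i (q := ((t0, ε * Complex.exp (θ * Complex.I)), 0)) (hball θ) (hne θ) (by simp)
    rw [coe_toCircle (hne θ), hn] at this
    simp only [Th, add_zero, one_smul] at this
    rw [this]
    have : (ε : ℂ) ≠ 0 := by simpa using hε.ne'
    field_simp
  refine ⟨fun θ => TT F i (t0, ε * Complex.exp (θ * Complex.I)), ?_, ?_, ?_, ?_⟩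
  · rw [continuous_iff_continuousAt]
    intro θ
    refine ContinuousAt.comp (f := fun θ : ℝ => (t0, (ε : ℂ) * Complex.exp (θ * Complex.I))) (TT_cda F i (hball θ)).continuousAt ?_
    fun_prop
  · intro θ
    have hof := F.tub_off i t0 _ (hball θ) (hne θ)
    rw [carrier_iff hU] at hof
    have hN : ‖TT F i (t0, ε * Complex.exp (θ * Complex.I))‖ = 1 := by simp [TT]
    refine ⟨hN, ?_, ?_⟩
    · intro h
      apply hof
      change TT F i (t0, ε * Complex.exp (θ * Complex.I)) ∈ UU
      refine ⟨hN, ?_⟩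
      rw [h]; rcases hc with hc | hc <;> simp [hc]
    · have := hb (x := ε * Complex.exp (θ * Complex.I)) (by rw [dist_zero_right, hn]; exact hεδ)
      rw [hT0, hxc, dist_eq_norm] at this
      exact this
  · intro θ
    simp only [hgg]; simp
  · simp [Complex.exp_two_pi_mul_I]

lemma loops_gg {U : Link} (hU : U.carrier = Ucar) (F : BRMap U) : ∃ η₁ η₂, Loops (gg F.f) η₁ η₂ := by
  have h1 : mk4 0 1 ∈ UU := by
    refine ⟨?_, ?_⟩
    · rw [norm_one_iff]; simp
    · simp
  have h2 : mk4 (1/2) (√3/2 : ℝ) ∈ UU := by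
    refine ⟨?_, ?_⟩
    · rw [norm_one_iff]; simp
      rw [div_pow]; norm_num
    · simp
  obtain ⟨η₁, a1, a2, a3, a4⟩ := loop_one hU F (c := 0) (R := 1/4) (by norm_num) h1 (by simp) (by simp)
  obtain ⟨η₂, b1, b2, b3, b4⟩ := loop_one hU F (c := 1/2) (R := 1/8) (by norm_num) h2 (by simp) (by simp)
  exact ⟨η₁, η₂, ⟨a1, a2, a3, a4, b1, b2, b3, b4⟩⟩

lemma lower {U : Link} (hU : U.carrier = Ucar) (F : BRMap U) (hM : MorseFun F.f) : 2 ≤ (critSet F.f).encard := by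
  obtain ⟨η₁, η₂, hL⟩ := loops_gg hU F
  have hG := good_gg hU F
  have hO := compl_iff hU
  have hcr := crit_iff hO F.smooth
  by_contra hlt
  have hle : (critSet F.f).encard ≤ 1 := by
    have : (critSet F.f).encard < 1 + 1 := by
      rw [one_add_one_eq_two]; exact not_le.1 hlt
    exact ENat.lt_add_one_iff (by simp) |>.1 this
  have key : ∀ y ∈ XX, ∃ x : U.compl, ((x : Sph) : E) = y := by
    intro y hy
    have hyS : ‖y‖ = 1 := hy.1
    exact ⟨⟨⟨y, by simpa using hyS⟩, (hO _).2 hy⟩, rfl⟩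
  rcases Set.encard_le_one_iff_eq.1 hle with h | ⟨p, h⟩
  · refine no_fibration hG hL fun y hy => ?_
    obtain ⟨x, rfl⟩ := key y hy
    by_contra hv
    push Not at hv
    have : x ∈ critSet F.f := (hcr x).2 hv
    simp [h] at this
  · have hp : IsCrit F.f p := by
      have : p ∈ critSet F.f := by simp [h]
      exact this
    refine one_crit hG hL ((hO _).1 p.2) ((hcr p).1 hp) (fun y hy hne => ?_) (fun v hv hv0 => ?_)
    · obtain ⟨x, rfl⟩ := key y hy
      by_contra hv
      push Not at hv
      have : x ∈ critSet F.f := (hcr x).2 hv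
      rw [h] at this
      apply hne
      rw [show x = p from this]
    · exact nd_of hO F.smooth p hp (hM p hp) v hv hv0

end

section

lemma Z_add' (x y : E) : Z (x + y) = Z x + Z y := by apply Complex.ext <;> simp
lemma Z_smul' (c : ℝ) (x : E) : Z (c • x) = c * Z x := by apply Complex.ext <;> simp
lemma W_add' (x y : E) : W (x + y) = W x + W y := by apply Complex.ext <;> simp
lemma W_smul' (c : ℝ) (x : E) : W (c • x) = c * W x := by apply Complex.ext <;> simp

/-- `Z` as a linear map -/
def ZL : E →L[ℝ] ℂ :=
  LinearMap.toContinuousLinearMap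
    { toFun := Z, map_add' := Z_add', map_smul' := fun c x => by rw [Z_smul']; simp }

lemma ZL_apply (x : E) : ZL x = Z x := rfl

lemma inner_E (x y : E) : (inner ℝ x y : ℝ) = x 0 * y 0 + x 1 * y 1 + x 2 * y 2 + x 3 * y 3 := by
  simp [PiLp.inner_apply, Fin.sum_univ_four, mul_comm]

/-- angular derivative of a normalized function -/
lemma ang_of_quot {g q : E → ℂ} {y : E} {q' : E →L[ℝ] ℂ} (hq : HasFDerivAt q q' y) (h0 : q y ≠ 0)
    (hg : ∀ᶠ x in nhds y, g x = q x / ‖q x‖) (v : E) : ang g y v = (q' v / q y).im := by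
  have hn0 : ‖q y‖ ≠ 0 := norm_ne_zero_iff.2 h0
  have hnc : (‖q y‖ : ℂ) ≠ 0 := by exact_mod_cast hn0
  have hnd : DifferentiableAt ℝ (fun x => ‖q x‖) y := hq.differentiableAt.norm ℝ h0
  have hnd' : HasFDerivAt (fun x => (‖q x‖ : ℂ)) (Complex.ofRealCLM.comp (fderiv ℝ (fun x => ‖q x‖) y)) y :=
    Complex.ofRealCLM.hasFDerivAt.comp y hnd.hasFDerivAt
  have hgy : g y = q y / ‖q y‖ := hg.self_of_nhds
  have hgd : DifferentiableAt ℝ g y := by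
    have h1 : DifferentiableAt ℝ (fun x => q x / (‖q x‖ : ℂ)) y := by
      simp only [div_eq_mul_inv]
      exact hq.differentiableAt.mul (hnd'.differentiableAt.inv hnc)
    exact h1.congr_of_eventuallyEq hg
  have hg0 : g y ≠ 0 := by rw [hgy]; exact div_ne_zero h0 hnc
  have h2 : q =ᶠ[nhds y] fun x => g x * ‖q x‖ := by
    filter_upwards [hg, hq.continuousAt.eventually_ne h0] with x hx hx0
    rw [hx]
    have : (‖q x‖ : ℂ) ≠ 0 := by simpa using hx0
    field_simp
  have h3 := (hgd.hasFDerivAt.mul hnd').congr_of_eventuallyEq h2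
  have h4 := hq.unique h3
  have h5 : q' v = g y * (fderiv ℝ (fun x => ‖q x‖) y v : ℝ) + ‖q y‖ * fderiv ℝ g y v := by
    rw [h4]; simp
  have h6 : q' v / q y = ((fderiv ℝ (fun x => ‖q x‖) y v / ‖q y‖ : ℝ) : ℂ) + fderiv ℝ g y v / g y := by
    have e : q y = g y * ‖q y‖ := h2.self_of_nhds
    rw [h5, e]; push_cast
    rw [← e]
    field_simp
    rw [← e]; ring
  rw [h6, ang, Complex.add_im, Complex.ofReal_im, zero_add]

variable {U : Link}

/-- explicit angular derivative -/
def Aex (y v : E) : ℝ :=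
  ((2 * Z v - (inner ℝ y v / ‖y‖ : ℝ)) / (2 * Z y - ‖y‖) - Z v / Z y).im

def Reg (y : E) : Prop := y ≠ 0 ∧ Z y ≠ 0 ∧ 2 * Z y - ‖y‖ ≠ 0

lemma reg_open {y : E} (h : Reg y) : ∀ᶠ x in nhds y, Reg x := by
  have h1 : ContinuousAt (fun x : E => 2 * Z x - (‖x‖ : ℂ)) y := by
    have := continuous_Z; fun_prop
  filter_upwards [continuousAt_id.eventually_ne h.1, continuous_Z.continuousAt.eventually_ne h.2.1,
    h1.eventually_ne h.2.2] with x a b c using ⟨a, b, c⟩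

lemma reg_XX {y : E} (h : y ∈ XX) : Reg y := by
  obtain ⟨h1, h2, h3⟩ := h
  refine ⟨?_, h2, ?_⟩
  · rintro rfl; simp at h1
  · rw [h1]; intro h
    apply h3
    push_cast at h
    linear_combination h / 2

lemma gg_u (hU : U.carrier = Ucar) (u : BRMap U) (hu : ∀ x : U.compl, u.f x = toCircle (Gu ((x : Sph) : E)))
    {y : E} (hy : Reg y) :
    gg u.f y = ((2 * Z y - ‖y‖) / Z y) / ‖(2 * Z y - ‖y‖) / Z y‖ := by
  obtain ⟨h0, h1, h2⟩ := hy
  have hn : ‖y‖ ≠ 0 := norm_ne_zero_iff.2 h0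
  have hnc : (‖y‖ : ℂ) ≠ 0 := by exact_mod_cast hn
  have hX : ‖y‖⁻¹ • y ∈ XX := by
    refine ⟨by rw [norm_smul]; simp [hn], ?_, ?_⟩
    · rw [Z_smul']; simp [hn, h1]
    · rw [Z_smul']; intro h
      apply h2
      push_cast at h
      field_simp at h
      linear_combination h
  set x : U.compl := ⟨⟨‖y‖⁻¹ • y, by simpa using hX.1⟩, (compl_iff hU _).2 hX⟩
  have hG : Gu ((x : Sph) : E) = (2 * Z y - ‖y‖) / Z y := by
    change Gu (‖y‖⁻¹ • y) = _
    rw [Gu, Z_smul']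
    push_cast
    field_simp
  rw [gg_eq (f := u.f) x rfl, hu, hG, coe_toCircle (div_ne_zero h2 h1)]

lemma ang_u (hU : U.carrier = Ucar) (u : BRMap U) (hu : ∀ x : U.compl, u.f x = toCircle (Gu ((x : Sph) : E)))
    {y : E} (hy : Reg y) (v : E) : ang (gg u.f) y v = Aex y v := by
  obtain ⟨h0, h1, h2⟩ := id hy
  have hZ : HasFDerivAt Z ZL y := ZL.hasFDerivAt
  have hN : HasFDerivAt (fun x : E => ‖x‖) (‖y‖⁻¹ • innerSL ℝ y) y := by
    have h := (hasStrictFDerivAt_norm_sq y).hasFDerivAt.sqrt (by simpa using h0)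
    have e : (fun x : E => ‖x‖) = fun x => √(‖x‖^2) := by
      funext x; rw [Real.sqrt_sq (norm_nonneg _)]
    rw [e]
    refine h.congr_fderiv ?_
    rw [Real.sqrt_sq (norm_nonneg _)]
    ext w
    have : ‖y‖ ≠ 0 := norm_ne_zero_iff.2 h0
    simp
    field_simp
  have hNc := Complex.ofRealCLM.hasFDerivAt.comp y hN
  have ha := (hZ.const_mul (2:ℂ)).sub hNc
  have hi := (hasFDerivAt_inv' (𝕜 := ℝ) h1).comp y hZ
  have hq := ha.mul hi
  have := ang_of_quot (g := gg u.f) hq (by simpa using ⟨h2, h1⟩) (by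
    filter_upwards [reg_open hy] with x hx
    rw [gg_u hU u hu hx]
    simp [div_eq_mul_inv]) v
  rw [this, Aex]
  congr 1
  simp [ZL_apply]
  field_simp
  ring

lemma hs_line {g : E → ℂ} (hA : Amb g) {p : E} (hp : p ∈ XX) (v : E) :
    HasDerivAt (fun t : ℝ => fderiv ℝ (lft g p) (p + t • v) v) (hs g p v v) 0 := by
  have hline : HasDerivAt (fun t : ℝ => p + t • v) v 0 := by
    simpa using ((hasDerivAt_id (0:ℝ)).smul_const v).const_add p
  have hd : HasFDerivAt (fun y => fderiv ℝ (lft g p) y v) ((hs g p).flip v) p := by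
    have := (hs_hasFDerivAt hA hp).clm_apply (hasFDerivAt_const v p)
    refine this.congr_fderiv ?_
    ext w; simp
  exact HasFDerivAt.comp_hasDerivAt_of_eq (0:ℝ) hd hline (by simp)

lemma hs_u (hU : U.carrier = Ucar) (u : BRMap U) (hu : ∀ x : U.compl, u.f x = toCircle (Gu ((x : Sph) : E)))
    {p : E} (hp : p ∈ XX) (v : E) (hv : inner ℝ p v = (0:ℝ)) :
    hs (gg u.f) p v v = ((- (‖v‖^2 : ℝ) * (2 * Z p - 1) - 4 * Z v ^ 2) / (2 * Z p - 1) ^ 2 + Z v ^ 2 / Z p ^ 2).im := by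
  have hA := gg_amb (compl_iff hU) u.smooth
  obtain ⟨h0, h1, h2⟩ := reg_XX hp
  have hp1 : ‖p‖ = 1 := hp.1
  rw [hp1] at h2; push_cast at h2
  have hline : HasDerivAt (fun t : ℝ => p + t • v) v 0 := by
    simpa using ((hasDerivAt_id (0:ℝ)).smul_const v).const_add p
  have hline' : Filter.Tendsto (fun t : ℝ => p + t • v) (nhds 0) (nhds p) := by
    have := hline.continuousAt.tendsto; simpa using this
  have hd1 : HasDerivAt (fun t : ℝ => fderiv ℝ (lft (gg u.f) p) (p + t • v) v) (hs (gg u.f) p v v) 0 :=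
    hs_line hA hp v
  have hN : HasDerivAt (fun t : ℝ => ‖p + t • v‖) 0 0 := by
    have e : (fun t : ℝ => ‖p + t • v‖) = fun t => √(1 + t^2 * ‖v‖^2) := by
      funext t
      rw [← Real.sqrt_sq (norm_nonneg (p + t • v)), norm_add_sq_real, hp1, inner_smul_right, hv, norm_smul, mul_pow]
      simp
    rw [e]
    have := ((((hasDerivAt_id (0:ℝ)).pow 2).mul_const (‖v‖^2)).const_add 1).sqrt (by simp)
    simpa using this
  have hNc : HasDerivAt (fun t : ℝ => (‖p + t • v‖ : ℂ)) 0 0 := by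
    simpa using hN.ofReal_comp
  have hI : HasDerivAt (fun t : ℝ => ((inner ℝ (p + t • v) v / ‖p + t • v‖ : ℝ) : ℂ)) ((‖v‖^2 : ℝ) : ℂ) 0 := by
    have e : (fun t : ℝ => (inner ℝ (p + t • v) v : ℝ)) = fun t => t * ‖v‖^2 := by
      funext t
      rw [inner_add_left, hv, inner_smul_left]; simp
    have h3 : HasDerivAt (fun t : ℝ => (inner ℝ (p + t • v) v : ℝ)) (‖v‖^2) 0 := by
      rw [e]; simpa using (hasDerivAt_id (0:ℝ)).mul_const (‖v‖^2)
    have := (h3.div hN (by simp [hp1])).ofReal_comp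
    simpa [hp1] using this
  have hZ : HasDerivAt (fun t : ℝ => Z (p + t • v)) (Z v) 0 := by
    have := (ZL.hasFDerivAt (x := p + (0:ℝ) • v)).comp_hasDerivAt (0:ℝ) hline
    exact this
  have hfin := ((hI.const_sub (2 * Z v)).div ((hZ.const_mul 2).sub hNc) (by simpa [hp1] using h2)).sub
    ((hasDerivAt_const (0:ℝ) (Z v)).div hZ (by simpa using h1))
  have him := Complex.imCLM.hasFDerivAt.comp_hasDerivAt (0:ℝ) hfin
  have hev : (fun t : ℝ => fderiv ℝ (lft (gg u.f) p) (p + t • v) v) =ᶠ[nhds 0] fun t => Aex (p + t • v) v := by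
    filter_upwards [hline'.eventually (lft_fderiv hA hp), hline'.eventually (reg_open (reg_XX hp))] with t ht ht'
    rw [ht, ang_u hU u hu ht']
  have hd2 := hd1.unique (HasDerivAt.congr_of_eventuallyEq him hev)
  rw [hd2]
  simp only [hp1, zero_smul, add_zero, hv, Complex.imCLM_apply]
  congr 1
  simp [hp1]
  ring

end

section

lemma inv1 {s : ℝ} (hs : s ^ 2 = 1) : (2 * (⟨1/2, s * √3 / 2⟩ : ℂ) - 1)⁻¹ = ⟨0, - s * √3 / 3⟩ := by
  have h3 : √3 * √3 = 3 := Real.mul_self_sqrt (by norm_num)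
  apply inv_eq_of_mul_eq_one_right
  apply Complex.ext <;> simp
  nlinarith

lemma inv2 {s : ℝ} (hs : s ^ 2 = 1) : (⟨1/2, s * √3 / 2⟩ : ℂ)⁻¹ = ⟨1/2, - s * √3 / 2⟩ := by
  have h3 : √3 * √3 = 3 := Real.mul_self_sqrt (by norm_num)
  apply inv_eq_of_mul_eq_one_right
  apply Complex.ext <;> simp
  · nlinarith
  · ring

lemma crit_conv {s : ℝ} (hs : s ^ 2 = 1) {x : E} (hn : ‖x‖ = 1) (hz : Z x = ⟨1/2, s * √3 / 2⟩) (hw : W x = 0) (v : E) :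
    Aex x v = 0 := by
  have h3 : √3 * √3 = 3 := Real.mul_self_sqrt (by norm_num)
  have x0 : x 0 = 1/2 := by rw [← Z_re, hz]
  have x1 : x 1 = s * √3/2 := by rw [← Z_im, hz]
  have x2 : x 2 = 0 := by rw [← W_re, hw]; simp
  have x3 : x 3 = 0 := by rw [← W_im, hw]; simp
  rw [Aex, hn, hz, inner_E, x0, x1, x2, x3, div_eq_mul_inv _ (2 * _ - _), div_eq_mul_inv (Z v), Complex.ofReal_one, inv1 hs, inv2 hs]
  simp
  linear_combination (v 1 / 6 * (√3 * √3)) * hs + v 1 / 6 * h3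

lemma crit_nec {x : E} (hx : x ∈ XX) (h : ∀ v, Aex x v = 0) :
    W x = 0 ∧ (Z x = ⟨1/2, √3 / 2⟩ ∨ Z x = ⟨1/2, - √3 / 2⟩) := by
  obtain ⟨hn, hz0, hzh⟩ := id hx
  have h2 : 2 * Z x - 1 ≠ 0 := by
    have := (reg_XX hx).2.2; rw [hn] at this; exact_mod_cast this
  have hns : Complex.normSq (2 * Z x - 1) ≠ 0 := by simpa using h2
  have hW : W x = 0 := by
    by_contra hW
    have e1 := h (mk4 0 (W x))
    have hWn : (x 2 * x 2 + x 3 * x 3) ≠ 0 := by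
      intro h0; apply hW
      apply Complex.ext <;> simp <;> nlinarith [sq_nonneg (x 2), sq_nonneg (x 3)]
    have him : x 1 = 0 := by
      rw [Aex, hn, inner_E] at e1
      simp [Complex.div_im] at e1
      rcases e1 with e1 | e1
      · rcases e1 with e1 | e1
        · exact absurd (by linarith) hWn
        · exact e1
      · exact absurd e1 h2
    have e2 := h (mk4 Complex.I 0)
    have hzr : Z x = (x 0 : ℂ) := by apply Complex.ext <;> simp [him]
    rw [Aex, hn, inner_E, hzr] at e2
    have hx0 : x 0 ≠ 0 := by intro h0; apply hz0; rw [hzr, h0]; simp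
    have hx2 : 2 * x 0 - 1 ≠ 0 := by intro h0; apply h2; rw [hzr]; have := congrArg (fun r : ℝ => (r : ℂ)) h0; simpa using this
    have e3 : (2 * Z (mk4 Complex.I 0) - ((x 0 * (mk4 Complex.I 0) 0 + x 1 * (mk4 Complex.I 0) 1 + x 2 * (mk4 Complex.I 0) 2 + x 3 * (mk4 Complex.I 0) 3) / 1 : ℝ)) / (2 * (x 0 : ℂ) - (1:ℝ)) - Z (mk4 Complex.I 0) / (x 0 : ℂ) = Complex.I * ((2 / (2 * x 0 - 1) - 1 / x 0 : ℝ) : ℂ) := by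
      simp [him]
      ring
    rw [e3, Complex.mul_im, Complex.ofReal_re, Complex.ofReal_im, Complex.I_re, Complex.I_im] at e2
    field_simp at e2
    norm_num at e2
  refine ⟨hW, ?_⟩
  have x2 : x 2 = 0 := by rw [← W_re, hW]; simp
  have x3 : x 3 = 0 := by rw [← W_im, hW]; simp
  have hn' := (norm_one_iff' x).1 hn
  rw [x2, x3] at hn'
  have e := h (mk4 (Complex.I * Z x) 0)
  rw [Aex, hn, inner_E] at e
  have e3 : (2 * Z (mk4 (Complex.I * Z x) 0) - ((x 0 * (mk4 (Complex.I * Z x) 0) 0 + x 1 * (mk4 (Complex.I * Z x) 0) 1 + x 2 * (mk4 (Complex.I * Z x) 0) 2 + x 3 * (mk4 (Complex.I * Z x) 0) 3) / 1 : ℝ)) / (2 * Z x - (1:ℝ)) - Z (mk4 (Complex.I * Z x) 0) / Z x = Complex.I * (2 * Z x - 1)⁻¹ := by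
    simp
    have : (-(x 0 * x 1 : ℂ) + x 1 * x 0) = 0 := by ring
    rw [this]
    field_simp
    ring
  rw [e3] at e
  simp [Complex.inv_re] at e
  have x0 : x 0 = 1/2 := by
    rcases e with e | e
    · linarith
    · exact absurd e h2
  have h3 : √3 * √3 = 3 := Real.mul_self_sqrt (by norm_num)
  have : (x 1 - √3/2) * (x 1 + √3/2) = 0 := by rw [x0] at hn'; nlinarith
  rcases mul_eq_zero.1 this with h | h
  · left; apply Complex.ext <;> simp [x0]; linarith
  · right; apply Complex.ext <;> simp [x0]; linarith

lemma hess_val {s : ℝ} (hs : s ^ 2 = 1) {p v : E} (hz : Z p = ⟨1/2, s * √3 / 2⟩) (hw : W p = 0)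
    (hv : inner ℝ p v = (0:ℝ)) :
    ((- (‖v‖^2 : ℝ) * (2 * Z p - 1) - 4 * Z v ^ 2) / (2 * Z p - 1) ^ 2 + Z v ^ 2 / Z p ^ 2).im =
      s * √3 / 3 * (‖W v‖^2 - 4 * v 1 ^ 2) ∧ v 0 = - s * √3 * v 1 := by
  have h3 : √3 * √3 = 3 := Real.mul_self_sqrt (by norm_num)
  have x0 : p 0 = 1/2 := by rw [← Z_re, hz]
  have x1 : p 1 = s * √3/2 := by rw [← Z_im, hz]
  have x2 : p 2 = 0 := by rw [← W_re, hw]; simp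
  have x3 : p 3 = 0 := by rw [← W_im, hw]; simp
  rw [inner_E, x0, x1, x2, x3] at hv
  have hv0 : v 0 = - s * √3 * v 1 := by linarith
  refine ⟨?_, hv0⟩
  have hZv : Z v = v 1 * ⟨- s * √3, 1⟩ := by apply Complex.ext <;> simp [hv0]; ring
  have hnv : ‖v‖^2 = 4 * v 1 ^ 2 + ‖W v‖^2 := by
    rw [norm_sq_E, Complex.sq_norm (Z v), Complex.normSq_apply]; simp [hv0]
    linear_combination (v 1 ^2 * √3 * √3) * hs + v 1 ^ 2 * h3
  have hss : s = 1 ∨ s = -1 := by simpa using hs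
  have r2 : √3 ^ 2 = 3 := by rw [pow_two, h3]
  have r3 : √3 ^ 3 = 3 * √3 := by rw [pow_succ, r2]
  have r4 : √3 ^ 4 = 9 := by rw [pow_succ, r3]; linarith
  have r5 : √3 ^ 5 = 9 * √3 := by rw [pow_succ, r4]
  rw [hnv, div_eq_mul_inv, div_eq_mul_inv, ← inv_pow, ← inv_pow, hz, inv1 hs, inv2 hs, hZv]
  generalize ‖W v‖ = ω
  rcases hss with rfl | rfl <;> simp [pow_two] <;> ring_nf <;> simp only [r2, r3, r4, r5] <;> ring

end

section

lemma u_crit {U : Link} (hU : U.carrier = Ucar) (u : BRMap U) (hu : ∀ x : U.compl, u.f x = toCircle (Gu ((x : Sph) : E)))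
    (x : U.compl) : IsCrit u.f x ↔ W ((x : Sph) : E) = 0 ∧
      (Z ((x : Sph) : E) = ⟨1/2, √3 / 2⟩ ∨ Z ((x : Sph) : E) = ⟨1/2, - √3 / 2⟩) := by
  have hX := (compl_iff hU x).1 x.2
  rw [crit_iff (compl_iff hU) u.smooth]
  simp only [ang_u hU u hu (reg_XX hX)]
  refine ⟨crit_nec hX, ?_⟩
  rintro ⟨hw, hz | hz⟩ v
  · exact crit_conv (s := 1) (by norm_num) hX.1 (by rw [hz]; simp) hw v
  · exact crit_conv (s := -1) (by norm_num) hX.1 (by rw [hz]; simp) hw v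

lemma u_hess {U : Link} (hU : U.carrier = Ucar) (u : BRMap U) (hu : ∀ x : U.compl, u.f x = toCircle (Gu ((x : Sph) : E)))
    (x : U.compl) {s : ℝ} (hs : s ^ 2 = 1) (hc : IsCrit u.f x) (hz : Z ((x : Sph) : E) = ⟨1/2, s * √3 / 2⟩)
    (hw : W ((x : Sph) : E) = 0) : ∃ e : E3 ≃ₗ[ℝ] ℝ × ℂ,
      (∀ v, hessAt u.f x v v = s * √3 / 3 * (‖(e v).2‖ ^ 2 - 4 * (e v).1 ^ 2)) ∧
      ∀ v w, 4 * hessAt u.f x v w = hessAt u.f x (v + w) (v + w) - hessAt u.f x (v - w) (v - w) := by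
  have hX := (compl_iff hU x).1 x.2
  have hO := compl_iff hU
  have hin : ∀ v, inner ℝ ((x : Sph) : E) (io x v) = (0:ℝ) := fun v => by
    rw [real_inner_comm]; exact io_inner _ v
  let l : E3 →ₗ[ℝ] ℝ × ℂ :=
    { toFun := fun v => ((io x v) 1, W (io x v))
      map_add' := fun v w => by simp [W_add']
      map_smul' := fun c v => by simp [W_smul'] }
  have hl : Function.Injective l := by
    rw [injective_iff_map_eq_zero]
    intro v hv
    have h1 : (io x v) 1 = 0 := congrArg Prod.fst hv
    have h2 : W (io x v) = 0 := congrArg Prod.snd hv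
    have h0 := (hess_val hs hz hw (hin v)).2
    rw [h1, mul_zero] at h0
    have : io x v = 0 := by
      apply E_ext
      · apply Complex.ext <;> simp [h0, h1]
      · rw [h2]; apply Complex.ext <;> simp
    have h3 := io_norm x v
    rw [this, norm_zero] at h3
    exact norm_eq_zero.1 h3.symm
  have hfr : Module.finrank ℝ E3 = Module.finrank ℝ (ℝ × ℂ) := by
    simp [Complex.finrank_real_complex]
  refine ⟨LinearMap.linearEquivOfInjective l hl hfr, fun v => ?_, fun v w => ?_⟩
  · rw [hess_eq hO u.smooth x hc, hs_u hU u hu hX _ (hin v), (hess_val hs hz hw (hin v)).1]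
    rfl
  · simp only [hess_eq hO u.smooth x hc, map_add, map_sub, ContinuousLinearMap.add_apply, ContinuousLinearMap.sub_apply]
    rw [hs_symm (gg_amb hO u.smooth) hX (io x v) (io x w)]
    ring

lemma u_nondeg {f : E3 → E3 → ℝ} {s : ℝ} (hs : s ^ 2 = 1) (e : E3 ≃ₗ[ℝ] ℝ × ℂ)
    (h1 : ∀ v, f v v = s * √3 / 3 * (‖(e v).2‖ ^ 2 - 4 * (e v).1 ^ 2))
    (h2 : ∀ v w, 4 * f v w = f (v + w) (v + w) - f (v - w) (v - w)) (v : E3) (hv : v ≠ 0) :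
    ∃ w, f v w ≠ 0 := by
  refine ⟨e.symm (-(e v).1, (e v).2), fun h => ?_⟩
  have h3 := h2 v (e.symm (-(e v).1, (e v).2))
  rw [h, h1, h1] at h3
  simp only [map_add, map_sub, LinearEquiv.apply_symm_apply, Prod.fst_add, Prod.snd_add, Prod.fst_sub, Prod.snd_sub, sub_self, norm_zero] at h3
  have e1 : (e v).2 + (e v).2 = (2:ℝ) • (e v).2 := by rw [two_smul]
  rw [e1, norm_smul] at h3
  have hs0 : s ≠ 0 := by rintro rfl; norm_num at hs
  have h30 : √3 ≠ 0 := by positivity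
  have h4 : s * √3 / 3 * (‖(e v).2‖^2 + 4 * (e v).1 ^2) = 0 := by
    norm_num at h3
    linarith
  have h5 : ‖(e v).2‖^2 + 4 * (e v).1 ^2 = 0 := by
    rcases mul_eq_zero.1 h4 with h | h
    · exfalso; revert h; simp [hs0]
    · exact h
  have h6 : (e v).1 = 0 := by nlinarith [sq_nonneg ‖(e v).2‖, sq_nonneg (e v).1]
  have h7 : ‖(e v).2‖ = 0 := by nlinarith [sq_nonneg ‖(e v).2‖, sq_nonneg (e v).1]
  apply hv
  apply e.injective
  rw [map_zero]
  exact Prod.ext h6 (norm_eq_zero.1 h7)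

lemma fr1 (e : E3 ≃ₗ[ℝ] ℝ × ℂ) :
    Module.finrank ℝ (LinearMap.range (e.symm.toLinearMap ∘ₗ LinearMap.inl ℝ ℝ ℂ)) = 1 := by
  rw [LinearMap.finrank_range_of_inj]
  · simp
  · exact e.symm.injective.comp LinearMap.inl_injective

lemma fr2 (e : E3 ≃ₗ[ℝ] ℝ × ℂ) :
    Module.finrank ℝ (LinearMap.range (e.symm.toLinearMap ∘ₗ LinearMap.inr ℝ ℝ ℂ)) = 2 := by
  rw [LinearMap.finrank_range_of_inj]
  · simp [Complex.finrank_real_complex]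
  · exact e.symm.injective.comp LinearMap.inr_injective

lemma pt_u {U : Link} (hU : U.carrier = Ucar) {s : ℝ} (hs : s ^ 2 = 1) :
    ∃ x : U.compl, ((x : Sph) : E) = mk4 ⟨1/2, s * √3 / 2⟩ 0 := by
  have h3 : √3 * √3 = 3 := Real.mul_self_sqrt (by norm_num)
  have hs0 : s ≠ 0 := by rintro rfl; norm_num at hs
  have hX : mk4 ⟨1/2, s * √3 / 2⟩ 0 ∈ XX := by
    refine ⟨?_, ?_, ?_⟩
    · rw [norm_one_iff']; simp
      linear_combination (√3 * √3) / 4 * hs + h3 / 4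
    · intro h
      have := congrArg Complex.re h
      simp at this
    · intro h
      have := congrArg Complex.im h
      simp [hs0] at this
  exact ⟨⟨⟨_, mem_sphere_zero_iff_norm.2 hX.1⟩, (compl_iff hU _).2 hX⟩, rfl⟩

lemma main_aux (U : Link) (hU : U.carrier = Ucar)
    (u : BRMap U) (hu : ∀ x : U.compl, u.f x = toCircle (Gu ((x : Sph) : E))) :
    MN U = 2 ∧ MorseFun u.f ∧ Minimal u ∧
    ∃ a b : U.compl, a ≠ b ∧ critSet u.f = {a, b} ∧ HasIndex u.f a 1 ∧ HasIndex u.f b 2 := by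
  have h30 : 0 < √3 := by positivity
  obtain ⟨a, ha⟩ := pt_u hU (s := 1) (by norm_num)
  obtain ⟨b, hb⟩ := pt_u hU (s := -1) (by norm_num)
  have hza : Z ((a : Sph) : E) = ⟨1/2, 1 * √3 / 2⟩ := by rw [ha, Z_mk4]
  have hwa : W ((a : Sph) : E) = 0 := by rw [ha, W_mk4]
  have hzb : Z ((b : Sph) : E) = ⟨1/2, -1 * √3 / 2⟩ := by rw [hb, Z_mk4]
  have hwb : W ((b : Sph) : E) = 0 := by rw [hb, W_mk4]
  have hab : a ≠ b := by
    intro h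
    rw [h, hzb] at hza
    have := congrArg Complex.im hza
    simp at this
    linarith
  have hca : IsCrit u.f a := (u_crit hU u hu a).2 ⟨hwa, Or.inl (by rw [hza]; simp)⟩
  have hcb : IsCrit u.f b := (u_crit hU u hu b).2 ⟨hwb, Or.inr (by rw [hzb]; simp)⟩
  have hset : critSet u.f = {a, b} := by
    ext x
    constructor
    · intro hx
      obtain ⟨hw, hz⟩ := (u_crit hU u hu x).1 hx
      rcases hz with hz | hz
      · left
        exact Subtype.ext (Subtype.ext (E_ext (by rw [hz, hza]; simp) (by rw [hw, hwa])))
      · right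
        exact Subtype.ext (Subtype.ext (E_ext (by rw [hz, hzb]; simp) (by rw [hw, hwb])))
    · rintro (rfl | rfl)
      · exact hca
      · exact hcb
  obtain ⟨ea, qa, pa⟩ := u_hess hU u hu a (s := 1) (by norm_num) hca hza hwa
  obtain ⟨eb, qb, pb⟩ := u_hess hU u hu b (s := -1) (by norm_num) hcb hzb hwb
  have hM : MorseFun u.f := by
    intro x hx
    have hx' : x ∈ critSet u.f := hx
    rw [hset] at hx'
    rcases hx' with rfl | rfl
    · exact fun v hv => u_nondeg (s := 1) (by norm_num) ea qa pa v hv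
    · exact fun v hv => u_nondeg (s := -1) (by norm_num) eb qb pb v hv
  have hcard : (critSet u.f).encard = 2 := by rw [hset, Set.encard_pair hab]
  refine ⟨?_, hM, ⟨hM, fun G hG => ?_⟩, a, b, hab, hset, ⟨hca, by norm_num, ?_⟩, ⟨hcb, by norm_num, ?_⟩⟩
  · apply le_antisymm
    · exact sInf_le ⟨u, hM, hcard⟩
    · refine le_sInf ?_
      rintro k ⟨F, hF, rfl⟩
      exact lower hU F hF
  · rw [hcard]; exact lower hU G hG
  · refine ⟨_, _, fr1 ea, fr2 ea, ?_, ?_⟩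
    · rintro _ ⟨t, rfl⟩ h
      have ht : t ≠ 0 := by rintro rfl; exact h (map_zero _)
      have := sq_pos_of_ne_zero ht
      rw [qa]
      simp
      positivity
    · rintro _ ⟨t, rfl⟩ h
      have ht : t ≠ 0 := by rintro rfl; exact h (map_zero _)
      rw [qa]
      simp
      positivity
  · refine ⟨_, _, fr2 eb, fr1 eb, ?_, ?_⟩
    · rintro _ ⟨t, rfl⟩ h
      have ht : t ≠ 0 := by rintro rfl; exact h (map_zero _)
      have h2 : 0 < √3 / 3 * ‖t‖^2 := by positivity
      rw [qb]
      simp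
      linarith
    · rintro _ ⟨t, rfl⟩ h
      have ht : t ≠ 0 := by rintro rfl; exact h (map_zero _)
      have h2 : 0 < √3 / 3 * (4 * t^2) := by positivity
      rw [qb]
      simp
      linarith

end

/-- The 2-component unlink `U` (the link of indeterminacy
at infinity of `G(z,w) = (2z-1)/z`, whose carrier is
`{z = 0} ∪ {z = 1/2} ⊂ S³`) satisfies `MN U = 2`; the Milnor map `u` of `G`
at radius 1 is a simple boundary-regular Morse map for `U` with exactly two
critical points, one of index 1 and one of index 2, and `u` is a minimal
Morse map. -/
theorem statement_3 (U : Link) (hU : U.carrier = Ucar)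
    (u : BRMap U) (hu : ∀ x : U.compl, u.f x = toCircle (Gu ((x : Sph) : E))) :
    MN U = 2 ∧ MorseFun u.f ∧ Minimal u ∧
    ∃ a b : U.compl, a ≠ b ∧ critSet u.f = {a, b} ∧
      HasIndex u.f a 1 ∧ HasIndex u.f b 2 := by
  exact main_aux U hU u hu

end MorseNovikov
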